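/- There exist universal constants c > 0 and c' > 0 such that the following holds for all positive integers n and d ≥ 2, and all reals σ, f > 0. Given symmetric matrices A_1, ..., A_n ∈ ℝ^{d×d} satisfying ‖∑_{i=1}^n A_i²‖_op ≤ σ² and ∑_{i=1}^n ‖A_i‖_F² ≤ n f², and a point x_0 ∈ (−1,1)^n, there exists a point x ∈ [−1,1]^n such that ‖∑_{i=1}^n (x_i − x_{0,i}) A_i‖_op ≤ c (σ + (log d)^{3/4} √(σ f)) and the number of indices i with x_i ∈ {−1, +1} is at least c' n. -/

import Mathlib

open MeasureTheory ProbabilityTheory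

/-- Operator norm (largest singular value) of a real matrix, as the norm of the
induced linear map between Euclidean spaces. -/
noncomputable def opNorm {m n : Type*} [Fintype m] [Fintype n] [DecidableEq n]
    (M : Matrix m n ℝ) : ℝ :=
  ‖LinearMap.toContinuousLinearMap (Matrix.toEuclideanLin M)‖

/-- Squared Frobenius norm of a real matrix. -/
noncomputable def frobNormSq {m n : Type*} [Fintype m] [Fintype n]
    (M : Matrix m n ℝ) : ℝ := ∑ i, ∑ j, (M i j) ^ 2

namespace PC

/-- standard Gaussian measure on `ι → ℝ` -/
noncomputable def gam (ι : Type) [Fintype ι] : Measure (ι → ℝ) :=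
  Measure.pi (fun _ => gaussianReal 0 1)

instance (ι : Type) [Fintype ι] : IsProbabilityMeasure (gam ι) := by
  unfold gam; infer_instance

/-- polynomial functions -/
def IsPoly {ι : Type} (f : (ι → ℝ) → ℝ) : Prop :=
  ∃ Q : MvPolynomial ι ℝ, ∀ x, f x = MvPolynomial.eval x Q

namespace IsPoly
variable {ι : Type}

lemma const (c : ℝ) : IsPoly (fun _ : ι → ℝ => c) := ⟨MvPolynomial.C c, by simp⟩
lemma coord (i : ι) : IsPoly (fun x : ι → ℝ => x i) := ⟨MvPolynomial.X i, by simp⟩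
lemma add {f g : (ι → ℝ) → ℝ} (hf : IsPoly f) (hg : IsPoly g) : IsPoly (fun x => f x + g x) := by
  obtain ⟨P, hP⟩ := hf
  obtain ⟨Q, hQ⟩ := hg
  exact ⟨P + Q, by simp [hP, hQ]⟩
lemma mul {f g : (ι → ℝ) → ℝ} (hf : IsPoly f) (hg : IsPoly g) : IsPoly (fun x => f x * g x) := by
  obtain ⟨P, hP⟩ := hf
  obtain ⟨Q, hQ⟩ := hg
  exact ⟨P * Q, by simp [hP, hQ]⟩
lemma sum {κ : Type*} (s : Finset κ) {f : κ → (ι → ℝ) → ℝ} (hf : ∀ k, IsPoly (f k)) :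
    IsPoly (fun x => ∑ k ∈ s, f k x) := by
  choose P hP using hf
  exact ⟨∑ k ∈ s, P k, by simp [hP]⟩
lemma neg {f : (ι → ℝ) → ℝ} (hf : IsPoly f) : IsPoly (fun x => - f x) := by
  obtain ⟨P, hP⟩ := hf
  exact ⟨-P, by simp [hP]⟩
lemma pow {f : (ι → ℝ) → ℝ} (hf : IsPoly f) (k : ℕ) : IsPoly (fun x => f x ^ k) := by
  obtain ⟨P, hP⟩ := hf
  exact ⟨P ^ k, by simp [hP]⟩
/-- substitution -/
lemma comp {κ : Type} {f : (ι → ℝ) → ℝ} (hf : IsPoly f) {u : ι → (κ → ℝ) → ℝ}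
    (hu : ∀ i, IsPoly (u i)) : IsPoly (fun x => f (fun i => u i x)) := by
  obtain ⟨P, hP⟩ := hf
  choose U hU using hu
  refine ⟨MvPolynomial.aeval U P, fun x => ?_⟩
  show f (fun i => u i x) = _
  rw [hP]
  clear hP
  have : (MvPolynomial.eval x) (MvPolynomial.aeval U P) =
      MvPolynomial.eval (fun i => MvPolynomial.eval x (U i)) P := by
    induction P using MvPolynomial.induction_on with
    | C a => simp
    | add p q hp hq => simp_all
    | mul_X p i hp => simp_all
  rw [this]
  simp [hU]
lemma continuous {f : (ι → ℝ) → ℝ} (hf : IsPoly f) : Continuous f := by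
  obtain ⟨P, hP⟩ := hf
  have : f = fun x => MvPolynomial.eval x P := funext hP
  rw [this]
  exact MvPolynomial.continuous_eval P
end IsPoly

lemma integrable_pow_gauss (k : ℕ) : Integrable (fun x : ℝ => x ^ k) (gaussianReal 0 1) := by
  have h := memLp_id_gaussianReal (μ := 0) (v := 1) (k : NNReal)
  have := h.integrable_norm_pow' 
  rw [← integrable_norm_iff (by fun_prop)]
  simpa using this

lemma moment_rec (k : ℕ) :
    ∫ x, x ^ (k + 1) ∂(gaussianReal 0 1) = k * ∫ x, x ^ (k - 1) ∂(gaussianReal 0 1) := by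
  have hI : ∀ j : ℕ, Integrable (fun x : ℝ => gaussianPDFReal 0 1 x * x ^ j) := by
    intro j
    have h := integrable_pow_gauss j
    rw [gaussianReal_of_var_ne_zero 0 one_ne_zero] at h
    rw [integrable_withDensity_iff_integrable_smul' (measurable_gaussianPDF _ _)
      (ae_of_all _ fun _ ↦ gaussianPDF_lt_top)] at h
    simpa [toReal_gaussianPDF] using h
  have hd : ∀ x : ℝ, HasDerivAt (fun x : ℝ => gaussianPDFReal 0 1 x * x ^ k)
      (k * (gaussianPDFReal 0 1 x * x ^ (k - 1)) - gaussianPDFReal 0 1 x * x ^ (k + 1)) x := by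
    intro x
    have h1 : HasDerivAt (fun x : ℝ => gaussianPDFReal 0 1 x) (- x * gaussianPDFReal 0 1 x) x := by
      have h2 : HasDerivAt (fun x : ℝ => -(x) ^ 2 / 2) (- x) x := by
        have h4 : HasDerivAt (fun x : ℝ => x ^ 2) ((2:ℕ) * x ^ (2 - 1)) x := hasDerivAt_pow 2 x
        exact ((h4.fun_neg).div_const 2).congr_deriv (by norm_num; ring)
      have h3 := (h2.exp).const_mul ((√(2 * Real.pi * 1))⁻¹)
      have e : (fun x : ℝ => gaussianPDFReal 0 1 x) =
        fun x => (√(2 * Real.pi * 1))⁻¹ * Real.exp (-(x) ^ 2 / 2) := by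
        funext x; simp [gaussianPDFReal]
      rw [e]
      exact h3.congr_deriv (by rw [congrFun e x]; ring)
    exact (h1.fun_mul (hasDerivAt_pow k x)).congr_deriv (by ring)
  have h0 := integral_eq_zero_of_hasDerivAt_of_integrable hd
    (((hI (k - 1)).const_mul _).sub (hI (k + 1))) (hI k)
  rw [integral_sub ((hI (k - 1)).const_mul _) (hI (k + 1)), integral_const_mul] at h0
  rw [integral_gaussianReal_eq_integral_smul one_ne_zero,
    integral_gaussianReal_eq_integral_smul one_ne_zero]
  simp only [smul_eq_mul]
  linarith

set_option linter.unusedSectionVars false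
variable {ι : Type} [Fintype ι]

lemma eval_mono (s : ι →₀ ℕ) (a : ℝ) (x : ι → ℝ) :
    MvPolynomial.eval x (MvPolynomial.monomial s a) = a * ∏ i, x i ^ s i := by
  rw [MvPolynomial.eval_monomial, Finsupp.prod_fintype _ _ (by simp)]

lemma integrable_prod_pow (s : ι → ℕ) : Integrable (fun x : ι → ℝ => ∏ i, x i ^ s i) (gam ι) :=
  Integrable.fintype_prod_dep (f := fun i x => x ^ s i) (fun i => integrable_pow_gauss (s i))

lemma IsPoly.integrable {f : (ι → ℝ) → ℝ} (hf : IsPoly f) : Integrable f (gam ι) := by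
  obtain ⟨Q, hQ⟩ := hf
  have : f = fun x => MvPolynomial.eval x Q := funext hQ
  rw [this]
  induction Q using MvPolynomial.induction_on' generalizing f with
  | monomial s a =>
    simp only [eval_mono]
    exact (integrable_prod_pow _).const_mul a
  | add p q hp hq =>
    simp only [map_add]
    exact (hp (f := fun x => MvPolynomial.eval x p) (by simp) rfl).add
      (hq (f := fun x => MvPolynomial.eval x q) (by simp) rfl)

lemma integral_prod_pow (s : ι → ℕ) :
    ∫ x, ∏ i, x i ^ s i ∂(gam ι) = ∏ i, ∫ x, x ^ s i ∂(gaussianReal 0 1) :=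
  integral_fintype_prod_eq_prod (fun i x => x ^ s i)

lemma isPoly_eval (Q : MvPolynomial ι ℝ) : IsPoly (fun x => MvPolynomial.eval x Q) := ⟨Q, by simp⟩

lemma stein_pderiv [DecidableEq ι] (j : ι) (Q : MvPolynomial ι ℝ) :
    ∫ x, x j * MvPolynomial.eval x Q ∂(gam ι) =
      ∫ x, MvPolynomial.eval x (MvPolynomial.pderiv j Q) ∂(gam ι) := by
  induction Q using MvPolynomial.induction_on' with
  | monomial s a =>
    rw [MvPolynomial.pderiv_monomial]
    simp only [eval_mono]
    have e1 : ∀ x : ι → ℝ, x j * (a * ∏ i, x i ^ s i) =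
        a * ∏ i, x i ^ ((Function.update s j (s j + 1)) i) := by
      intro x
      rw [← Finset.mul_prod_erase Finset.univ (fun i => x i ^ s i) (Finset.mem_univ j),
        ← Finset.mul_prod_erase Finset.univ (fun i => x i ^ ((Function.update s j (s j + 1)) i))
          (Finset.mem_univ j)]
      have e2 : ∏ i ∈ Finset.univ.erase j, x i ^ ((Function.update s j (s j + 1)) i) =
          ∏ i ∈ Finset.univ.erase j, x i ^ s i :=
        Finset.prod_congr rfl
          (fun i hi => by rw [Function.update_of_ne (Finset.ne_of_mem_erase hi)])
      rw [e2, Function.update_self, pow_succ]; ring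
    simp_rw [e1]
    have e3 : ∏ i ∈ Finset.univ.erase j, ∫ x : ℝ, x ^ ((Function.update s j (s j + 1)) i)
        ∂(gaussianReal 0 1) = ∏ i ∈ Finset.univ.erase j, ∫ x : ℝ, x ^ s i ∂(gaussianReal 0 1) :=
      Finset.prod_congr rfl
        (fun i hi => by rw [Function.update_of_ne (Finset.ne_of_mem_erase hi)])
    have e4 : ∏ i ∈ Finset.univ.erase j, ∫ x : ℝ, x ^ ((s - Finsupp.single j 1 : ι →₀ ℕ) i)
        ∂(gaussianReal 0 1) = ∏ i ∈ Finset.univ.erase j, ∫ x : ℝ, x ^ s i ∂(gaussianReal 0 1) :=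
      Finset.prod_congr rfl
        (fun i hi => by simp [Finsupp.single_apply, (Finset.ne_of_mem_erase hi).symm])
    rw [integral_const_mul, integral_const_mul, integral_prod_pow, integral_prod_pow,
      ← Finset.mul_prod_erase Finset.univ
        (fun i => ∫ x : ℝ, x ^ ((Function.update s j (s j + 1)) i) ∂(gaussianReal 0 1))
        (Finset.mem_univ j),
        ← Finset.mul_prod_erase Finset.univ
          (fun i => ∫ x : ℝ, x ^ ((s - Finsupp.single j 1 : ι →₀ ℕ) i) ∂(gaussianReal 0 1))
          (Finset.mem_univ j), e3, e4]
    simp only [Function.update_self, Finsupp.tsub_apply, Finsupp.single_eq_same]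
    rw [moment_rec]; ring
  | add p q hp hq =>
    simp only [map_add, mul_add]
    rw [integral_add, integral_add, hp, hq]
    · exact (isPoly_eval _).integrable
    · exact (isPoly_eval _).integrable
    · exact ((IsPoly.coord j).mul (isPoly_eval _)).integrable
    · exact ((IsPoly.coord j).mul (isPoly_eval _)).integrable

lemma hasDerivAt_eval [DecidableEq ι] (Q : MvPolynomial ι ℝ) (x w : ι → ℝ) :
    HasDerivAt (fun t : ℝ => MvPolynomial.eval (x + t • w) Q)
      (∑ j, w j * MvPolynomial.eval x (MvPolynomial.pderiv j Q)) 0 := by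
  induction Q using MvPolynomial.induction_on with
  | C a => simpa using hasDerivAt_const (0:ℝ) a
  | add p q hp hq =>
    simp only [map_add, mul_add, Finset.sum_add_distrib]
    exact hp.add hq
  | mul_X p i hp =>
    have h1 : HasDerivAt (fun t : ℝ => (x + t • w) i) (w i) 0 := by
      simpa using ((hasDerivAt_id (0:ℝ)).mul_const (w i)).const_add (x i)
    simp only [map_mul, MvPolynomial.eval_X]
    refine (hp.fun_mul h1).congr_deriv ?_
    symm
    simp only [Derivation.leibniz, MvPolynomial.pderiv_X, smul_eq_mul, map_add, map_mul,
      MvPolynomial.eval_X, Pi.single_apply, zero_smul, add_zero, mul_add, Finset.sum_add_distrib,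
      Finset.sum_mul]
    rw [add_comm]
    congr 1
    · exact Finset.sum_congr rfl fun j _ => by ring
    · rw [Finset.sum_eq_single i]
      · simp; ring
      · intro b _ hb; simp [hb.symm]
      · simp

/-- Gaussian integration by parts in direction `w`. -/
lemma stein (w : ι → ℝ) {f f' : (ι → ℝ) → ℝ} (hf : IsPoly f)
    (hd : ∀ x, HasDerivAt (fun t : ℝ => f (x + t • w)) (f' x) 0) :
    ∫ x, (∑ i, w i * x i) * f x ∂(gam ι) = ∫ x, f' x ∂(gam ι) := by
  classical
  obtain ⟨Q, hQ⟩ := hf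
  have e : f' = fun x => ∑ j, w j * MvPolynomial.eval x (MvPolynomial.pderiv j Q) := by
    funext x
    have h1 := hd x
    simp only [hQ] at h1
    exact h1.unique (hasDerivAt_eval Q x w)
  rw [e]
  simp only [hQ, Finset.sum_mul]
  rw [integral_finsetSum, integral_finsetSum]
  · refine Finset.sum_congr rfl fun j _ => ?_
    rw [integral_const_mul, ← stein_pderiv, ← integral_const_mul]
    congr 1; funext x; ring
  · intro i _
    exact ((IsPoly.const _).mul (isPoly_eval _)).integrable
  · intro i _
    exact (((IsPoly.const _).mul (IsPoly.coord _)).mul (isPoly_eval _)).integrable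

/-- embed `(cos θ, sin θ, x)` -/
noncomputable def tr (θ : ℝ) (x : ι → ℝ) : Fin 2 ⊕ ι → ℝ :=
  Sum.elim ![Real.cos θ, Real.sin θ] x

lemma IsPoly.section {F : (Fin 2 ⊕ ι → ℝ) → ℝ} (hF : IsPoly F) (θ : ℝ) :
    IsPoly (fun x => F (tr θ x)) := by
  have : (fun x : ι → ℝ => F (tr θ x)) = fun x => F (fun i =>
     (Sum.elim (fun k _ => ![Real.cos θ, Real.sin θ] k) (fun k x => x k) : Fin 2 ⊕ ι → (ι → ℝ) → ℝ) i x) := by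
    funext x; congr 1; funext i; cases i <;> rfl
  rw [this]
  refine hF.comp ?_
  rintro (i | i)
  · exact IsPoly.const _
  · exact IsPoly.coord _

lemma diff_int_aux (Q : MvPolynomial (Fin 2 ⊕ ι) ℝ) : ∃ g : ℝ → (ι → ℝ) → ℝ,
    (∀ θ, IsPoly (g θ)) ∧
    (∀ θ x, HasDerivAt (fun θ => MvPolynomial.eval (tr θ x) Q) (g θ x) θ) ∧
    ∀ w, IsPoly w → ∀ θ, HasDerivAt (fun θ => ∫ x, w x * MvPolynomial.eval (tr θ x) Q ∂(gam ι))
      (∫ x, w x * g θ x ∂(gam ι)) θ := by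
  have hP : ∀ (Q : MvPolynomial (Fin 2 ⊕ ι) ℝ) θ,
      IsPoly (fun x : ι → ℝ => MvPolynomial.eval (tr θ x) Q) :=
    fun Q θ => IsPoly.section (F := fun y => MvPolynomial.eval y Q) ⟨Q, by simp⟩ θ
  induction Q using MvPolynomial.induction_on with
  | C a =>
    refine ⟨fun _ _ => 0, fun _ => IsPoly.const 0, fun θ x => ?_, fun w hw θ => ?_⟩
    · simpa using hasDerivAt_const θ a
    · simpa using hasDerivAt_const θ _
  | add p q hp hq =>
    obtain ⟨g, hg0, hg1, hg2⟩ := hp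
    obtain ⟨h, hh0, hh1, hh2⟩ := hq
    refine ⟨fun θ x => g θ x + h θ x, fun θ => (hg0 θ).add (hh0 θ), fun θ x => ?_,
      fun w hw θ => ?_⟩
    · simp only [map_add]
      exact (hg1 θ x).fun_add (hh1 θ x)
    · have := (hg2 w hw θ).fun_add (hh2 w hw θ)
      simp only [map_add, mul_add]
      rw [integral_add (hw.mul (hg0 θ)).integrable (hw.mul (hh0 θ)).integrable]
      have e : (fun θ => ∫ x, w x * MvPolynomial.eval (tr θ x) p
          + w x * MvPolynomial.eval (tr θ x) q ∂(gam ι)) = fun θ =>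
          (∫ x, w x * MvPolynomial.eval (tr θ x) p ∂(gam ι)) +
            ∫ x, w x * MvPolynomial.eval (tr θ x) q ∂(gam ι) := by
        funext θ
        exact integral_add (hw.mul (hP p θ)).integrable (hw.mul (hP q θ)).integrable
      rw [e]
      exact this
  | mul_X p i hp =>
    obtain ⟨g, hg0, hg1, hg2⟩ := hp
    have key : ∀ (u u' : ℝ → ℝ), (∀ θ, HasDerivAt u (u' θ) θ) →
        (∀ θ (x : ι → ℝ), tr θ x i = u θ) → ∃ g : ℝ → (ι → ℝ) → ℝ,
        (∀ θ, IsPoly (g θ)) ∧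
        (∀ θ x, HasDerivAt (fun θ => MvPolynomial.eval (tr θ x) (p * MvPolynomial.X i)) (g θ x) θ) ∧
        ∀ w, IsPoly w → ∀ θ, HasDerivAt
          (fun θ => ∫ x, w x * MvPolynomial.eval (tr θ x) (p * MvPolynomial.X i) ∂(gam ι))
          (∫ x, w x * g θ x ∂(gam ι)) θ := by
      intro u u' hu ht
      refine ⟨fun θ x => g θ x * u θ + MvPolynomial.eval (tr θ x) p * u' θ,
        fun θ => ((hg0 θ).mul (IsPoly.const _)).add ((hP p θ).mul (IsPoly.const _)),
        fun θ x => ?_, fun w hw θ => ?_⟩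
      · simp only [map_mul, MvPolynomial.eval_X, ht]
        exact (hg1 θ x).mul (hu θ)
      · simp only [map_mul, MvPolynomial.eval_X, ht]
        have e : (fun θ => ∫ x, w x * (MvPolynomial.eval (tr θ x) p * u θ) ∂(gam ι)) = fun θ =>
            (∫ x, w x * MvPolynomial.eval (tr θ x) p ∂(gam ι)) * u θ := by
          funext θ
          rw [← integral_mul_const]; congr 1; funext x; ring
        rw [e]
        refine ((hg2 w hw θ).fun_mul (hu θ)).congr_deriv ?_
        · rw [← integral_mul_const, ← integral_mul_const, ← integral_add]
          · congr 1; funext x; ring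
          · exact ((hw.mul (hg0 θ)).mul (IsPoly.const _)).integrable
          · exact ((hw.mul (hP p θ)).mul (IsPoly.const _)).integrable
    rcases i with i | i
    · fin_cases i
      · exact key Real.cos (fun θ => - Real.sin θ) Real.hasDerivAt_cos (fun θ x => by simp [tr])
      · exact key Real.sin Real.cos Real.hasDerivAt_sin (fun θ x => by simp [tr])
    · refine ⟨fun θ x => g θ x * x i, fun θ => (hg0 θ).mul (IsPoly.coord i), fun θ x => ?_,
        fun w hw θ => ?_⟩
      · simp only [map_mul, MvPolynomial.eval_X]
        exact (hg1 θ x).mul_const _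
      · have := hg2 (fun x => w x * x i) (hw.mul (IsPoly.coord i)) θ
        simp only [map_mul, MvPolynomial.eval_X]
        have e : (fun θ => ∫ x, w x * (MvPolynomial.eval (tr θ x) p * tr θ x (Sum.inr i)) ∂(gam ι))
            = fun θ => ∫ x, w x * x i * MvPolynomial.eval (tr θ x) p ∂(gam ι) := by
          funext θ; congr 1; funext x; simp [tr]; ring
        rw [e]
        refine this.congr_deriv ?_
        congr 1; funext x; ring

/-- differentiation under the Gaussian integral -/
lemma diff_int {F : (Fin 2 ⊕ ι → ℝ) → ℝ} (hF : IsPoly F) {f' : ℝ → (ι → ℝ) → ℝ}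
    (hd : ∀ θ x, HasDerivAt (fun θ => F (tr θ x)) (f' θ x) θ) (θ : ℝ) :
    HasDerivAt (fun θ => ∫ x, F (tr θ x) ∂(gam ι)) (∫ x, f' θ x ∂(gam ι)) θ := by
  obtain ⟨Q, hQ⟩ := hF
  obtain ⟨g, hg0, hg1, hg2⟩ := diff_int_aux Q
  simp only [hQ] at hd ⊢
  have : f' = g := by
    funext θ x
    exact (hd θ x).unique (hg1 θ x)
  rw [this]
  simpa using hg2 (fun _ => 1) (IsPoly.const 1) θ

end PC

namespace PC
set_option linter.unusedSectionVars false

variable {ι κ D : Type} [Fintype ι] [Fintype κ] [Fintype D] [DecidableEq D]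

/-- matrix valued polynomial maps -/
def MPoly (X : (ι → ℝ) → Matrix D D ℝ) : Prop := ∀ a b, IsPoly (fun x => X x a b)

namespace MPoly
lemma const (M : Matrix D D ℝ) : MPoly (fun _ : ι → ℝ => M) := fun _ _ => IsPoly.const _
lemma add {X Y : (ι → ℝ) → Matrix D D ℝ} (hX : MPoly X) (hY : MPoly Y) :
    MPoly (fun x => X x + Y x) := fun a b => (hX a b).add (hY a b)
lemma mul {X Y : (ι → ℝ) → Matrix D D ℝ} (hX : MPoly X) (hY : MPoly Y) :
    MPoly (fun x => X x * Y x) := fun a b => by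
  simp only [Matrix.mul_apply]
  exact IsPoly.sum _ fun k => (hX a k).mul (hY k b)
lemma smul {f : (ι → ℝ) → ℝ} {X : (ι → ℝ) → Matrix D D ℝ} (hf : IsPoly f) (hX : MPoly X) :
    MPoly (fun x => f x • X x) := fun a b => by
  simp only [Matrix.smul_apply, smul_eq_mul]
  exact hf.mul (hX a b)
lemma sum {J : Type*} (s : Finset J) {X : J → (ι → ℝ) → Matrix D D ℝ} (hX : ∀ j, MPoly (X j)) :
    MPoly (fun x => ∑ j ∈ s, X j x) := fun a b => by
  simp only [Matrix.sum_apply]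
  exact IsPoly.sum _ fun k => hX k a b
lemma pow {X : (ι → ℝ) → Matrix D D ℝ} (hX : MPoly X) (n : ℕ) : MPoly (fun x => X x ^ n) := by
  induction n with
  | zero => simpa using const 1
  | succ n ih => simp only [pow_succ]; exact ih.mul hX
lemma trace {X : (ι → ℝ) → Matrix D D ℝ} (hX : MPoly X) : IsPoly (fun x => (X x).trace) := by
  simp only [Matrix.trace, Matrix.diag]
  exact IsPoly.sum _ fun k => hX k k
end MPoly

/-- entrywise derivative of a matrix valued curve -/
def MD (X : ℝ → Matrix D D ℝ) (X' : Matrix D D ℝ) (t : ℝ) : Prop :=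
  ∀ a b, HasDerivAt (fun t => X t a b) (X' a b) t

namespace MD
lemma const (M : Matrix D D ℝ) (t : ℝ) : MD (fun _ => M) 0 t := fun a b => hasDerivAt_const t (M a b)
lemma add {X Y : ℝ → Matrix D D ℝ} {X' Y' : Matrix D D ℝ} {t : ℝ} (hX : MD X X' t)
    (hY : MD Y Y' t) : MD (fun t => X t + Y t) (X' + Y') t := fun a b =>
  (hX a b).fun_add (hY a b)
lemma smul {f : ℝ → ℝ} {f' t : ℝ} (hf : HasDerivAt f f' t) (M : Matrix D D ℝ) :
    MD (fun t => f t • M) (f' • M) t := fun a b => hf.mul_const (M a b)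
lemma congr {X : ℝ → Matrix D D ℝ} {X' Y' : Matrix D D ℝ} {t : ℝ} (hX : MD X X' t)
    (h : X' = Y') : MD X Y' t := h ▸ hX
lemma mul {X Y : ℝ → Matrix D D ℝ} {X' Y' : Matrix D D ℝ} {t : ℝ} (hX : MD X X' t)
    (hY : MD Y Y' t) : MD (fun t => X t * Y t) (X' * Y t + X t * Y') t := fun a b => by
  simp only [Matrix.mul_apply, Matrix.add_apply, ← Finset.sum_add_distrib]
  exact HasDerivAt.fun_sum fun k _ => (hX a k).fun_mul (hY k b)
lemma const_mul (M : Matrix D D ℝ) {X : ℝ → Matrix D D ℝ} {X' : Matrix D D ℝ} {t : ℝ}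
    (hX : MD X X' t) : MD (fun t => M * X t) (M * X') t :=
  ((const M t).mul hX).congr (by simp)
lemma mul_const {X : ℝ → Matrix D D ℝ} {X' : Matrix D D ℝ} {t : ℝ}
    (hX : MD X X' t) (M : Matrix D D ℝ) : MD (fun t => X t * M) (X' * M) t :=
  (hX.mul (const M t)).congr (by simp)
lemma sum {J : Type*} (s : Finset J) {X : J → ℝ → Matrix D D ℝ} {X' : J → Matrix D D ℝ} {t : ℝ}
    (hX : ∀ j, MD (X j) (X' j) t) : MD (fun t => ∑ j ∈ s, X j t) (∑ j ∈ s, X' j) t := fun a b => by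
  simp only [Matrix.sum_apply]
  exact HasDerivAt.fun_sum fun k _ => hX k a b
lemma pow {X : ℝ → Matrix D D ℝ} {X' : Matrix D D ℝ} {t : ℝ} (hX : MD X X' t) (n : ℕ) :
    MD (fun t => X t ^ n) (∑ i ∈ Finset.range n, X t ^ i * X' * X t ^ (n - 1 - i)) t := by
  induction n with
  | zero => simpa using const (1 : Matrix D D ℝ) t
  | succ n ih =>
    simp only [pow_succ]
    refine (ih.mul hX).congr ?_
    rw [Finset.sum_range_succ, Finset.sum_mul]
    simp only [Nat.add_sub_cancel, Nat.sub_self, pow_zero, mul_one]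
    congr 1
    refine Finset.sum_congr rfl fun i hi => ?_
    have : n - i = (n - 1 - i) + 1 := by have := Finset.mem_range.1 hi; omega
    rw [this, pow_succ, mul_assoc (X t ^ i * X')]
lemma trace {X : ℝ → Matrix D D ℝ} {X' : Matrix D D ℝ} {t : ℝ} (hX : MD X X' t) :
    HasDerivAt (fun t => (X t).trace) X'.trace t := by
  simp only [Matrix.trace, Matrix.diag]
  exact HasDerivAt.fun_sum fun k _ => hX k k
end MD

/-- the linear pencil -/
noncomputable def G (B : κ → Matrix D D ℝ) (x : κ → ℝ) : Matrix D D ℝ := ∑ j, x j • B j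

lemma G_poly (B : κ → Matrix D D ℝ) : MPoly (G B) := by
  unfold G
  exact MPoly.sum _ fun j => MPoly.smul (IsPoly.coord j) (MPoly.const _)

lemma G_comp_poly {τ : Type} [Fintype τ] (B : κ → Matrix D D ℝ) (e : κ → τ) :
    MPoly (fun x : τ → ℝ => G B (fun j => x (e j))) := by
  unfold G
  exact MPoly.sum _ fun j => MPoly.smul (IsPoly.coord _) (MPoly.const _)

/-- rotated copy -/
noncomputable def YY (B : κ → Matrix D D ℝ) (θ : ℝ) (x : κ ⊕ κ → ℝ) : Matrix D D ℝ :=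
  Real.cos θ • G B (fun j => x (.inl j)) + Real.sin θ • G B (fun j => x (.inr j))

/-- first copy -/
noncomputable def XX (B : κ → Matrix D D ℝ) (x : κ ⊕ κ → ℝ) : Matrix D D ℝ :=
  G B (fun j => x (.inl j))

lemma XX_poly (B : κ → Matrix D D ℝ) : MPoly (XX B) := G_comp_poly B _
lemma YY_poly (B : κ → Matrix D D ℝ) (θ : ℝ) : MPoly (YY B θ) :=
  (MPoly.smul (IsPoly.const _) (G_comp_poly B _)).add (MPoly.smul (IsPoly.const _) (G_comp_poly B _))

/-- the rotation direction -/
noncomputable def ww [DecidableEq κ] (θ : ℝ) (j : κ) : κ ⊕ κ → ℝ :=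
  Sum.elim (fun i => if i = j then - Real.sin θ else 0) (fun i => if i = j then Real.cos θ else 0)

lemma ww_sum [DecidableEq κ] (θ : ℝ) (j : κ) (x : κ ⊕ κ → ℝ) :
    ∑ i, ww θ j i * x i = - Real.sin θ * x (.inl j) + Real.cos θ * x (.inr j) := by
  simp [ww, Fintype.sum_sum_type, ite_mul]

lemma YY_ww [DecidableEq κ] (B : κ → Matrix D D ℝ) (θ t : ℝ) (j : κ) (x : κ ⊕ κ → ℝ) :
    YY B θ (x + t • ww θ j) = YY B θ x := by
  simp only [YY, G, ww, Pi.add_apply, Pi.smul_apply, Sum.elim_inl, Sum.elim_inr, smul_eq_mul,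
    add_smul, Finset.sum_add_distrib, smul_add]
  have h1 : ∀ c : ℝ, ∑ i, (t * if i = j then c else 0) • B i = (t * c) • B j := by
    intro c
    rw [Finset.sum_eq_single j] <;> simp +contextual
  rw [h1, h1, smul_smul, smul_smul]
  have : (Real.cos θ * (t * -Real.sin θ)) • B j = - ((Real.sin θ * (t * Real.cos θ)) • B j) := by
    rw [← neg_smul]; congr 1; ring
  rw [this]; abel

lemma XX_ww [DecidableEq κ] (B : κ → Matrix D D ℝ) (θ t : ℝ) (j : κ) (x : κ ⊕ κ → ℝ) :
    XX B (x + t • ww θ j) = XX B x + t • (- Real.sin θ) • B j := by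
  simp only [XX, G, ww, Pi.add_apply, Pi.smul_apply, Sum.elim_inl, smul_eq_mul,
    add_smul, Finset.sum_add_distrib]
  have h1 : ∀ c : ℝ, ∑ i, (t * if i = j then c else 0) • B i = (t * c) • B j := by
    intro c
    rw [Finset.sum_eq_single j] <;> simp +contextual
  rw [h1, smul_smul]

lemma YY_deriv (B : κ → Matrix D D ℝ) (θ : ℝ) (x : κ ⊕ κ → ℝ) :
    MD (fun θ => YY B θ x) (∑ j, (- Real.sin θ * x (.inl j) + Real.cos θ * x (.inr j)) • B j) θ := by
  unfold YY
  refine ((MD.smul (Real.hasDerivAt_cos θ) _).add (MD.smul (Real.hasDerivAt_sin θ) _)).congr ?_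
  simp only [G, Finset.smul_sum, smul_smul, ← Finset.sum_add_distrib, add_smul]

/-- integrand of the interpolation -/
noncomputable def Fint (B : κ → Matrix D D ℝ) (S T : Matrix D D ℝ) (k l : ℕ) (θ : ℝ)
    (x : κ ⊕ κ → ℝ) : ℝ := (S * XX B x ^ k * T * YY B θ x ^ l).trace

lemma psi_deriv (B : κ → Matrix D D ℝ) (S T : Matrix D D ℝ) (k l : ℕ) (θ : ℝ) :
    HasDerivAt (fun θ => ∫ x, Fint B S T k l θ x ∂(gam (κ ⊕ κ)))
      (- Real.sin θ * ∑ a ∈ Finset.range k, ∑ c ∈ Finset.range l,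
        ∫ x, (∑ j, (S * (XX B x ^ a * B j * XX B x ^ (k - 1 - a)) * T *
          (YY B θ x ^ c * B j * YY B θ x ^ (l - 1 - c))).trace) ∂(gam (κ ⊕ κ))) θ := by
  classical
  set F : (Fin 2 ⊕ (κ ⊕ κ) → ℝ) → ℝ := fun z =>
    (S * (G B (fun j => z (.inr (.inl j)))) ^ k * T *
      (z (.inl 0) • G B (fun j => z (.inr (.inl j))) +
        z (.inl 1) • G B (fun j => z (.inr (.inr j)))) ^ l).trace with hF
  have hFp : IsPoly F := by
    have h1 := G_comp_poly B (fun j : κ => (Sum.inr (Sum.inl j) : Fin 2 ⊕ (κ ⊕ κ)))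
    have h2 := G_comp_poly B (fun j : κ => (Sum.inr (Sum.inr j) : Fin 2 ⊕ (κ ⊕ κ)))
    exact ((((MPoly.const S).mul (h1.pow k)).mul (MPoly.const T)).mul
      (((MPoly.smul (IsPoly.coord _) h1).add (MPoly.smul (IsPoly.coord _) h2)).pow l)).trace
  have hFt : ∀ θ x, F (tr θ x) = Fint B S T k l θ x := by
    intro θ x; simp [hF, Fint, tr, XX, YY]
  set f' : ℝ → (κ ⊕ κ → ℝ) → ℝ := fun θ x =>
    (S * XX B x ^ k * T * ∑ c ∈ Finset.range l, YY B θ x ^ c *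
      (∑ j, (- Real.sin θ * x (.inl j) + Real.cos θ * x (.inr j)) • B j) *
        YY B θ x ^ (l - 1 - c)).trace with hf'
  have hd : ∀ θ x, HasDerivAt (fun θ => F (tr θ x)) (f' θ x) θ := by
    intro θ x
    simp only [hFt, Fint, hf']
    exact (((YY_deriv B θ x).pow l).const_mul _).trace
  have h1 := diff_int hFp hd θ
  simp only [hFt] at h1
  refine h1.congr_deriv ?_
  -- integrate by parts
  set fj : κ → (κ ⊕ κ → ℝ) → ℝ := fun j x =>
    ∑ c ∈ Finset.range l, (S * XX B x ^ k * T * (YY B θ x ^ c * B j * YY B θ x ^ (l - 1 - c))).trace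
    with hfj
  have hfjp : ∀ j, IsPoly (fj j) := fun j => IsPoly.sum _ fun c =>
    ((((MPoly.const S).mul ((XX_poly B).pow k)).mul (MPoly.const T)).mul
      ((((YY_poly B θ).pow c).mul (MPoly.const _)).mul ((YY_poly B θ).pow _))).trace
  have e1 : ∀ x, f' θ x = ∑ j, (∑ i, ww θ j i * x i) * fj j x := by
    intro x
    simp only [ww_sum, hf', hfj, Finset.mul_sum, Finset.sum_mul, Matrix.trace_sum]
    rw [Finset.sum_comm]
    refine Finset.sum_congr rfl fun j _ => Finset.sum_congr rfl fun c _ => ?_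
    simp [Matrix.trace_smul]
  have e2 : ∀ j, ∫ x, (∑ i, ww θ j i * x i) * fj j x ∂(gam (κ ⊕ κ)) =
      ∫ x, ∑ c ∈ Finset.range l, - Real.sin θ * ∑ a ∈ Finset.range k,
      (S * (XX B x ^ a * B j * XX B x ^ (k - 1 - a)) * T *
          (YY B θ x ^ c * B j * YY B θ x ^ (l - 1 - c))).trace ∂(gam (κ ⊕ κ)) := by
    intro j
    refine stein _ (hfjp j) fun x => ?_
    simp only [hfj, YY_ww, XX_ww]
    refine HasDerivAt.fun_sum fun c _ => ?_
    have hX : MD (fun t : ℝ => XX B x + t • (- Real.sin θ) • B j) ((- Real.sin θ) • B j) 0 :=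
      ((MD.const _ _).add (MD.smul (hasDerivAt_id' (0:ℝ)) _)).congr (by simp)
    refine (((((hX.pow k).const_mul S).mul_const T).mul_const _).trace).congr_deriv ?_
    simp only [zero_smul, add_zero, Finset.mul_sum, Finset.sum_mul, Matrix.trace_sum]
    refine Finset.sum_congr rfl fun a _ => ?_
    simp [Matrix.trace_smul]
  simp only [e1]
  have hP : ∀ a c j, IsPoly (fun x => (S * (XX B x ^ a * B j * XX B x ^ (k - 1 - a)) * T *
          (YY B θ x ^ c * B j * YY B θ x ^ (l - 1 - c))).trace) := fun a c j =>
    ((((MPoly.const S).mul ((((XX_poly B).pow a).mul (MPoly.const _)).mul ((XX_poly B).pow _))).mul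
      (MPoly.const T)).mul
      ((((YY_poly B θ).pow c).mul (MPoly.const _)).mul ((YY_poly B θ).pow _))).trace
  rw [integral_finsetSum]
  · simp only [e2]
    generalize hp : (fun (a c : ℕ) (j : κ) (x : κ ⊕ κ → ℝ) =>
      (S * (XX B x ^ a * B j * XX B x ^ (k - 1 - a)) * T *
          (YY B θ x ^ c * B j * YY B θ x ^ (l - 1 - c))).trace) = p
    have hp2 : ∀ a c j x, (S * (XX B x ^ a * B j * XX B x ^ (k - 1 - a)) * T *
          (YY B θ x ^ c * B j * YY B θ x ^ (l - 1 - c))).trace = p a c j x := by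
      intro a c j x; rw [← hp]
    simp only [hp2] at hP ⊢
    have q1 : ∀ j, ∫ x, ∑ c ∈ Finset.range l, - Real.sin θ * ∑ a ∈ Finset.range k, p a c j x
        ∂(gam (κ ⊕ κ)) = ∑ c ∈ Finset.range l, - Real.sin θ * ∑ a ∈ Finset.range k,
          ∫ x, p a c j x ∂(gam (κ ⊕ κ)) := by
      intro j
      rw [integral_finsetSum]
      · refine Finset.sum_congr rfl fun c _ => ?_
        rw [integral_const_mul, integral_finsetSum]
        exact fun a _ => (hP a c j).integrable
      · exact fun c _ => ((IsPoly.const _).mul (IsPoly.sum _ fun a => hP a c j)).integrable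
    have q2 : ∀ a c, ∫ x, ∑ j, p a c j x ∂(gam (κ ⊕ κ)) = ∑ j, ∫ x, p a c j x ∂(gam (κ ⊕ κ)) :=
      fun a c => integral_finsetSum _ (fun j _ => (hP a c j).integrable)
    simp only [q1, q2]
    simp only [Finset.mul_sum]
    rw [Finset.sum_comm, Finset.sum_comm (s := Finset.range k)]
    exact Finset.sum_congr rfl fun c _ => Finset.sum_comm
  · intro j _
    refine IsPoly.integrable ?_
    exact (IsPoly.sum _ fun i => (IsPoly.const _).mul (IsPoly.coord i)).mul (hfjp j)

lemma IsPoly.int_sum {J : Type*} (s : Finset J) {f : J → (ι → ℝ) → ℝ} (hf : ∀ j, IsPoly (f j)) :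
    ∫ x, ∑ j ∈ s, f j x ∂(gam ι) = ∑ j ∈ s, ∫ x, f j x ∂(gam ι) :=
  integral_finsetSum _ (fun j _ => (hf j).integrable)

/-- product structure -/
lemma int_inl_inr (f g : (κ → ℝ) → ℝ) :
    ∫ x, f (fun j => x (.inl j)) * g (fun j => x (.inr j)) ∂(gam (κ ⊕ κ)) =
      (∫ x, f x ∂(gam κ)) * ∫ x, g x ∂(gam κ) := by
  have h := measurePreserving_sumPiEquivProdPi (X := fun _ : κ ⊕ κ => ℝ)
    (fun _ : κ ⊕ κ => gaussianReal 0 1)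
  have h2 := h.integral_comp (MeasurableEquiv.measurableEmbedding _)
    (fun z : (κ → ℝ) × (κ → ℝ) => f z.1 * g z.2)
  unfold gam
  rw [← integral_prod_mul, ← h2]
  rfl

lemma int_inl (f : (κ → ℝ) → ℝ) :
    ∫ x, f (fun j => x (.inl j)) ∂(gam (κ ⊕ κ)) = ∫ x, f x ∂(gam κ) := by
  have := int_inl_inr f (fun _ => 1)
  simpa using this

/-- entrywise expectation -/
noncomputable def mE (X : (κ → ℝ) → Matrix D D ℝ) : Matrix D D ℝ :=
  Matrix.of fun a b => ∫ x, X x a b ∂(gam κ)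

lemma mE_trace {X : (κ → ℝ) → Matrix D D ℝ} (hX : MPoly X) (S : Matrix D D ℝ) :
    ∫ x, (S * X x).trace ∂(gam κ) = (S * mE X).trace := by
  simp only [Matrix.trace, Matrix.diag, Matrix.mul_apply, mE, Matrix.of_apply]
  rw [IsPoly.int_sum _ (fun a => IsPoly.sum _ fun b => (IsPoly.const (S a b)).mul (hX b a))]
  refine Finset.sum_congr rfl fun a _ => ?_
  rw [IsPoly.int_sum _ (fun b => (IsPoly.const (S a b)).mul (hX b a))]
  exact Finset.sum_congr rfl fun b _ => integral_const_mul _ _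

lemma mE_prod {X Z : (κ → ℝ) → Matrix D D ℝ} (hX : MPoly X) (hZ : MPoly Z) (S T : Matrix D D ℝ) :
    ∫ x, (S * X (fun j => x (.inl j)) * T * Z (fun j => x (.inr j))).trace ∂(gam (κ ⊕ κ)) =
      (S * mE X * T * mE Z).trace := by
  have e : ∀ P Q : Matrix D D ℝ, (S * P * T * Q).trace =
      ∑ a, ∑ b, (S * P * T) a b * Q b a := fun P Q => by
    simp only [Matrix.trace, Matrix.diag, Matrix.mul_apply]
  have e2 : ∀ (P : Matrix D D ℝ) a b, (S * P * T) a b = ∑ c, ∑ e, S a e * P e c * T c b := fun P a b => by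
    simp only [Matrix.mul_apply, Finset.sum_mul]
  simp only [e, e2, Finset.sum_mul]
  have hXl : ∀ a b, IsPoly (fun x : κ ⊕ κ → ℝ => X (fun j => x (.inl j)) a b) := fun a b =>
    (hX a b).comp (fun j => IsPoly.coord _)
  have hZl : ∀ a b, IsPoly (fun x : κ ⊕ κ → ℝ => Z (fun j => x (.inr j)) a b) := fun a b =>
    (hZ a b).comp (fun j => IsPoly.coord _)
  have hp : ∀ a b c e, IsPoly (fun x : κ ⊕ κ → ℝ =>
      S a e * X (fun j => x (.inl j)) e c * T c b * Z (fun j => x (.inr j)) b a) := fun a b c e =>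
    (((IsPoly.const _).mul (hXl _ _)).mul (IsPoly.const _)).mul (hZl _ _)
  rw [IsPoly.int_sum _ (fun a => IsPoly.sum _ fun b => IsPoly.sum _ fun c => IsPoly.sum _ fun e => hp a b c e)]
  refine Finset.sum_congr rfl fun a _ => ?_
  rw [IsPoly.int_sum _ (fun b => IsPoly.sum _ fun c => IsPoly.sum _ fun e => hp a b c e)]
  refine Finset.sum_congr rfl fun b _ => ?_
  rw [IsPoly.int_sum _ (fun c => IsPoly.sum _ fun e => hp a b c e)]
  refine Finset.sum_congr rfl fun c _ => ?_
  rw [IsPoly.int_sum _ (fun e => hp a b c e)]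
  refine Finset.sum_congr rfl fun e _ => ?_
  have h := int_inl_inr (fun x => X x e c) (fun x => Z x b a)
  have h2 : ∀ x : κ ⊕ κ → ℝ, S a e * X (fun j => x (.inl j)) e c * T c b * Z (fun j => x (.inr j)) b a
    = (S a e * T c b) * (X (fun j => x (.inl j)) e c * Z (fun j => x (.inr j)) b a) := fun x => by ring
  simp only [h2]
  rw [integral_const_mul, h]
  simp only [mE, Matrix.of_apply]; ring

lemma psi_zero (B : κ → Matrix D D ℝ) (S T : Matrix D D ℝ) (k l : ℕ) :
    ∫ x, Fint B S T k l 0 x ∂(gam (κ ⊕ κ)) = ∫ x, (S * G B x ^ k * T * G B x ^ l).trace ∂(gam κ) := by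
  rw [← int_inl (fun x => (S * G B x ^ k * T * G B x ^ l).trace)]
  simp [Fint, XX, YY]

lemma psi_half (B : κ → Matrix D D ℝ) (S T : Matrix D D ℝ) (k l : ℕ) :
    ∫ x, Fint B S T k l (Real.pi / 2) x ∂(gam (κ ⊕ κ)) =
      (S * mE (fun x => G B x ^ k) * T * mE (fun x => G B x ^ l)).trace := by
  rw [← mE_prod ((G_poly B).pow k) ((G_poly B).pow l)]
  simp [Fint, XX, YY]

/-- rotation invariance of one-copy expectations -/
lemma rot_inv (B : κ → Matrix D D ℝ) (S : Matrix D D ℝ) (l : ℕ) (θ : ℝ) :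
    ∫ x, (S * YY B θ x ^ l).trace ∂(gam (κ ⊕ κ)) = ∫ x, (S * G B x ^ l).trace ∂(gam κ) := by
  have h := fun θ => psi_deriv B S 1 0 l θ
  have h2 : ∀ θ, HasDerivAt (fun θ => ∫ x, Fint B S 1 0 l θ x ∂(gam (κ ⊕ κ))) 0 θ :=
    fun θ => (h θ).congr_deriv (by simp)
  have h3 := is_const_of_deriv_eq_zero (fun θ => (h2 θ).differentiableAt) (fun θ => (h2 θ).deriv) θ 0
  rw [psi_zero] at h3
  simpa [Fint] using h3

lemma mE_odd (B : κ → Matrix D D ℝ) (l : ℕ) (hl : Odd l) : mE (fun x => G B x ^ l) = 0 := by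
  have h : ∀ S : Matrix D D ℝ, (S * mE (fun x => G B x ^ l)).trace = 0 := by
    intro S
    have h1 := rot_inv B S l Real.pi
    rw [← mE_trace ((G_poly B).pow l)]
    have h2 := int_inl (fun x : κ → ℝ => (S * G B x ^ l).trace)
    have h3 : ∀ x : κ ⊕ κ → ℝ, (S * YY B Real.pi x ^ l).trace =
        -(S * G B (fun j => x (.inl j)) ^ l).trace := by
      intro x; simp [YY, hl.neg_pow]
    simp only [h3] at h1
    rw [integral_neg] at h1
    linarith
  ext a b
  have := h (Matrix.single b a 1)
  simpa [Matrix.trace_single_mul] using this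

/-- Covariance lemma. -/
lemma covariance {J : Type*} [Fintype J] (B : κ → Matrix D D ℝ) (S T : J → Matrix D D ℝ) (k l : ℕ) (K : ℝ)
    (hK : ∀ θ, ∀ a < k, ∀ c < l, |∫ x, ∑ i, (∑ j, (S i * (XX B x ^ a * B j * XX B x ^ (k - 1 - a)) * T i *
          (YY B θ x ^ c * B j * YY B θ x ^ (l - 1 - c))).trace) ∂(gam (κ ⊕ κ))| ≤ K) :
    |(∫ x, ∑ i, (S i * G B x ^ k * T i * G B x ^ l).trace ∂(gam κ)) -
      ∑ i, (S i * mE (fun x => G B x ^ k) * T i * mE (fun x => G B x ^ l)).trace| ≤ 2 * (k * l * K) := by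
  have hP : ∀ i θ a c j, IsPoly (fun x => (S i * (XX B x ^ a * B j * XX B x ^ (k - 1 - a)) * T i *
          (YY B θ x ^ c * B j * YY B θ x ^ (l - 1 - c))).trace) := fun i θ a c j =>
    ((((MPoly.const _).mul ((((XX_poly B).pow a).mul (MPoly.const _)).mul ((XX_poly B).pow _))).mul
      (MPoly.const _)).mul
      ((((YY_poly B θ).pow c).mul (MPoly.const _)).mul ((YY_poly B θ).pow _))).trace
  have hd : ∀ θ, HasDerivAt (fun θ => ∑ i, ∫ x, Fint B (S i) (T i) k l θ x ∂(gam (κ ⊕ κ)))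
      (- Real.sin θ * ∑ a ∈ Finset.range k, ∑ c ∈ Finset.range l, ∫ x, ∑ i, (∑ j, (S i * (XX B x ^ a * B j * XX B x ^ (k - 1 - a)) * T i *
          (YY B θ x ^ c * B j * YY B θ x ^ (l - 1 - c))).trace) ∂(gam (κ ⊕ κ))) θ := by
    intro θ
    refine (HasDerivAt.fun_sum fun i _ => psi_deriv B (S i) (T i) k l θ).congr_deriv ?_
    rw [← Finset.mul_sum, Finset.sum_comm]
    congr 1
    refine Finset.sum_congr rfl fun a _ => ?_
    rw [Finset.sum_comm]
    refine Finset.sum_congr rfl fun c _ => ?_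
    rw [IsPoly.int_sum]
    exact fun i => IsPoly.sum _ fun j => hP i θ a c j
  have hb : ∀ θ, ‖- Real.sin θ * ∑ a ∈ Finset.range k, ∑ c ∈ Finset.range l, ∫ x, ∑ i, (∑ j, (S i * (XX B x ^ a * B j * XX B x ^ (k - 1 - a)) * T i *
          (YY B θ x ^ c * B j * YY B θ x ^ (l - 1 - c))).trace) ∂(gam (κ ⊕ κ))‖ ≤ k * l * K := by
    intro θ
    rw [norm_mul]
    calc _ ≤ 1 * ∑ a ∈ Finset.range k, ∑ c ∈ Finset.range l, K := by
          refine mul_le_mul ?_ ?_ (norm_nonneg _) zero_le_one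
          · simpa using Real.abs_sin_le_one θ
          · refine (norm_sum_le _ _).trans (Finset.sum_le_sum fun a ha => ?_)
            refine (norm_sum_le _ _).trans (Finset.sum_le_sum fun c hc => ?_)
            exact hK θ a (Finset.mem_range.1 ha) c (Finset.mem_range.1 hc)
      _ = k * l * K := by simp; ring
  have h := (convex_univ (𝕜 := ℝ) (E := ℝ)).norm_image_sub_le_of_norm_hasDerivWithin_le
    (fun θ _ => (hd θ).hasDerivWithinAt) (fun θ _ => hb θ)
    (Set.mem_univ (Real.pi / 2)) (Set.mem_univ 0)
  simp only [psi_zero, psi_half] at h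
  rw [IsPoly.int_sum]
  · refine (Real.norm_eq_abs _ ▸ h).trans ?_
    have h0 : 0 ≤ k * l * K := (norm_nonneg _).trans (hb 0)
    have : ‖(0:ℝ) - Real.pi / 2‖ ≤ 2 := by
      rw [zero_sub, norm_neg, Real.norm_eq_abs, abs_of_pos (by positivity)]
      linarith [Real.pi_le_four]
    nlinarith
  · exact fun i => ((((MPoly.const _).mul ((G_poly B).pow k)).mul (MPoly.const _)).mul
      ((G_poly B).pow l)).trace

end PC

namespace PC
set_option linter.unusedSectionVars false

variable {ι κ D : Type} [Fintype ι] [Fintype κ] [Fintype D] [DecidableEq D]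

open Matrix in
/-- bilinear form -/
def bf (x : D → ℝ) (M : Matrix D D ℝ) (y : D → ℝ) : ℝ := x ⬝ᵥ (M *ᵥ y)

/-- orthonormal bases -/
structure ONB (V : D → D → ℝ) : Prop where
  on : ∀ k l, V k ⬝ᵥ V l = if k = l then 1 else 0
  pars : ∀ a b : D → ℝ, ∑ k, (a ⬝ᵥ V k) * (V k ⬝ᵥ b) = a ⬝ᵥ b

/-- spectral decomposition -/
structure Spec (M : Matrix D D ℝ) (V : D → D → ℝ) (lam : D → ℝ) : Prop extends ONB V where
  eig : ∀ k, Matrix.mulVec M (V k) = lam k • V k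
  symm : M.IsSymm

open Matrix in
lemma exists_spec (M : Matrix D D ℝ) (hM : M.IsSymm) : ∃ V lam, Spec M V lam := by
  have hH : M.IsHermitian := by
    rw [Matrix.IsHermitian, Matrix.conjTranspose_eq_transpose_of_trivial]; exact hM
  refine ⟨fun k i => hH.eigenvectorBasis k i, hH.eigenvalues, ⟨fun k l => ?_, fun a b => ?_⟩, fun k => ?_, hM⟩
  · have h := orthonormal_iff_ite.1 hH.eigenvectorBasis.orthonormal k l
    rw [← h]
    simp [PiLp.inner_apply, dotProduct, mul_comm]
  · have h := hH.eigenvectorBasis.sum_inner_mul_inner (WithLp.toLp 2 a) (WithLp.toLp 2 b)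
    simpa [PiLp.inner_apply, dotProduct, mul_comm] using h
  · have := hH.mulVec_eigenvectorBasis k
    simpa using this

open Matrix in
lemma bf_symm {M : Matrix D D ℝ} (hM : M.IsSymm) (x y : D → ℝ) : bf x M y = bf y M x := by
  unfold bf
  rw [dotProduct_mulVec, ← mulVec_transpose, hM.eq, dotProduct_comm]

open Matrix in
lemma Spec.pow_eig {M : Matrix D D ℝ} {V lam} (h : Spec M V lam) (n : ℕ) (k : D) :
    (M ^ n) *ᵥ (V k) = lam k ^ n • V k := by
  induction n with
  | zero => simp
  | succ n ih => rw [pow_succ', ← mulVec_mulVec, ih, mulVec_smul, h.eig, smul_smul, pow_succ]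

open Matrix in
lemma isSymm_pow {M : Matrix D D ℝ} (hM : M.IsSymm) (n : ℕ) : (M ^ n).IsSymm := by
  rw [Matrix.IsSymm, Matrix.transpose_pow, hM.eq]

open Matrix in
lemma Spec.word {M : Matrix D D ℝ} {V lam} (h : Spec M V lam) (n : ℕ) (A C : Matrix D D ℝ)
    (x y : D → ℝ) :
    bf x (A * M ^ n * C) y = ∑ k, lam k ^ n * (bf x A (V k) * bf (V k) C y) := by
  have e1 : bf x (A * M ^ n * C) y = (Aᵀ *ᵥ x) ⬝ᵥ ((M ^ n) *ᵥ (C *ᵥ y)) := by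
    unfold bf
    rw [← mulVec_mulVec, ← mulVec_mulVec, dotProduct_mulVec, mulVec_transpose]
  rw [e1, ← h.pars]
  refine Finset.sum_congr rfl fun k _ => ?_
  have e2 : (V k) ⬝ᵥ ((M ^ n) *ᵥ (C *ᵥ y)) = lam k ^ n * bf (V k) C y := by
    have := bf_symm (isSymm_pow h.symm n) (V k) (C *ᵥ y)
    unfold bf at this ⊢
    rw [this, h.pow_eig, dotProduct_smul, smul_eq_mul, dotProduct_comm]
  have e3 : (Aᵀ *ᵥ x) ⬝ᵥ V k = bf x A (V k) := by
    unfold bf; rw [dotProduct_mulVec, mulVec_transpose]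
  rw [e2, e3]; ring

open Matrix in
lemma ONB.trace {V : D → D → ℝ} (h : ONB V) (M : Matrix D D ℝ) : M.trace = ∑ k, bf (V k) M (V k) := by
  have h1 : ∀ i j, ∑ k, V k i * V k j = if i = j then 1 else 0 := by
    intro i j
    have := h.pars (Pi.single i 1) (Pi.single j 1)
    simp only [single_one_dotProduct, dotProduct_single_one] at this
    rw [this]
    simp [Pi.single_apply, eq_comm]
  have h2 : ∀ k, bf (V k) M (V k) = ∑ i, ∑ j, M i j * (V k i * V k j) := by
    intro k
    simp only [bf, dotProduct, mulVec, Finset.mul_sum]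
    exact Finset.sum_congr rfl fun i _ => Finset.sum_congr rfl fun j _ => by ring
  simp only [h2]
  rw [Finset.sum_comm]
  simp only [Matrix.trace, Matrix.diag]
  refine Finset.sum_congr rfl fun i _ => ?_
  rw [Finset.sum_comm]
  simp only [← Finset.mul_sum, h1]
  simp

lemma Spec.trace_pow {M : Matrix D D ℝ} {V lam} (h : Spec M V lam) (n : ℕ) :
    (M ^ n).trace = ∑ k, lam k ^ n := by
  rw [h.toONB.trace]
  refine Finset.sum_congr rfl fun k _ => ?_
  rw [bf, h.pow_eig, dotProduct_smul, h.on]; simp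

lemma Spec.trace_mul_pow {M : Matrix D D ℝ} {V lam} (h : Spec M V lam) (A : Matrix D D ℝ) (n : ℕ) :
    (A * M ^ n).trace = ∑ k, lam k ^ n * bf (V k) A (V k) := by
  rw [h.toONB.trace]
  refine Finset.sum_congr rfl fun k _ => ?_
  rw [bf, ← Matrix.mulVec_mulVec, h.pow_eig, Matrix.mulVec_smul, dotProduct_smul, smul_eq_mul, bf]

lemma Spec.trace_two {M : Matrix D D ℝ} {V lam} (h : Spec M V lam) {B : Matrix D D ℝ}
    (hB : B.IsSymm) (k l : ℕ) :
    (B * M ^ k * B * M ^ l).trace = ∑ a, ∑ b, lam a ^ k * lam b ^ l * (bf (V a) B (V b)) ^ 2 := by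
  rw [h.trace_mul_pow, Finset.sum_comm]
  refine Finset.sum_congr rfl fun b _ => ?_
  rw [h.word, Finset.mul_sum]
  refine Finset.sum_congr rfl fun a _ => ?_
  rw [bf_symm hB (V b) (V a)]; ring

/-- squared norm bounds -/
lemma ONB.sq {V : D → D → ℝ} (h : ONB V) (a : D → ℝ) : ∑ k, (V k ⬝ᵥ a) ^ 2 = a ⬝ᵥ a := by
  rw [← h.pars]
  exact Finset.sum_congr rfl fun k _ => by rw [dotProduct_comm a]; ring

open Matrix in
lemma bf_transpose (x y : D → ℝ) (M : Matrix D D ℝ) : bf x M y = y ⬝ᵥ (Mᵀ *ᵥ x) := by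
  unfold bf
  rw [dotProduct_mulVec, ← mulVec_transpose, dotProduct_comm]

open Matrix in
lemma frob_onb {V W : D → D → ℝ} (hV : ONB V) (hW : ONB W) (M : Matrix D D ℝ) :
    ∑ l, ∑ m, (bf (V l) M (W m)) ^ 2 = ∑ i, ∑ j, (M i j) ^ 2 := by
  have h1 : ∀ l, ∑ m, (bf (V l) M (W m)) ^ 2 = ∑ j, (V l ⬝ᵥ (fun i => M i j)) ^ 2 := by
    intro l
    simp only [bf_transpose]
    rw [hW.sq]
    simp only [dotProduct, mulVec, transpose_apply]
    refine Finset.sum_congr rfl fun j _ => ?_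
    rw [sq]
    congr 1 <;> exact Finset.sum_congr rfl fun i _ => by ring
  simp only [h1]
  rw [Finset.sum_comm]
  simp only [hV.sq]
  rw [Finset.sum_comm]
  refine Finset.sum_congr rfl fun j _ => ?_
  simp [dotProduct, sq]

/-- crossing coefficient -/
noncomputable def CC (B : κ → Matrix D D ℝ) (a b c e : D → ℝ) : ℝ :=
  ∑ i, bf a (B i) b * bf c (B i) e

lemma CC_swap (B : κ → Matrix D D ℝ) (a b c e : D → ℝ) : CC B a b c e = CC B c e a b :=
  Finset.sum_congr rfl fun i _ => mul_comm _ _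

lemma CC_bf (B : κ → Matrix D D ℝ) (a b c e : D → ℝ) :
    CC B a b c e = bf c (G B (fun i => bf a (B i) b)) e := by
  simp only [CC, bf, G, Matrix.sum_mulVec, Matrix.smul_mulVec, dotProduct_sum, dotProduct_smul,
    smul_eq_mul]

/-- nonneg norm -/
noncomputable def nrm (x : D → ℝ) : ℝ := √(x ⬝ᵥ x)

lemma dot_self_nonneg (x : D → ℝ) : 0 ≤ x ⬝ᵥ x :=
  Finset.sum_nonneg fun i _ => mul_self_nonneg _

lemma nrm_nonneg (x : D → ℝ) : 0 ≤ nrm x := Real.sqrt_nonneg _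
lemma nrm_sq (x : D → ℝ) : nrm x ^ 2 = x ⬝ᵥ x := Real.sq_sqrt (dot_self_nonneg x)

/-- standing hypotheses -/
structure Hyp (B : κ → Matrix D D ℝ) (s v2 : ℝ) : Prop where
  sym : ∀ j, (B j).IsSymm
  hs : ∀ y : D → ℝ, ∑ j, (Matrix.mulVec (B j) y) ⬝ᵥ (Matrix.mulVec (B j) y) ≤ s * (y ⬝ᵥ y)
  hv : ∀ a : κ → ℝ, ∑ i, ∑ j, (G B a i j) ^ 2 ≤ v2 * ∑ j, a j ^ 2
  s0 : 0 ≤ s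
  v0 : 0 ≤ v2

lemma Hyp.sum_sq {B : κ → Matrix D D ℝ} {s v2 : ℝ} (h : Hyp B s v2) {V1 V2 V3 : D → D → ℝ}
    (h1 : ONB V1) (h2 : ONB V2) (h3 : ONB V3) (y : D → ℝ) :
    ∑ k, ∑ l, ∑ m, (CC B y (V1 k) (V2 l) (V3 m)) ^ 2 ≤ s * v2 * (y ⬝ᵥ y) := by
  have e1 : ∀ k, ∑ l, ∑ m, (CC B y (V1 k) (V2 l) (V3 m)) ^ 2 ≤ v2 * ∑ i, bf y (B i) (V1 k) ^ 2 := by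
    intro k
    simp only [CC_bf, frob_onb h2 h3]
    exact h.hv _
  calc _ ≤ ∑ k, v2 * ∑ i, bf y (B i) (V1 k) ^ 2 := Finset.sum_le_sum fun k _ => e1 k
    _ = v2 * ∑ j, (Matrix.mulVec (B j) y) ⬝ᵥ (Matrix.mulVec (B j) y) := by
        rw [← Finset.mul_sum, Finset.sum_comm]
        congr 1
        refine Finset.sum_congr rfl fun i _ => ?_
        rw [← h1.sq]
        refine Finset.sum_congr rfl fun k _ => ?_
        rw [bf_symm (h.sym i)]; rfl
    _ ≤ v2 * (s * (y ⬝ᵥ y)) := mul_le_mul_of_nonneg_left (h.hs y) h.v0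
    _ = _ := by ring

lemma Hyp.cross {B : κ → Matrix D D ℝ} {s v2 : ℝ} (h : Hyp B s v2) {V1 V2 V3 : D → D → ℝ}
    (h1 : ONB V1) (h2 : ONB V2) (h3 : ONB V3) (y w : D → ℝ) :
    ∑ k, ∑ l, ∑ m, |CC B y (V1 k) (V2 l) (V3 m)| * |CC B (V1 k) (V2 l) (V3 m) w|
      ≤ s * v2 * (nrm y * nrm w) := by
  have e := Real.sum_mul_le_sqrt_mul_sqrt (Finset.univ : Finset (D × D × D))
    (fun t => |CC B y (V1 t.1) (V2 t.2.1) (V3 t.2.2)|)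
    (fun t => |CC B (V1 t.1) (V2 t.2.1) (V3 t.2.2) w|)
  simp only [Fintype.sum_prod_type, sq_abs] at e
  have q1 := h.sum_sq h1 h2 h3 y
  have q2 : ∑ k, ∑ l, ∑ m, (CC B (V1 k) (V2 l) (V3 m) w) ^ 2 ≤ s * v2 * (w ⬝ᵥ w) := by
    have := h.sum_sq h3 h1 h2 w
    refine le_trans (le_of_eq ?_) this
    calc _ = ∑ k, ∑ m, ∑ l, (CC B (V1 k) (V2 l) (V3 m) w) ^ 2 :=
          Finset.sum_congr rfl fun k _ => Finset.sum_comm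
      _ = ∑ m, ∑ k, ∑ l, (CC B (V1 k) (V2 l) (V3 m) w) ^ 2 := Finset.sum_comm
      _ = _ := by
        refine Finset.sum_congr rfl fun m _ => Finset.sum_congr rfl fun k _ =>
          Finset.sum_congr rfl fun l _ => ?_
        rw [CC_swap]
        simp only [CC, bf_symm (h.sym _) (V3 m) w]
  have hth : 0 ≤ s * v2 := mul_nonneg h.s0 h.v0
  refine e.trans ?_
  calc _ ≤ √(s * v2 * (y ⬝ᵥ y)) * √(s * v2 * (w ⬝ᵥ w)) :=
        mul_le_mul (Real.sqrt_le_sqrt q1) (Real.sqrt_le_sqrt q2) (Real.sqrt_nonneg _)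
          (Real.sqrt_nonneg _)
    _ = s * v2 * (nrm y * nrm w) := by
        rw [Real.sqrt_mul hth, Real.sqrt_mul hth]
        unfold nrm
        have := Real.mul_self_sqrt hth
        linear_combination (√(y ⬝ᵥ y) * √(w ⬝ᵥ w)) * this

/-- expansion of the crossing word -/
lemma cross_expand (B : κ → Matrix D D ℝ) {X Y : Matrix D D ℝ} {V U : D → D → ℝ} {lam mu : D → ℝ}
    (hX : Spec X V lam) (hY : Spec Y U mu) (a a' c : ℕ) (y w : D → ℝ) :
    ∑ i, ∑ j, bf y (B i * X ^ a * (B j * X ^ a' * (B i * Y ^ c * B j))) w =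
      ∑ k, ∑ l, ∑ m, lam k ^ a * lam l ^ a' * mu m ^ c *
        (CC B y (V k) (V l) (U m) * CC B (V k) (V l) (U m) w) := by
  simp only [hX.word, hY.word]
  have e : ∀ k l m, lam k ^ a * lam l ^ a' * mu m ^ c *
        (CC B y (V k) (V l) (U m) * CC B (V k) (V l) (U m) w) =
      ∑ i, ∑ j, lam k ^ a * (bf y (B i) (V k) * (lam l ^ a' * (bf (V k) (B j) (V l) *
        (mu m ^ c * (bf (V l) (B i) (U m) * bf (U m) (B j) w))))) := by
    intro k l m
    rw [CC, CC, Finset.sum_mul_sum, Finset.mul_sum]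
    refine Finset.sum_congr rfl fun i _ => ?_
    rw [Finset.mul_sum]
    exact Finset.sum_congr rfl fun j _ => by ring
  simp only [e, Finset.mul_sum]
  calc _ = ∑ i, ∑ k, ∑ j, ∑ l, ∑ m, _ := Finset.sum_congr rfl fun i _ => Finset.sum_comm
    _ = ∑ k, ∑ i, ∑ j, ∑ l, ∑ m, _ := Finset.sum_comm
    _ = ∑ k, ∑ l, ∑ i, ∑ j, ∑ m, _ := by
        refine Finset.sum_congr rfl fun k _ => ?_
        calc _ = ∑ i, ∑ l, ∑ j, ∑ m, _ := Finset.sum_congr rfl fun i _ => Finset.sum_comm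
          _ = _ := Finset.sum_comm
    _ = _ := by
        refine Finset.sum_congr rfl fun k _ => Finset.sum_congr rfl fun l _ => ?_
        calc _ = ∑ i, ∑ m, ∑ j, _ := Finset.sum_congr rfl fun i _ => Finset.sum_comm
          _ = _ := Finset.sum_comm

end PC

namespace PC
set_option linter.unusedSectionVars false

variable {ι κ D : Type} [Fintype ι] [Fintype κ] [Fintype D] [DecidableEq D]

open Matrix in
lemma trace_vec (x y : D → ℝ) (M : Matrix D D ℝ) : (vecMulVec y x * M).trace = bf x M y := by
  rw [vecMulVec_mul, trace_vecMulVec, bf, dotProduct_mulVec, dotProduct_comm]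

lemma exists_root {T : ℝ} (hT : 1 ≤ T) (p : ℕ) (hp : 1 ≤ p) : ∃ r : ℝ, 1 ≤ r ∧ r ^ (2 * p) = T := by
  refine ⟨T ^ ((1:ℝ) / (2 * p : ℕ)), Real.one_le_rpow hT (by positivity), ?_⟩
  rw [← Real.rpow_natCast, ← Real.rpow_mul (by linarith)]
  have : ((2 * p : ℕ) : ℝ) ≠ 0 := by positivity
  rw [one_div, inv_mul_cancel₀ this, Real.rpow_one]

lemma Spec.abs_le {M : Matrix D D ℝ} {V lam} (h : Spec M V lam) {p : ℕ} (hp : 1 ≤ p) {r : ℝ}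
    (hr : 0 ≤ r) (hT : (M ^ (2 * p)).trace ≤ r ^ (2 * p)) (k : D) : |lam k| ≤ r := by
  rw [h.trace_pow] at hT
  have h1 : lam k ^ (2 * p) ≤ ∑ k, lam k ^ (2 * p) :=
    Finset.single_le_sum (f := fun k => lam k ^ (2 * p))
      (fun i _ => (even_two_mul p).pow_nonneg _) (Finset.mem_univ k)
  have h2 : |lam k| ^ (2 * p) ≤ r ^ (2 * p) := by
    rw [(even_two_mul p).pow_abs]; linarith
  exact le_of_pow_le_pow_left₀ (by omega) hr h2

lemma trace_even_nonneg {M : Matrix D D ℝ} (hM : M.IsSymm) (p : ℕ) : 0 ≤ (M ^ (2 * p)).trace := by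
  obtain ⟨V, lam, h⟩ := exists_spec M hM
  rw [h.trace_pow]
  exact Finset.sum_nonneg fun i _ => (even_two_mul p).pow_nonneg _

open Matrix in
lemma Spec.nrm_pow {M : Matrix D D ℝ} {V lam} (h : Spec M V lam) {r : ℝ} (hr : 0 ≤ r)
    (hl : ∀ k, |lam k| ≤ r) (n : ℕ) (y : D → ℝ) : nrm ((M ^ n) *ᵥ y) ≤ r ^ n * nrm y := by
  refine abs_le_of_sq_le_sq' ?_ (mul_nonneg (pow_nonneg hr _) (nrm_nonneg _)) |>.2
  rw [mul_pow, nrm_sq, nrm_sq, ← h.toONB.sq ((M ^ n) *ᵥ y), ← h.toONB.sq y, Finset.mul_sum]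
  refine Finset.sum_le_sum fun k _ => ?_
  have e : V k ⬝ᵥ ((M ^ n) *ᵥ y) = lam k ^ n * (V k ⬝ᵥ y) := by
    have := bf_symm (isSymm_pow h.symm n) (V k) y
    unfold bf at this
    rw [this, h.pow_eig, dotProduct_smul, smul_eq_mul, dotProduct_comm]
  rw [e, mul_pow]
  refine mul_le_mul_of_nonneg_right ?_ (sq_nonneg _)
  rw [← sq_abs, abs_pow]
  exact pow_le_pow_left₀ (by positivity) (pow_le_pow_left₀ (abs_nonneg _) (hl k) n) 2

lemma crossVec {B : κ → Matrix D D ℝ} {s v2 : ℝ} (h : Hyp B s v2) {X Y : Matrix D D ℝ}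
    (hX : X.IsSymm) (hY : Y.IsSymm) (p : ℕ) (hp : 1 ≤ p) (a a' c c' : ℕ)
    (hN : a + a' + c + c' ≤ 2 * p) (x y : D → ℝ) :
    |∑ i, ∑ j, (Matrix.vecMulVec y x * B i * (X ^ a * B j * X ^ a') * B i *
      (Y ^ c * B j * Y ^ c')).trace| ≤
      s * v2 * (nrm x * nrm y) * (1 + (X ^ (2 * p)).trace + (Y ^ (2 * p)).trace) := by
  obtain ⟨V, lam, hV⟩ := exists_spec X hX
  obtain ⟨U, mu, hU⟩ := exists_spec Y hY
  have t1 := trace_even_nonneg hX p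
  have t2 := trace_even_nonneg hY p
  obtain ⟨r, hr1, hr⟩ := exists_root
    (T := 1 + (X ^ (2 * p)).trace + (Y ^ (2 * p)).trace) (by linarith) p hp
  have hr0 : 0 ≤ r := by linarith
  have hl := hV.abs_le hp hr0 (by linarith)
  have hm := hU.abs_le hp hr0 (by linarith)
  have e : ∀ i j, (Matrix.vecMulVec y x * B i * (X ^ a * B j * X ^ a') * B i *
      (Y ^ c * B j * Y ^ c')).trace =
      bf x (B i * X ^ a * (B j * X ^ a' * (B i * Y ^ c * B j))) (Matrix.mulVec (Y ^ c') y) := by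
    intro i j
    have : Matrix.vecMulVec y x * B i * (X ^ a * B j * X ^ a') * B i * (Y ^ c * B j * Y ^ c') =
      Matrix.vecMulVec y x * ((B i * X ^ a * (B j * X ^ a' * (B i * Y ^ c * B j))) * Y ^ c') := by
      noncomm_ring
    rw [this, trace_vec, bf, bf, Matrix.mulVec_mulVec]
  simp only [e]
  rw [cross_expand B hV hU]
  calc _ ≤ ∑ k, ∑ l, ∑ m, r ^ (a + a' + c) * (|CC B x (V k) (V l) (U m)| *
        |CC B (V k) (V l) (U m) (Matrix.mulVec (Y ^ c') y)|) := by
        refine (Finset.abs_sum_le_sum_abs _ _).trans (Finset.sum_le_sum fun k _ => ?_)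
        refine (Finset.abs_sum_le_sum_abs _ _).trans (Finset.sum_le_sum fun l _ => ?_)
        refine (Finset.abs_sum_le_sum_abs _ _).trans (Finset.sum_le_sum fun m _ => ?_)
        rw [abs_mul, abs_mul (CC _ _ _ _ _)]
        refine mul_le_mul_of_nonneg_right ?_ (by positivity)
        rw [abs_mul, abs_mul, abs_pow, abs_pow, abs_pow, pow_add, pow_add]
        have := hl k
        have := hl l
        have := hm m
        gcongr
    _ = r ^ (a + a' + c) * ∑ k, ∑ l, ∑ m, (|CC B x (V k) (V l) (U m)| *
        |CC B (V k) (V l) (U m) (Matrix.mulVec (Y ^ c') y)|) := by simp only [Finset.mul_sum]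
    _ ≤ r ^ (a + a' + c) * (s * v2 * (nrm x * nrm (Matrix.mulVec (Y ^ c') y))) := by
        refine mul_le_mul_of_nonneg_left ?_ (by positivity)
        exact h.cross hV.toONB hV.toONB hU.toONB _ _
    _ ≤ r ^ (a + a' + c) * (s * v2 * (nrm x * (r ^ c' * nrm y))) := by
        have := hU.nrm_pow hr0 hm c' y
        have := nrm_nonneg x
        have := h.s0
        have := h.v0
        gcongr
    _ = s * v2 * (nrm x * nrm y) * r ^ (a + a' + c + c') := by rw [pow_add r (a + a' + c)]; ring
    _ ≤ s * v2 * (nrm x * nrm y) * r ^ (2 * p) := by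
        have := nrm_nonneg x
        have := nrm_nonneg y
        have := h.s0
        have := h.v0
        gcongr
    _ = _ := by rw [hr]

lemma monomial_le {x y z w : ℝ} (hx : 0 ≤ x) (hy : 0 ≤ y) (hz : 0 ≤ z) (hw : 0 ≤ w) (a b c e : ℕ) :
    x ^ a * y ^ b * z ^ c * w ^ e ≤ x ^ (a+b+c+e) + y ^ (a+b+c+e) + z ^ (a+b+c+e) + w ^ (a+b+c+e) := by
  have key : ∀ M : ℝ, x ≤ M → y ≤ M → z ≤ M → w ≤ M →
      x ^ a * y ^ b * z ^ c * w ^ e ≤ M ^ (a+b+c+e) := by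
    intro M h1 h2 h3 h4
    have hM : 0 ≤ M := hx.trans h1
    rw [pow_add, pow_add, pow_add]
    gcongr
  have p1 := pow_nonneg hx (a+b+c+e)
  have p2 := pow_nonneg hy (a+b+c+e)
  have p3 := pow_nonneg hz (a+b+c+e)
  have p4 := pow_nonneg hw (a+b+c+e)
  rcases le_total x y with h1 | h1 <;> rcases le_total z w with h2 | h2
  · rcases le_total y w with h3 | h3
    · linarith [key w (by linarith) h3 h2 le_rfl]
    · linarith [key y (by linarith) le_rfl (by linarith) h3]
  · rcases le_total y z with h3 | h3
    · linarith [key z (by linarith) h3 le_rfl h2]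
    · linarith [key y (by linarith) le_rfl (by linarith) (by linarith)]
  · rcases le_total x w with h3 | h3
    · linarith [key w (by linarith) (by linarith) h2 le_rfl]
    · linarith [key x le_rfl h1 (by linarith) h3]
  · rcases le_total x z with h3 | h3
    · linarith [key z (by linarith) (by linarith) le_rfl h2]
    · linarith [key x le_rfl h1 (by linarith) (by linarith)]

lemma crossTr {B : κ → Matrix D D ℝ} {s v2 : ℝ} (h : Hyp B s v2) {X Y : Matrix D D ℝ}
    (hX : X.IsSymm) (hY : Y.IsSymm) (a a' c c' : ℕ) (hN : Even (a + a' + c + c')) :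
    |∑ i, ∑ j, (B i * (X ^ a * B j * X ^ a') * B i * (Y ^ c * B j * Y ^ c')).trace| ≤
      s * v2 * (2 * (X ^ (a + a' + c + c')).trace + 2 * (Y ^ (a + a' + c + c')).trace) := by
  obtain ⟨V, lam, hV⟩ := exists_spec X hX
  obtain ⟨U, mu, hU⟩ := exists_spec Y hY
  have e : ∀ i j, (B i * (X ^ a * B j * X ^ a') * B i * (Y ^ c * B j * Y ^ c')).trace =
      ∑ t, mu t ^ c' * bf (U t) (B i * X ^ a * (B j * X ^ a' * (B i * Y ^ c * B j))) (U t) := by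
    intro i j
    have : B i * (X ^ a * B j * X ^ a') * B i * (Y ^ c * B j * Y ^ c') =
      (B i * X ^ a * (B j * X ^ a' * (B i * Y ^ c * B j))) * Y ^ c' := by
      noncomm_ring
    rw [this, hU.trace_mul_pow]
  have e2 : ∑ i, ∑ j, (B i * (X ^ a * B j * X ^ a') * B i * (Y ^ c * B j * Y ^ c')).trace =
      ∑ t, ∑ k, ∑ l, ∑ m, lam k ^ a * lam l ^ a' * mu m ^ c * mu t ^ c' *
        (CC B (U t) (V k) (V l) (U m) * CC B (V k) (V l) (U m) (U t)) := by
    simp only [e]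
    calc _ = ∑ t, mu t ^ c' * ∑ i, ∑ j, bf (U t) (B i * X ^ a * (B j * X ^ a' * (B i * Y ^ c * B j))) (U t) := by
          simp only [Finset.mul_sum]
          rw [Finset.sum_comm]
          rw [← Finset.sum_comm]
          calc _ = ∑ i, ∑ t, ∑ j, _ := Finset.sum_congr rfl fun i _ => Finset.sum_comm
            _ = _ := Finset.sum_comm
      _ = _ := by
          simp only [cross_expand B hV hU, Finset.mul_sum]
          exact Finset.sum_congr rfl fun t _ => Finset.sum_congr rfl fun k _ =>
            Finset.sum_congr rfl fun l _ => Finset.sum_congr rfl fun m _ => by ring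
  rw [e2, hV.trace_pow, hU.trace_pow]
  set N := a + a' + c + c' with hNd
  set Q : D → D → D → D → ℝ := fun t k l m =>
    |CC B (U t) (V k) (V l) (U m)| * |CC B (V k) (V l) (U m) (U t)| with hQ
  have hQ0 : ∀ t k l m, 0 ≤ Q t k l m := fun t k l m => by positivity
  have nU : ∀ t, nrm (U t) = 1 := fun t => by simp [nrm, hU.on]
  have nV : ∀ t, nrm (V t) = 1 := fun t => by simp [nrm, hV.on]
  have ht : ∀ t, ∑ k, ∑ l, ∑ m, Q t k l m ≤ s * v2 := fun t => by
    have := h.cross hV.toONB hV.toONB hU.toONB (U t) (U t)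
    simpa [nU] using this
  have hk : ∀ k, ∑ t, ∑ l, ∑ m, Q t k l m ≤ s * v2 := fun k => by
    have := h.cross hV.toONB hU.toONB hU.toONB (V k) (V k)
    rw [nV, one_mul, mul_one] at this
    refine le_trans (le_of_eq ?_) this
    rw [Finset.sum_comm]
    refine Finset.sum_congr rfl fun l _ => ?_
    rw [Finset.sum_comm]
    refine Finset.sum_congr rfl fun m _ => Finset.sum_congr rfl fun t _ => ?_
    simp only [hQ]
    rw [CC_swap B (U t), mul_comm]
  have hl : ∀ l, ∑ t, ∑ k, ∑ m, Q t k l m ≤ s * v2 := fun l => by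
    have := h.cross hU.toONB hU.toONB hV.toONB (V l) (V l)
    rw [nV, one_mul, mul_one] at this
    refine le_trans (le_of_eq ?_) this
    rw [Finset.sum_comm' (t' := Finset.univ) (s' := fun _ => Finset.univ) (by simp)]
    calc _ = ∑ k, ∑ m, ∑ t, Q t k l m := Finset.sum_congr rfl fun k _ => Finset.sum_comm
      _ = ∑ m, ∑ k, ∑ t, Q t k l m := Finset.sum_comm
      _ = ∑ m, ∑ t, ∑ k, Q t k l m := Finset.sum_congr rfl fun m _ => Finset.sum_comm
      _ = _ := by
        refine Finset.sum_congr rfl fun m _ => Finset.sum_congr rfl fun t _ =>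
          Finset.sum_congr rfl fun k _ => ?_
        simp only [hQ]
        rw [CC_swap B (U t), CC_swap B (V k)]
  have hm : ∀ m, ∑ t, ∑ k, ∑ l, Q t k l m ≤ s * v2 := fun m => by
    have := h.cross hU.toONB hV.toONB hV.toONB (U m) (U m)
    rw [nU, one_mul, mul_one] at this
    refine le_trans (le_of_eq ?_) this
    refine Finset.sum_congr rfl fun t _ => Finset.sum_congr rfl fun k _ =>
          Finset.sum_congr rfl fun l _ => ?_
    simp only [hQ]
    rw [CC_swap B (V k), mul_comm]
  have hpow : ∀ x : ℝ, 0 ≤ x ^ N := fun x => hN.pow_nonneg x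
  calc _ ≤ ∑ t, ∑ k, ∑ l, ∑ m, (lam k ^ N + lam l ^ N + mu m ^ N + mu t ^ N) * Q t k l m := by
        refine (Finset.abs_sum_le_sum_abs _ _).trans (Finset.sum_le_sum fun t _ => ?_)
        refine (Finset.abs_sum_le_sum_abs _ _).trans (Finset.sum_le_sum fun k _ => ?_)
        refine (Finset.abs_sum_le_sum_abs _ _).trans (Finset.sum_le_sum fun l _ => ?_)
        refine (Finset.abs_sum_le_sum_abs _ _).trans (Finset.sum_le_sum fun m _ => ?_)
        rw [abs_mul, abs_mul (CC _ _ _ _ _)]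
        refine mul_le_mul_of_nonneg_right ?_ (by positivity)
        have := monomial_le (abs_nonneg (lam k)) (abs_nonneg (lam l)) (abs_nonneg (mu m))
          (abs_nonneg (mu t)) a a' c c'
        rw [← hNd, hN.pow_abs, hN.pow_abs, hN.pow_abs, hN.pow_abs] at this
        simpa [abs_mul, abs_pow] using this
    _ = (∑ k, lam k ^ N * ∑ t, ∑ l, ∑ m, Q t k l m) + (∑ l, lam l ^ N * ∑ t, ∑ k, ∑ m, Q t k l m)
        + (∑ m, mu m ^ N * ∑ t, ∑ k, ∑ l, Q t k l m) + ∑ t, mu t ^ N * ∑ k, ∑ l, ∑ m, Q t k l m := by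
        simp only [add_mul, Finset.sum_add_distrib, Finset.mul_sum]
        congr 1
        congr 1
        · congr 1
          · rw [Finset.sum_comm]
          · calc _ = ∑ t, ∑ l, ∑ k, ∑ m, lam l ^ N * Q t k l m :=
                  Finset.sum_congr rfl fun t _ => Finset.sum_comm
              _ = _ := Finset.sum_comm
        · calc _ = ∑ t, ∑ k, ∑ m, ∑ l, mu m ^ N * Q t k l m :=
                Finset.sum_congr rfl fun t _ => Finset.sum_congr rfl fun k _ => Finset.sum_comm
            _ = ∑ t, ∑ m, ∑ k, ∑ l, mu m ^ N * Q t k l m :=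
                Finset.sum_congr rfl fun t _ => Finset.sum_comm
            _ = _ := Finset.sum_comm
    _ ≤ (∑ k, lam k ^ N * (s * v2)) + (∑ l, lam l ^ N * (s * v2))
        + (∑ m, mu m ^ N * (s * v2)) + ∑ t, mu t ^ N * (s * v2) := by
        gcongr with k _ l _ m _ t _
        · exact hpow _
        · exact hk k
        · exact hpow _
        · exact hl l
        · exact hpow _
        · exact hm m
        · exact hpow _
        · exact ht t
    _ = _ := by simp only [← Finset.sum_mul]; ring

end PC

namespace PC
set_option linter.unusedSectionVars false

variable {ι κ D : Type} [Fintype ι] [Fintype κ] [Fintype D] [DecidableEq D]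

lemma G_symm {B : κ → Matrix D D ℝ} (hB : ∀ j, (B j).IsSymm) (x : κ → ℝ) : (G B x).IsSymm := by
  unfold G Matrix.IsSymm
  rw [Matrix.transpose_sum]
  exact Finset.sum_congr rfl fun j _ => by rw [Matrix.transpose_smul, (hB j).eq]

lemma XX_symm {B : κ → Matrix D D ℝ} (hB : ∀ j, (B j).IsSymm) (x : κ ⊕ κ → ℝ) : (XX B x).IsSymm :=
  G_symm hB _

lemma YY_symm {B : κ → Matrix D D ℝ} (hB : ∀ j, (B j).IsSymm) (θ : ℝ) (x : κ ⊕ κ → ℝ) :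
    (YY B θ x).IsSymm := by
  unfold YY Matrix.IsSymm
  rw [Matrix.transpose_add, Matrix.transpose_smul, Matrix.transpose_smul, (G_symm hB _).eq,
    (G_symm hB _).eq]

lemma abs_int_le {f g : (ι → ℝ) → ℝ} (hg : IsPoly g) (h : ∀ x, |f x| ≤ g x) :
    |∫ x, f x ∂(gam ι)| ≤ ∫ x, g x ∂(gam ι) := by
  have := norm_integral_le_of_norm_le (f := f) hg.integrable (Filter.Eventually.of_forall h)
  simpa using this

lemma int_mono {f g : (ι → ℝ) → ℝ} (hf : IsPoly f) (hg : IsPoly g) (h : ∀ x, f x ≤ g x) :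
    ∫ x, f x ∂(gam ι) ≤ ∫ x, g x ∂(gam ι) :=
  integral_mono hf.integrable hg.integrable h

/-- trace moments -/
noncomputable def mom (B : κ → Matrix D D ℝ) (n : ℕ) : ℝ := ∫ x, (G B x ^ n).trace ∂(gam κ)

lemma int_XX (B : κ → Matrix D D ℝ) (n : ℕ) :
    ∫ x, (XX B x ^ n).trace ∂(gam (κ ⊕ κ)) = mom B n := int_inl (fun x => (G B x ^ n).trace)

lemma int_YY (B : κ → Matrix D D ℝ) (n : ℕ) (θ : ℝ) :
    ∫ x, (YY B θ x ^ n).trace ∂(gam (κ ⊕ κ)) = mom B n := by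
  have := rot_inv B 1 n θ
  simpa [mom] using this

lemma covTr {B : κ → Matrix D D ℝ} {s v2 : ℝ} (h : Hyp B s v2) (k l N : ℕ) (hkl : k + l = N + 2)
    (hN : Even N) :
    |(∫ x, ∑ i, (B i * G B x ^ k * B i * G B x ^ l).trace ∂(gam κ)) -
      ∑ i, (B i * mE (fun x => G B x ^ k) * B i * mE (fun x => G B x ^ l)).trace| ≤
      2 * (k * l * (s * v2 * (4 * mom B N))) := by
  refine covariance B B B k l _ fun θ a ha c hc => ?_
  have e : a + (k - 1 - a) + c + (l - 1 - c) = N := by omega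
  refine (abs_int_le (g := fun x => s * v2 * (2 * (XX B x ^ N).trace + 2 * (YY B θ x ^ N).trace))
    ?_ fun x => ?_).trans (le_of_eq ?_)
  · exact (IsPoly.const _).mul (((IsPoly.const _).mul ((XX_poly B).pow N).trace).add
      ((IsPoly.const _).mul ((YY_poly B θ).pow N).trace))
  · have := crossTr h (XX_symm h.sym x) (YY_symm h.sym θ x) a (k - 1 - a) c (l - 1 - c) (by rwa [e])
    rwa [e] at this
  · rw [integral_const_mul, integral_add, integral_const_mul, integral_const_mul, int_XX, int_YY]
    · ring
    · exact ((IsPoly.const _).mul ((XX_poly B).pow N).trace).integrable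
    · exact ((IsPoly.const _).mul ((YY_poly B θ).pow N).trace).integrable

lemma covVec {B : κ → Matrix D D ℝ} {s v2 : ℝ} (h : Hyp B s v2) (p : ℕ) (hp : 1 ≤ p) (k l : ℕ)
    (hkl : k + l ≤ 2 * p + 2) (x y : D → ℝ) :
    |(∫ g, ∑ i, bf x (B i * G B g ^ k * B i * G B g ^ l) y ∂(gam κ)) -
      ∑ i, bf x (B i * mE (fun x => G B x ^ k) * B i * mE (fun x => G B x ^ l)) y| ≤
      2 * (k * l * (s * v2 * (nrm x * nrm y) * (1 + 2 * mom B (2 * p)))) := by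
  have := covariance B (fun i => Matrix.vecMulVec y x * B i) B k l
    (s * v2 * (nrm x * nrm y) * (1 + 2 * mom B (2 * p))) fun θ a ha c hc => ?_
  · simpa only [Matrix.mul_assoc, trace_vec] using this
  refine (abs_int_le (g := fun g => s * v2 * (nrm x * nrm y) *
    (1 + (XX B g ^ (2 * p)).trace + (YY B θ g ^ (2 * p)).trace))
    ?_ fun g => ?_).trans (le_of_eq ?_)
  · exact (IsPoly.const _).mul (((IsPoly.const _).add ((XX_poly B).pow _).trace).add
      ((YY_poly B θ).pow _).trace)
  · exact crossVec h (XX_symm h.sym g) (YY_symm h.sym θ g) p hp a (k - 1 - a) c (l - 1 - c)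
      (by omega) x y
  · rw [integral_const_mul, integral_add, integral_add, int_XX, int_YY]
    · have : ∫ _ : κ ⊕ κ → ℝ, (1:ℝ) ∂(gam (κ ⊕ κ)) = 1 := by simp
      rw [this]; ring
    · simp
    · exact ((XX_poly B).pow _).trace.integrable
    · exact ((IsPoly.const _).add ((XX_poly B).pow _).trace).integrable
    · exact ((YY_poly B θ).pow _).trace.integrable

/-- Gaussian integration by parts for matrices. -/
lemma ibp (B : κ → Matrix D D ℝ) (S M : Matrix D D ℝ) (β : ℝ) (n : ℕ) :
    ∫ x, (S * G B x * (M + β • G B x) ^ n).trace ∂(gam κ) =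
      β * ∑ a ∈ Finset.range n, ∫ x, ∑ j, (S * B j * (M + β • G B x) ^ a * B j *
        (M + β • G B x) ^ (n - 1 - a)).trace ∂(gam κ) := by
  classical
  have hZ : MPoly (fun x : κ → ℝ => M + β • G B x) :=
    (MPoly.const M).add (MPoly.smul (IsPoly.const β) (G_poly B))
  have hf : ∀ j, IsPoly (fun x : κ → ℝ => (S * B j * (M + β • G B x) ^ n).trace) := fun j =>
    ((MPoly.const _).mul (hZ.pow n)).trace
  have e1 : ∀ x : κ → ℝ, (S * G B x * (M + β • G B x) ^ n).trace =
      ∑ j, (∑ i, (Pi.single j 1 : κ → ℝ) i * x i) * (S * B j * (M + β • G B x) ^ n).trace := by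
    intro x
    have : ∀ j, (∑ i, (Pi.single j 1 : κ → ℝ) i * x i) = x j := fun j => by
      simp [Pi.single_apply]
    simp only [this]
    conv_lhs => rw [show S * G B x = ∑ j, x j • (S * B j) by simp [G, Finset.mul_sum]]
    simp [Finset.sum_mul, Matrix.trace_sum, Matrix.trace_smul]
  have hp : ∀ a j, IsPoly (fun x : κ → ℝ => (S * B j * (M + β • G B x) ^ a * B j *
        (M + β • G B x) ^ (n - 1 - a)).trace) := fun a j =>
    ((((MPoly.const _).mul (hZ.pow a)).mul (MPoly.const _)).mul (hZ.pow _)).trace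
  simp only [e1]
  rw [IsPoly.int_sum]
  · have e2 : ∀ j, ∫ x, (∑ i, (Pi.single j 1 : κ → ℝ) i * x i) *
        (S * B j * (M + β • G B x) ^ n).trace ∂(gam κ) =
        ∫ x, β * ∑ a ∈ Finset.range n, (S * B j * (M + β • G B x) ^ a * B j *
        (M + β • G B x) ^ (n - 1 - a)).trace ∂(gam κ) := by
      intro j
      refine stein _ (hf j) fun x => ?_
      have hG : ∀ t : ℝ, G B (x + t • Pi.single j 1) = G B x + t • B j := by
        intro t
        simp [G, add_smul, Finset.sum_add_distrib, Pi.single_apply]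
      simp only [hG]
      have hd : MD (fun t : ℝ => M + β • (G B x + t • B j)) (β • B j) 0 := by
        have : (fun t : ℝ => M + β • (G B x + t • B j)) = fun t => (M + β • G B x) + (β * t) • B j := by
          funext t; rw [smul_add, smul_smul]; abel
        rw [this]
        exact ((MD.const _ _).add (MD.smul ((hasDerivAt_id' (0:ℝ)).const_mul β) _)).congr (by simp)
      refine ((hd.pow n).const_mul (S * B j)).trace.congr_deriv ?_
      simp only [zero_smul, add_zero, Finset.mul_sum, Matrix.trace_sum]
      refine Finset.sum_congr rfl fun a _ => ?_
      simp [Matrix.trace_smul, Matrix.mul_assoc]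
    simp only [e2, integral_const_mul]
    rw [← Finset.mul_sum]
    congr 1
    have e3 : ∀ j, ∫ x, ∑ a ∈ Finset.range n, (S * B j * (M + β • G B x) ^ a * B j *
        (M + β • G B x) ^ (n - 1 - a)).trace ∂(gam κ) = ∑ a ∈ Finset.range n,
        ∫ x, (S * B j * (M + β • G B x) ^ a * B j * (M + β • G B x) ^ (n - 1 - a)).trace ∂(gam κ) :=
      fun j => IsPoly.int_sum _ fun a => hp a j
    simp only [e3]
    rw [Finset.sum_comm]
    exact Finset.sum_congr rfl fun a _ => (IsPoly.int_sum _ fun j => hp a j).symm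
  · exact fun j => (IsPoly.sum _ fun i => (IsPoly.const _).mul (IsPoly.coord i)).mul (hf j)

lemma ibp_mom (B : κ → Matrix D D ℝ) (n : ℕ) :
    mom B (n + 1) = ∑ a ∈ Finset.range n, ∫ x, ∑ j, (B j * G B x ^ a * B j *
        G B x ^ (n - 1 - a)).trace ∂(gam κ) := by
  have := ibp B 1 0 1 n
  simp only [one_mul, zero_add, one_smul] at this
  rw [← this, mom]
  simp only [pow_succ']

lemma ibp_vec (B : κ → Matrix D D ℝ) (n : ℕ) (x y : D → ℝ) :
    bf x (mE (fun g => G B g ^ (n + 1))) y = ∑ a ∈ Finset.range n, ∫ g, ∑ j, bf x (B j * G B g ^ a * B j *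
        G B g ^ (n - 1 - a)) y ∂(gam κ) := by
  have := ibp B (Matrix.vecMulVec y x) 0 1 n
  simp only [one_mul, zero_add, one_smul] at this
  rw [← trace_vec, ← mE_trace ((G_poly B).pow _)]
  simp only [pow_succ', ← trace_vec, ← Matrix.mul_assoc]
  exact this

end PC

namespace PC
set_option linter.unusedSectionVars false

variable {ι κ D : Type} [Fintype ι] [Fintype κ] [Fintype D] [DecidableEq D]

lemma dot_le_nrm (x y : D → ℝ) : |x ⬝ᵥ y| ≤ nrm x * nrm y := by
  have h : ∀ x y : D → ℝ, x ⬝ᵥ y ≤ nrm x * nrm y := fun x y => by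
    have := Real.sum_mul_le_sqrt_mul_sqrt Finset.univ x y
    simpa [nrm, dotProduct, sq] using this
  rw [abs_le]
  refine ⟨?_, h x y⟩
  have := h (-x) y
  have e : nrm (-x) = nrm x := by simp [nrm]
  rw [e, neg_dotProduct] at this
  linarith

/-- operator norm bound as a bilinear form -/
def OB (M : Matrix D D ℝ) (t : ℝ) : Prop := ∀ x y, |bf x M y| ≤ t * (nrm x * nrm y)

open Matrix in
lemma OB.nrm_le {M : Matrix D D ℝ} {t : ℝ} (ht : 0 ≤ t) (h : OB M t) (y : D → ℝ) :
    nrm (M *ᵥ y) ≤ t * nrm y := by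
  have h1 := h (M *ᵥ y) y
  rw [bf, ← nrm_sq, abs_of_nonneg (sq_nonneg _)] at h1
  rcases (nrm_nonneg (M *ᵥ y)).eq_or_lt with h0 | h0
  · rw [← h0]; exact mul_nonneg ht (nrm_nonneg _)
  · nlinarith

lemma Hyp.sum_nrm {B : κ → Matrix D D ℝ} {s v2 : ℝ} (h : Hyp B s v2) (x y : D → ℝ) :
    ∑ j, nrm (Matrix.mulVec (B j) x) * nrm (Matrix.mulVec (B j) y) ≤ s * (nrm x * nrm y) := by
  refine (Real.sum_mul_le_sqrt_mul_sqrt _ _ _).trans ?_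
  simp only [nrm_sq]
  calc _ ≤ √(s * (x ⬝ᵥ x)) * √(s * (y ⬝ᵥ y)) :=
        mul_le_mul (Real.sqrt_le_sqrt (h.hs x)) (Real.sqrt_le_sqrt (h.hs y)) (Real.sqrt_nonneg _)
          (Real.sqrt_nonneg _)
    _ = s * (nrm x * nrm y) := by
        rw [Real.sqrt_mul h.s0, Real.sqrt_mul h.s0]
        unfold nrm
        have := Real.mul_self_sqrt h.s0
        linear_combination (√(x ⬝ᵥ x) * √(y ⬝ᵥ y)) * this

open Matrix in
lemma Hyp.opb {B : κ → Matrix D D ℝ} {s v2 : ℝ} (h : Hyp B s v2) {M : Matrix D D ℝ}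
    {t : ℝ} (ht : 0 ≤ t) (hM : OB M t) (x w : D → ℝ) :
    |∑ j, bf x (B j * M * B j) w| ≤ s * t * (nrm x * nrm w) := by
  have e : ∀ j, bf x (B j * M * B j) w = bf (B j *ᵥ x) M (B j *ᵥ w) := by
    intro j
    unfold bf
    rw [← mulVec_mulVec, ← mulVec_mulVec, dotProduct_mulVec x, ← mulVec_transpose, (h.sym j).eq]
  simp only [e]
  calc _ ≤ ∑ j, t * (nrm (B j *ᵥ x) * nrm (B j *ᵥ w)) :=
        (Finset.abs_sum_le_sum_abs _ _).trans (Finset.sum_le_sum fun j _ => hM _ _)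
    _ = t * ∑ j, (nrm (B j *ᵥ x) * nrm (B j *ᵥ w)) := by rw [Finset.mul_sum]
    _ ≤ t * (s * (nrm x * nrm w)) := mul_le_mul_of_nonneg_left (h.sum_nrm x w) ht
    _ = _ := by ring

open Matrix in
lemma Hyp.opb2 {B : κ → Matrix D D ℝ} {s v2 : ℝ} (h : Hyp B s v2) {M M' : Matrix D D ℝ}
    {t t' : ℝ} (ht : 0 ≤ t) (ht' : 0 ≤ t') (hM : OB M t) (hM' : OB M' t') (x y : D → ℝ) :
    |∑ j, bf x (B j * M * B j * M') y| ≤ s * t * t' * (nrm x * nrm y) := by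
  have e : ∀ j, bf x (B j * M * B j * M') y = bf x (B j * M * B j) (M' *ᵥ y) := by
    intro j
    unfold bf
    rw [← mulVec_mulVec]
  simp only [e]
  refine (h.opb ht hM _ _).trans ?_
  have h1 := hM'.nrm_le ht' y
  have h2 := mul_le_mul_of_nonneg_left h1 (mul_nonneg (mul_nonneg h.s0 ht) (nrm_nonneg x))
  linarith

lemma sum_even_odd (F : ℕ → ℝ) (m : ℕ) : ∑ a ∈ Finset.range (2 * m + 1), F a =
    ∑ i ∈ Finset.range (m + 1), F (2 * i) + ∑ i ∈ Finset.range m, F (2 * i + 1) := by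
  induction m with
  | zero => simp
  | succ m ih =>
    rw [show 2 * (m + 1) + 1 = (2 * m + 1) + 1 + 1 by ring, Finset.sum_range_succ,
      Finset.sum_range_succ, ih, Finset.sum_range_succ _ (m + 1), Finset.sum_range_succ _ m,
      Finset.sum_range_succ _ m]
    ring_nf

/-- Catalan majorant -/
noncomputable def uu (k : ℕ) : ℝ := catalan k * (1 / 64) ^ k

lemma uu_succ (m : ℕ) : uu (m + 1) = (1 / 64) * ∑ i ∈ Finset.range (m + 1), uu i * uu (m - i) := by
  unfold uu
  rw [catalan_succ, Finset.mul_sum, Finset.sum_range]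
  push_cast
  rw [Finset.sum_mul]
  refine Finset.sum_congr rfl fun i _ => ?_
  have h : (1 / 64 : ℝ) ^ (m + 1) = (1 / 64) * ((1 / 64) ^ (i : ℕ) * (1 / 64) ^ (m - i)) := by
    rw [← pow_add, ← pow_succ']
    congr 1
    have := i.2
    omega
  rw [h]; ring

lemma catalan_pos' (k : ℕ) : 1 ≤ catalan k := by
  induction k using Nat.strong_induction_on with
  | _ k ih =>
    cases k with
    | zero => simp
    | succ n =>
      rw [catalan_succ]
      calc 1 ≤ catalan ((0 : Fin n.succ) : ℕ) * catalan (n - ((0 : Fin n.succ) : ℕ)) := by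
            have := ih n (by omega)
            simpa using this
        _ ≤ _ := Finset.single_le_sum (f := fun i : Fin n.succ => catalan i * catalan (n - i))
            (fun i _ => Nat.zero_le _) (Finset.mem_univ 0)

lemma catalan_le (k : ℕ) : catalan k ≤ 4 ^ k := by
  rw [catalan_eq_centralBinom_div]
  refine (Nat.div_le_self _ _).trans ?_
  have := Nat.centralBinom_eq_two_mul_choose k
  rw [this]
  calc (2 * k).choose k ≤ 2 ^ (2 * k) := Nat.choose_le_two_pow _ _
    _ = 4 ^ k := by rw [pow_mul]; norm_num

lemma uu_nonneg (k : ℕ) : 0 ≤ uu k := by unfold uu; positivity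
lemma uu_le (k : ℕ) : uu k ≤ (1 / 16) ^ k := by
  unfold uu
  calc (catalan k : ℝ) * (1 / 64) ^ k ≤ 4 ^ k * (1 / 64) ^ k := by
        gcongr; exact_mod_cast catalan_le k
    _ = (1 / 16) ^ k := by rw [← mul_pow]; norm_num
lemma le_uu (k : ℕ) : (1 / 64) ^ k ≤ uu k := by
  unfold uu
  have : (1:ℝ) ≤ catalan k := by exact_mod_cast catalan_pos' k
  nlinarith [pow_pos (show (0:ℝ) < 1 / 64 by norm_num) k]

lemma moment_OB {B : κ → Matrix D D ℝ} {s v2 : ℝ} (h : Hyp B s v2) (p : ℕ) (hp : 1 ≤ p)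
    (h1 : mom B (2 * p) = 1) (hs : s ≤ 1 / 128) (r : ℕ) (hrp : r ≤ p)
    (hr : ∀ k, k ≤ r → 24 * (k:ℝ) ^ 3 * (s * v2) ≤ (1 / 64) ^ k) (k : ℕ) (hk : k ≤ r) :
    OB (mE (fun x => G B x ^ (2 * k))) (uu k) := by
  induction k using Nat.strong_induction_on with
  | _ k ih =>
    cases k with
    | zero =>
      intro x y
      have : mE (fun x : κ → ℝ => G B x ^ (2 * 0)) = 1 := by
        ext a b
        simp [mE]
      rw [this]
      simpa [bf, uu] using dot_le_nrm x y
    | succ m =>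
      intro x y
      have hth : 0 ≤ s * v2 := mul_nonneg h.s0 h.v0
      have hn : 0 ≤ nrm x * nrm y := mul_nonneg (nrm_nonneg _) (nrm_nonneg _)
      rw [show 2 * (m + 1) = (2 * m + 1) + 1 by ring, ibp_vec]
      have hc : ∀ a ∈ Finset.range (2 * m + 1),
          |∫ g, ∑ j, bf x (B j * G B g ^ a * B j * G B g ^ (2 * m + 1 - 1 - a)) y ∂(gam κ)| ≤
          |∑ i, bf x (B i * mE (fun x => G B x ^ a) * B i * mE (fun x => G B x ^ (2 * m - a))) y| +
            6 * ((m:ℝ) + 1) ^ 2 * (s * v2) * (nrm x * nrm y) := by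
        intro a ha
        have ha' := Finset.mem_range.1 ha
        have := covVec h p hp a (2 * m - a) (by omega) x y
        rw [h1] at this
        rw [show 2 * m + 1 - 1 - a = 2 * m - a by omega]
        have q := abs_sub_abs_le_abs_sub
          (∫ g, ∑ j, bf x (B j * G B g ^ a * B j * G B g ^ (2 * m - a)) y ∂(gam κ))
          (∑ i, bf x (B i * mE (fun x => G B x ^ a) * B i * mE (fun x => G B x ^ (2 * m - a))) y)
        have q2 : (a : ℝ) * ((2 * m - a : ℕ) : ℝ) ≤ (m + 1) ^ 2 := by
          rw [Nat.cast_sub (by omega)]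
          push_cast
          nlinarith [sq_nonneg ((m:ℝ) - a)]
        have q3 := mul_le_mul_of_nonneg_right q2 (mul_nonneg hth hn)
        nlinarith
      refine (Finset.abs_sum_le_sum_abs _ _).trans ((Finset.sum_le_sum hc).trans ?_)
      rw [Finset.sum_add_distrib, sum_even_odd]
      have o1 : ∑ i ∈ Finset.range m, |∑ j, bf x (B j * mE (fun x => G B x ^ (2 * i + 1)) * B j *
          mE (fun x => G B x ^ (2 * m - (2 * i + 1)))) y| = 0 := by
        refine Finset.sum_eq_zero fun i _ => ?_
        rw [mE_odd B (2 * i + 1) ⟨i, rfl⟩]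
        simp [bf]
      have o2 : ∑ i ∈ Finset.range (m + 1), |∑ j, bf x (B j * mE (fun x => G B x ^ (2 * i)) * B j *
          mE (fun x => G B x ^ (2 * m - 2 * i))) y| ≤
          ∑ i ∈ Finset.range (m + 1), s * uu i * uu (m - i) * (nrm x * nrm y) := by
        refine Finset.sum_le_sum fun i hi => ?_
        have hi' := Finset.mem_range.1 hi
        rw [show 2 * m - 2 * i = 2 * (m - i) by omega]
        exact h.opb2 (uu_nonneg _) (uu_nonneg _) (ih i (by omega) (by omega))
          (ih (m - i) (by omega) (by omega)) x y
      have o3 : ∑ i ∈ Finset.range (m + 1), s * uu i * uu (m - i) * (nrm x * nrm y) =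
          s * 64 * uu (m + 1) * (nrm x * nrm y) := by
        rw [uu_succ, ← Finset.sum_mul]
        simp only [mul_assoc, ← Finset.mul_sum]
        ring
      have o4 := hr (m + 1) hk
      have o5 := le_uu (m + 1)
      rw [o1]
      simp only [Finset.sum_const, Finset.card_range, nsmul_eq_mul]
      have o6 : s * 64 * uu (m + 1) ≤ uu (m + 1) / 2 := by
        nlinarith [uu_nonneg (m + 1)]
      have o7 : ((2 * m + 1 : ℕ) : ℝ) * (6 * ((m:ℝ) + 1) ^ 2 * (s * v2)) ≤ uu (m + 1) / 2 := by
        push_cast at o4 ⊢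
        have : (2 * (m:ℝ) + 1) * (6 * ((m:ℝ) + 1) ^ 2 * (s * v2)) ≤
            12 * ((m:ℝ) + 1) ^ 3 * (s * v2) := by
          have : 0 ≤ ((m:ℝ) + 1) ^ 2 * (s * v2) := by positivity
          nlinarith
        linarith
      have o8 := mul_le_mul_of_nonneg_right (add_le_add o6 o7) hn
      linarith

lemma mom_bound {B : κ → Matrix D D ℝ} (hB : ∀ j, (B j).IsSymm) (p q : ℕ) (hq : q ≤ p)
    (hD : Fintype.card D ≤ 2 ^ p) (h1 : mom B (2 * p) = 1) :
    mom B (2 * q) ≤ 2 ^ (p - q) * 2 := by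
  have key : ∀ x, (G B x ^ (2 * q)).trace ≤ 2 ^ (p - q) * (G B x ^ (2 * p)).trace + 2 ^ (p - q) := by
    intro x
    obtain ⟨V, lam, h⟩ := exists_spec _ (G_symm hB x)
    rw [h.trace_pow, h.trace_pow, Finset.mul_sum]
    have : ∀ k, lam k ^ (2 * q) ≤ 2 ^ (p - q) * lam k ^ (2 * p) + (1 / 2) ^ q := by
      intro k
      rw [pow_mul, pow_mul]
      set t := lam k ^ 2
      have ht : 0 ≤ t := sq_nonneg _
      rcases le_total t (1 / 2) with h2 | h2
      · have := pow_le_pow_left₀ ht h2 q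
        have : 0 ≤ (2:ℝ) ^ (p - q) * t ^ p := by positivity
        linarith
      · have e : (2:ℝ) ^ (p - q) * t ^ p = t ^ q * (2 * t) ^ (p - q) := by
          rw [mul_pow]
          conv_lhs => rw [← Nat.sub_add_cancel hq, pow_add t]
          rw [Nat.add_sub_cancel]; ring
        rw [e]
        have : 1 ≤ (2 * t) ^ (p - q) := one_le_pow₀ (by linarith)
        have h3 : 0 ≤ t ^ q := by positivity
        have h4 : (0:ℝ) ≤ (1 / 2) ^ q := by positivity
        nlinarith
    refine (Finset.sum_le_sum fun k _ => this k).trans ?_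
    rw [Finset.sum_add_distrib]
    simp only [Finset.sum_const, Finset.card_univ, nsmul_eq_mul]
    have : (Fintype.card D : ℝ) * (1 / 2) ^ q ≤ 2 ^ (p - q) := by
      calc (Fintype.card D : ℝ) * (1 / 2) ^ q ≤ 2 ^ p * (1 / 2) ^ q := by
            gcongr; exact_mod_cast hD
        _ = 2 ^ (p - q) := by
            conv_lhs => rw [← Nat.sub_add_cancel hq, pow_add, mul_assoc, ← mul_pow]
            simp
    linarith
  have := int_mono ((G_poly B).pow (2 * q)).trace
    (((IsPoly.const _).mul ((G_poly B).pow (2 * p)).trace).add (IsPoly.const _)) key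
  rw [integral_add, integral_const_mul] at this
  · change mom B (2 * q) ≤ _ * mom B (2 * p) + _ at this
    rw [h1] at this
    simp at this
    linarith
  · exact ((IsPoly.const _).mul ((G_poly B).pow (2 * p)).trace).integrable
  · exact (IsPoly.const _).integrable

end PC

namespace PC
set_option linter.unusedSectionVars false
variable {ι κ D : Type} [Fintype ι] [Fintype κ] [Fintype D] [DecidableEq D]

noncomputable def phi (B : κ → Matrix D D ℝ) (m k : ℕ) : ℝ :=
  ∫ x, ∑ i, (B i * G B x ^ k * B i * G B x ^ (2 * m - k)).trace ∂(gam κ)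

lemma phi_poly (B : κ → Matrix D D ℝ) (k l : ℕ) :
    IsPoly (fun x => ∑ i, (B i * G B x ^ k * B i * G B x ^ l).trace) := by
  refine IsPoly.sum _ fun i => ?_
  exact MPoly.trace ((((MPoly.const (B i)).mul ((G_poly B).pow k)).mul (MPoly.const (B i))).mul
    ((G_poly B).pow l))

lemma phi_symm (B : κ → Matrix D D ℝ) (m k : ℕ) (hk : k ≤ 2 * m) :
    phi B m (2 * m - k) = phi B m k := by
  unfold phi
  congr 1
  funext x
  refine Finset.sum_congr rfl fun i _ => ?_
  rw [show 2 * m - (2 * m - k) = k by omega, Matrix.mul_assoc (B i * _), Matrix.trace_mul_comm,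
    ← Matrix.mul_assoc]

lemma phi_err {B : κ → Matrix D D ℝ} {s v2 : ℝ} (h : Hyp B s v2) (p m : ℕ) (hp : p = m + 1)
    (hm : 1 ≤ m)
    (hD : Fintype.card D ≤ 2 ^ p) (h1 : mom B (2 * p) = 1) (k : ℕ) (hk : k ≤ 2 * m) :
    |phi B m k - ∑ i, (B i * mE (fun x => G B x ^ k) * B i *
      mE (fun x => G B x ^ (2 * m - k))).trace| ≤ 64 * (p:ℝ) ^ 2 * (s * v2) := by
  refine (covTr h k (2 * m - k) (2 * (m - 1)) (by omega) (even_two_mul _)).trans ?_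
  have h2 := mom_bound h.sym p (m - 1) (by omega) hD h1
  rw [show p - (m - 1) = 2 by omega] at h2
  have h3 : (k : ℝ) * ((2 * m - k : ℕ) : ℝ) ≤ (p:ℝ) ^ 2 := by
    rw [Nat.cast_sub hk, hp]; push_cast
    nlinarith [sq_nonneg ((k:ℝ) - m), (Nat.cast_nonneg m : (0:ℝ) ≤ m)]
  have h4 : 0 ≤ s * v2 := mul_nonneg h.s0 h.v0
  have h5 : s * v2 * (4 * mom B (2 * (m - 1))) ≤ 32 * (s * v2) := by nlinarith
  have h6 : (0:ℝ) ≤ k * ((2 * m - k : ℕ) : ℝ) := by positivity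
  calc _ ≤ 2 * ((k : ℝ) * ((2 * m - k : ℕ) : ℝ) * (32 * (s * v2))) := by gcongr
    _ ≤ 2 * ((p:ℝ)^2 * (32 * (s * v2))) := by gcongr
    _ = _ := by ring

lemma phi_odd {B : κ → Matrix D D ℝ} {s v2 : ℝ} (h : Hyp B s v2) (p m : ℕ) (hp : p = m + 1)
    (hm : 1 ≤ m)
    (hD : Fintype.card D ≤ 2 ^ p) (h1 : mom B (2 * p) = 1) (k : ℕ) (hk : k ≤ 2 * m) (ho : Odd k) :
    phi B m k ≤ 64 * (p:ℝ) ^ 2 * (s * v2) := by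
  have h2 := phi_err h p m hp hm hD h1 k hk
  rw [mE_odd B k ho] at h2
  simp only [Matrix.mul_zero, Matrix.zero_mul, Matrix.trace_zero, Finset.sum_const_zero,
    sub_zero] at h2
  exact (le_abs_self _).trans h2

lemma phi_small {B : κ → Matrix D D ℝ} {s v2 : ℝ} (h : Hyp B s v2) (p m : ℕ) (hp : p = m + 1)
    (hm : 1 ≤ m)
    (hD : Fintype.card D ≤ 2 ^ p) (h1 : mom B (2 * p) = 1) (j : ℕ) (hj : j ≤ m)
    (hO : OB (mE (fun x => G B x ^ (2 * j))) (uu j)) :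
    phi B m (2 * j) ≤ 4 * s * (1 / 8) ^ j + 64 * (p:ℝ) ^ 2 * (s * v2) := by
  have h2 := phi_err h p m hp hm hD h1 (2 * j) (by omega)
  rw [show 2 * m - 2 * j = 2 * (m - j) by omega] at h2
  set b := mE (fun x => G B x ^ (2 * j)) with hb
  have e : ∑ i, (B i * b * B i * mE (fun x => G B x ^ (2 * (m - j)))).trace =
      ∫ x, ∑ i, (B i * b * B i * G B x ^ (2 * (m - j))).trace ∂(gam κ) := by
    rw [IsPoly.int_sum _ fun i => MPoly.trace ((MPoly.const _).mul ((G_poly B).pow _))]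
    exact Finset.sum_congr rfl fun i _ => (mE_trace ((G_poly B).pow _) _).symm
  have e2 : ∫ x, ∑ i, (B i * b * B i * G B x ^ (2 * (m - j))).trace ∂(gam κ) ≤
      ∫ x, (s * uu j) * (G B x ^ (2 * (m - j))).trace ∂(gam κ) := by
    refine int_mono (IsPoly.sum _ fun i => MPoly.trace ((MPoly.const _).mul ((G_poly B).pow _)))
      ((IsPoly.const _).mul ((G_poly B).pow _).trace) fun x => ?_
    obtain ⟨V, lam, hV⟩ := exists_spec _ (G_symm h.sym x)
    simp only [hV.trace_mul_pow, hV.trace_pow]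
    rw [Finset.sum_comm, Finset.mul_sum]
    refine Finset.sum_le_sum fun k _ => ?_
    rw [← Finset.mul_sum, mul_comm]
    have h3 := h.opb (uu_nonneg j) hO (V k) (V k)
    have h4 : nrm (V k) = 1 := by unfold nrm; rw [hV.on]; simp
    rw [h4] at h3
    have h5 : 0 ≤ lam k ^ (2 * (m - j)) := by rw [pow_mul]; positivity
    have h6 := (le_abs_self _).trans h3
    gcongr
    linarith
  rw [integral_const_mul] at e2
  have h3 := mom_bound h.sym p (m - j) (by omega) hD h1
  rw [show p - (m - j) = j + 1 by omega] at h3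
  have h4 := uu_le j
  have h5 : 0 ≤ mom B (2 * (m - j)) :=
    integral_nonneg fun x => trace_even_nonneg (G_symm h.sym x) _
  have h6 : s * uu j * mom B (2 * (m - j)) ≤ 4 * s * (1 / 8) ^ j := by
    calc _ ≤ s * (1/16)^j * (2 ^ (j+1) * 2) := by
          have := h.s0
          gcongr
      _ = 4 * s * (1 / 8) ^ j := by
          rw [show (1/8 : ℝ) = 1/16 * 2 by norm_num, mul_pow, pow_succ]; ring
  have h7 := (abs_le.1 h2).2
  rw [e] at h7
  change _ ≤ s * uu j * mom B (2 * (m - j)) at e2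
  linarith

lemma mid_ineq {a b : ℝ} (ha : 0 ≤ a) (hb : 0 ≤ b) (u w : ℕ) :
    a ^ u * b ^ w + a ^ w * b ^ u ≤ a ^ (u + w) + b ^ (u + w) := by
  have : 0 ≤ (a ^ u - b ^ u) * (a ^ w - b ^ w) := by
    rcases le_total a b with h | h
    · exact mul_nonneg_of_nonpos_of_nonpos (sub_nonpos.2 (pow_le_pow_left₀ ha h u))
        (sub_nonpos.2 (pow_le_pow_left₀ ha h w))
    · exact mul_nonneg (sub_nonneg.2 (pow_le_pow_left₀ hb h u))
        (sub_nonneg.2 (pow_le_pow_left₀ hb h w))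
  rw [pow_add, pow_add]
  nlinarith

lemma phi_mid {B : κ → Matrix D D ℝ} (hB : ∀ j, (B j).IsSymm) (m r j : ℕ)
    (hr : r ≤ j) (hj : j + r ≤ m) : phi B m (2 * j) ≤ phi B m (2 * r) := by
  have h1 := phi_symm B m (2 * j) (by omega)
  have h2 := phi_symm B m (2 * r) (by omega)
  have h3 : phi B m (2 * j) + phi B m (2 * m - 2 * j) ≤
      phi B m (2 * r) + phi B m (2 * m - 2 * r) := by
    unfold phi
    rw [← integral_add (phi_poly B _ _).integrable (phi_poly B _ _).integrable,
      ← integral_add (phi_poly B _ _).integrable (phi_poly B _ _).integrable]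
    refine int_mono ((phi_poly B _ _).add (phi_poly B _ _)) ((phi_poly B _ _).add (phi_poly B _ _))
      fun x => ?_
    obtain ⟨V, lam, hV⟩ := exists_spec _ (G_symm hB x)
    rw [← Finset.sum_add_distrib, ← Finset.sum_add_distrib]
    refine Finset.sum_le_sum fun i _ => ?_
    simp only [hV.trace_two (hB i), ← Finset.sum_add_distrib]
    refine Finset.sum_le_sum fun a _ => Finset.sum_le_sum fun b _ => ?_
    rw [← add_mul, ← add_mul]
    refine mul_le_mul_of_nonneg_right ?_ (sq_nonneg _)
    obtain ⟨u, rfl⟩ := Nat.exists_eq_add_of_le hr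
    obtain ⟨w, rfl⟩ := Nat.exists_eq_add_of_le hj
    have := mid_ineq (sq_nonneg (lam a)) (sq_nonneg (lam b)) u w
    have h4 : 0 ≤ (lam a ^ 2) ^ r * (lam b ^ 2) ^ r := by positivity
    have h5 := mul_le_mul_of_nonneg_left this h4
    have e1 : 2 * (r + u + r + w) - 2 * (r + u) = 2 * (r + w) := by omega
    have e2 : 2 * (r + u + r + w) - 2 * (r + w) = 2 * (r + u) := by omega
    have e3 : 2 * (r + u + r + w) - 2 * r = 2 * (r + (u + w)) := by omega
    have e4 : 2 * (r + u + r + w) - 2 * (r + (u + w)) = 2 * r := by omega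
    rw [e1, e2, e3, e4]
    simp only [pow_mul, pow_add] at h5 ⊢
    linarith
  linarith

lemma geo8 (n : ℕ) : ∑ j ∈ Finset.range n, (1 / 8 : ℝ) ^ j ≤ 8 / 7 := by
  have : ∑ j ∈ Finset.range n, (1 / 8 : ℝ) ^ j = 8 / 7 - 8 / 7 * (1/8) ^ n := by
    induction n with
    | zero => simp
    | succ n ih => rw [Finset.sum_range_succ, ih, pow_succ]; ring
  rw [this]
  have : (0:ℝ) < (1/8)^n := by positivity
  linarith

lemma core {B : κ → Matrix D D ℝ} {s v2 : ℝ} (h : Hyp B s v2) (p : ℕ) (hp : 2 ≤ p)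
    (hD : Fintype.card D ≤ 2 ^ p) (h1 : mom B (2 * p) = 1) (hs : s ≤ 1 / 128)
    (hth : (p:ℝ) ^ 3 * (s * v2) ≤ 1 / 20000) : False := by
  obtain ⟨m, rfl⟩ : ∃ m, p = m + 1 := ⟨p - 1, by omega⟩
  set p := m + 1 with hpdef
  have hm : 1 ≤ m := by omega
  set r := Nat.clog 8 p with hr
  have hr1 : p ≤ 8 ^ r := Nat.le_pow_clog (by norm_num) p
  have hr2 : 8 ^ r ≤ 8 * p := by
    have := Nat.pow_pred_clog_lt_self (b := 8) (by norm_num) (x := p) (by omega)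
    rw [← hr] at this
    rcases Nat.eq_zero_or_pos r with h0 | h0
    · rw [h0]; omega
    · obtain ⟨q, hq⟩ : ∃ q, r = q + 1 := ⟨r - 1, by omega⟩
      rw [hq] at this ⊢
      simp only [Nat.pred_eq_sub_one, Nat.add_sub_cancel] at this
      rw [pow_succ]; omega
  have hrp : r ≤ p := by
    rw [hr]
    exact Nat.clog_le_of_le_pow (Nat.lt_pow_self (by norm_num)).le
  have hθ : 0 ≤ s * v2 := mul_nonneg h.s0 h.v0
  have hp0 : (0:ℝ) < p := by positivity
  have hcond : ∀ k, k ≤ r → 24 * (k:ℝ) ^ 3 * (s * v2) ≤ (1 / 64) ^ k := by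
    intro k hk
    have hk3 : (k:ℝ) ^ 3 ≤ 8 ^ k := by
      have : k < 2 ^ k := Nat.lt_two_pow_self
      have h' : (k:ℝ) ≤ 2 ^ k := by exact_mod_cast this.le
      calc (k:ℝ)^3 ≤ (2 ^ k)^3 := by gcongr
        _ = 8 ^ k := by rw [← pow_mul, mul_comm, pow_mul]; norm_num
    have hk8 : (8:ℝ) ^ k ≤ 8 * p := by
      calc (8:ℝ)^k ≤ 8 ^ r := pow_le_pow_right₀ (by norm_num) hk
        _ ≤ 8 * p := by exact_mod_cast hr2
    have e : (64:ℝ)^k = 8^k * 8^k := by rw [← mul_pow]; norm_num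
    rw [one_div, inv_pow, ← one_div, le_div_iff₀ (by positivity), e]
    calc 24 * (k:ℝ)^3 * (s * v2) * (8^k * 8^k) ≤ 24 * (8 * p) * (s * v2) * ((8 * p) * (8 * p)) := by
          have := hk3.trans hk8
          gcongr
      _ = 12288 * ((p:ℝ)^3 * (s * v2)) := by ring
      _ ≤ 1 := by linarith
  have hOB := moment_OB h p (by omega) h1 hs r hrp hcond
  set ε := 64 * (p:ℝ) ^ 2 * (s * v2) with hε
  have hs0 := h.s0
  have hε0 : 0 ≤ ε := by positivity
  have hsm : ∀ j, j ≤ m → j ≤ r → phi B m (2 * j) ≤ 4 * s * (1 / 8) ^ j + ε := fun j hj hjr =>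
    phi_small h p m rfl hm hD h1 j hj (hOB j hjr)
  have hall : ∀ j, j ≤ m → phi B m (2 * j) ≤
      4 * s * (1 / 8) ^ j + 4 * s * (1 / 8) ^ (m - j) + 4 * s / p + ε := by
    intro j hj
    have a1 : 0 ≤ 4 * s * (1 / 8) ^ j := by positivity
    have a2 : 0 ≤ 4 * s * (1 / 8) ^ (m - j) := by positivity
    have a3 : 0 ≤ 4 * s / p := by positivity
    by_cases c1 : j ≤ r
    · have := hsm j hj c1
      linarith
    by_cases c2 : m - j ≤ r
    · have := hsm (m - j) (by omega) c2
      rw [show 2 * (m - j) = 2 * m - 2 * j by omega, phi_symm B m _ (by omega)] at this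
      linarith
    · have := phi_mid h.sym m r j (by omega) (by omega)
      have h3 := hsm r (by omega) le_rfl
      have h4 : 4 * s * (1 / 8) ^ r ≤ 4 * s / p := by
        rw [one_div, inv_pow, ← div_eq_mul_inv]
        have : (p:ℝ) ≤ 8 ^ r := by exact_mod_cast hr1
        gcongr
      linarith
  have hodd : ∀ j, j < m → phi B m (2 * j + 1) ≤ ε := fun j hj =>
    phi_odd h p m rfl hm hD h1 _ (by omega) (odd_two_mul_add_one j)
  have h0 := ibp_mom B (2 * m + 1)
  rw [show 2 * m + 1 + 1 = 2 * p by omega, h1] at h0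
  have h0' : 1 = ∑ a ∈ Finset.range (2 * m + 1), phi B m a := h0
  rw [sum_even_odd] at h0'
  have s1 : ∑ i ∈ Finset.range m, phi B m (2 * i + 1) ≤ m * ε := by
    calc _ ≤ ∑ i ∈ Finset.range m, ε := Finset.sum_le_sum fun i hi => hodd i (Finset.mem_range.1 hi)
      _ = m * ε := by simp
  have s2 : ∑ i ∈ Finset.range (m + 1), phi B m (2 * i) ≤
      4 * s * (8 / 7) + 4 * s * (8 / 7) + (4 * s + p * ε) := by
    calc _ ≤ ∑ j ∈ Finset.range (m + 1),
        (4 * s * (1 / 8) ^ j + 4 * s * (1 / 8) ^ (m - j) + 4 * s / p + ε) :=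
          Finset.sum_le_sum fun i hi => hall i (by have := Finset.mem_range.1 hi; omega)
      _ = 4 * s * (∑ j ∈ Finset.range (m + 1), (1 / 8 : ℝ) ^ j) +
          4 * s * (∑ j ∈ Finset.range (m + 1), (1 / 8 : ℝ) ^ (m - j)) + (4 * s + p * ε) := by
          rw [Finset.sum_add_distrib, Finset.sum_add_distrib, Finset.sum_add_distrib,
            ← Finset.mul_sum, ← Finset.mul_sum, Finset.sum_const, Finset.sum_const,
            Finset.card_range, nsmul_eq_mul, nsmul_eq_mul, ← hpdef]
          have : (p:ℝ) * (4 * s / p) = 4 * s := by field_simp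
          rw [this]; ring
      _ ≤ _ := by
          have g1 := geo8 (m + 1)
          have g2 : ∑ j ∈ Finset.range (m + 1), (1 / 8 : ℝ) ^ (m - j) ≤ 8 / 7 := by
            have := Finset.sum_range_reflect (fun j => (1 / 8 : ℝ) ^ j) (m + 1)
            simp only [Nat.add_sub_cancel] at this
            rw [this]; exact g1
          gcongr
  have s3 : (m:ℝ) * ε ≤ p * ε := by
    gcongr; omega
  have s4 : (p:ℝ) * ε = 64 * ((p:ℝ)^3 * (s * v2)) := by rw [hε]; ring
  linarith

lemma G_smul (B : κ → Matrix D D ℝ) (c : ℝ) (x : κ → ℝ) :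
    G (fun j => c • B j) x = c • G B x := by
  unfold G
  rw [Finset.smul_sum]
  exact Finset.sum_congr rfl fun j _ => smul_comm _ _ _

lemma mom_smul (B : κ → Matrix D D ℝ) (c : ℝ) (n : ℕ) :
    mom (fun j => c • B j) n = c ^ n * mom B n := by
  unfold mom
  rw [← integral_const_mul]
  congr 1
  funext x
  rw [G_smul, smul_pow, Matrix.trace_smul, smul_eq_mul]

open Matrix in
lemma Hyp.smul {B : κ → Matrix D D ℝ} {s v2 : ℝ} (h : Hyp B s v2) (c : ℝ) :
    Hyp (fun j => c • B j) (c ^ 2 * s) (c ^ 2 * v2) where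
  sym j := by
    have := (h.sym j).eq
    unfold Matrix.IsSymm
    rw [transpose_smul, this]
  hs y := by
    have := mul_le_mul_of_nonneg_left (h.hs y) (sq_nonneg c)
    rw [mul_assoc]
    refine le_trans (le_of_eq ?_) this
    rw [Finset.mul_sum]
    refine Finset.sum_congr rfl fun j _ => ?_
    rw [smul_mulVec, smul_dotProduct, dotProduct_smul, smul_eq_mul, smul_eq_mul]
    ring
  hv a := by
    have := mul_le_mul_of_nonneg_left (h.hv a) (sq_nonneg c)
    rw [mul_assoc]
    refine le_trans (le_of_eq ?_) this
    rw [Finset.mul_sum]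
    refine Finset.sum_congr rfl fun i _ => ?_
    rw [Finset.mul_sum]
    refine Finset.sum_congr rfl fun j _ => ?_
    rw [G_smul, Matrix.smul_apply, smul_eq_mul]
    ring
  s0 := mul_nonneg (sq_nonneg c) h.s0
  v0 := mul_nonneg (sq_nonneg c) h.v0

/-- The moment theorem. -/
theorem moment {B : κ → Matrix D D ℝ} {s v2 : ℝ} (h : Hyp B s v2) (p : ℕ) (hp : 2 ≤ p)
    (hD : Fintype.card D ≤ 2 ^ p) {R : ℝ} (hR : 0 < R) (h1 : 128 * s ≤ R ^ 2)
    (h2 : 20000 * ((p:ℝ) ^ 3 * (s * v2)) ≤ R ^ 4) : mom B (2 * p) ≤ R ^ (2 * p) := by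
  by_contra hc
  push Not at hc
  set M := mom B (2 * p)
  have hM : 0 < M := lt_trans (by positivity) hc
  set ρ := M ^ ((1:ℝ) / (2 * p : ℕ)) with hρ
  have hρp : ρ ^ (2 * p) = M := by
    rw [hρ, ← Real.rpow_natCast, ← Real.rpow_mul hM.le]
    have : ((2 * p : ℕ) : ℝ) ≠ 0 := by positivity
    rw [one_div, inv_mul_cancel₀ this, Real.rpow_one]
  have hρ0 : 0 < ρ := Real.rpow_pos_of_pos hM _
  have hRρ : R < ρ := by
    by_contra hh
    push Not at hh
    have := pow_le_pow_left₀ hρ0.le hh (2 * p)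
    linarith
  refine core (h.smul ρ⁻¹) p hp hD ?_ ?_ ?_
  · rw [mom_smul, inv_pow, hρp]
    exact inv_mul_cancel₀ hM.ne'
  · have : R ^ 2 ≤ ρ ^ 2 := by gcongr
    rw [inv_pow, inv_mul_le_iff₀ (by positivity)]
    linarith
  · have : R ^ 4 ≤ ρ ^ 4 := by gcongr
    have e : (p:ℝ) ^ 3 * (ρ⁻¹ ^ 2 * s * (ρ⁻¹ ^ 2 * v2)) = (ρ ^ 4)⁻¹ * ((p:ℝ) ^ 3 * (s * v2)) := by
      rw [inv_pow]
      field_simp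
    rw [e, inv_mul_le_iff₀ (by positivity)]
    linarith
end PC

namespace PC
set_option linter.unusedSectionVars false
variable {ι κ D : Type} [Fintype ι] [Fintype κ] [Fintype D] [DecidableEq D]

lemma cont_int_aux {τ : Type} (Q : MvPolynomial (τ ⊕ ι) ℝ) (w : (ι → ℝ) → ℝ) (hw : IsPoly w) :
    (∀ z : τ → ℝ, IsPoly (fun x : ι → ℝ => MvPolynomial.eval (Sum.elim z x) Q)) ∧
    Continuous (fun z : τ → ℝ => ∫ x, w x * MvPolynomial.eval (Sum.elim z x) Q ∂(gam ι)) := by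
  induction Q using MvPolynomial.induction_on generalizing w with
  | C a =>
    simp only [MvPolynomial.eval_C]
    exact ⟨fun z => IsPoly.const a, continuous_const⟩
  | add P Q hP hQ =>
    have h1 : ∀ z : τ → ℝ, IsPoly (fun x : ι → ℝ => MvPolynomial.eval (Sum.elim z x) P) := (hP w hw).1
    have h2 : ∀ z : τ → ℝ, IsPoly (fun x : ι → ℝ => MvPolynomial.eval (Sum.elim z x) Q) := (hQ w hw).1
    simp only [map_add, mul_add]
    refine ⟨fun z => (h1 z).add (h2 z), ?_⟩
    have e : (fun z : τ → ℝ => ∫ x, (w x * MvPolynomial.eval (Sum.elim z x) P +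
        w x * MvPolynomial.eval (Sum.elim z x) Q) ∂(gam ι)) = fun z =>
        (∫ x, w x * MvPolynomial.eval (Sum.elim z x) P ∂(gam ι)) +
        ∫ x, w x * MvPolynomial.eval (Sum.elim z x) Q ∂(gam ι) := by
      funext z
      exact integral_add (hw.mul (h1 z)).integrable (hw.mul (h2 z)).integrable
    rw [e]
    exact (hP w hw).2.add (hQ w hw).2
  | mul_X P i hP =>
    simp only [map_mul, MvPolynomial.eval_X]
    rcases i with i | i
    · simp only [Sum.elim_inl]
      refine ⟨fun z => ((hP w hw).1 z).mul (IsPoly.const _), ?_⟩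
      have e : (fun z : τ → ℝ => ∫ x, w x * (MvPolynomial.eval (Sum.elim z x) P * z i) ∂(gam ι)) =
          fun z => (∫ x, w x * MvPolynomial.eval (Sum.elim z x) P ∂(gam ι)) * z i := by
        funext z
        rw [← integral_mul_const]
        congr 1; funext x; ring
      rw [e]
      exact (hP w hw).2.mul (continuous_apply i)
    · simp only [Sum.elim_inr]
      refine ⟨fun z => ((hP w hw).1 z).mul (IsPoly.coord i), ?_⟩
      have := (hP (fun x => w x * x i) (hw.mul (IsPoly.coord i))).2
      refine this.congr fun z => ?_
      congr 1; funext x; ring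

lemma cont_int {τ : Type} {F : (τ ⊕ ι → ℝ) → ℝ} (hF : IsPoly F) :
    Continuous (fun z : τ → ℝ => ∫ x, F (Sum.elim z x) ∂(gam ι)) := by
  obtain ⟨Q, hQ⟩ := hF
  have := (cont_int_aux Q (fun _ => 1) (IsPoly.const 1)).2
  simpa [hQ] using this

noncomputable def Psi (B : κ → Matrix D D ℝ) (n : ℕ) (β : ℝ) (z : κ → ℝ) : ℝ :=
  ∫ x, ((G B z + β • G B x) ^ n).trace ∂(gam κ)

lemma Psi_cont_aux (B : κ → Matrix D D ℝ) (n : ℕ) : IsPoly (fun y : (Unit ⊕ κ) ⊕ κ → ℝ =>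
    ((G B (fun j => y (.inl (.inr j))) + y (.inl (.inl ())) • G B (fun j => y (.inr j))) ^ n).trace) := by
  have h1 := G_comp_poly B (fun j : κ => (Sum.inl (Sum.inr j) : (Unit ⊕ κ) ⊕ κ))
  have h2 := G_comp_poly B (fun j : κ => (Sum.inr j : (Unit ⊕ κ) ⊕ κ))
  have h3 := MPoly.smul (IsPoly.coord (Sum.inl (Sum.inl ()) : (Unit ⊕ κ) ⊕ κ)) h2
  exact ((h1.add h3).pow n).trace

lemma Psi_cont (B : κ → Matrix D D ℝ) (n : ℕ) :
    Continuous (fun q : ℝ × (κ → ℝ) => Psi B n q.1 q.2) := by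
  have h1 := cont_int (Psi_cont_aux B n)
  have h2 : Continuous (fun q : ℝ × (κ → ℝ) => (Sum.elim (fun _ => q.1) q.2 : Unit ⊕ κ → ℝ)) := by
    refine continuous_pi fun i => ?_
    rcases i with i | i
    · exact continuous_fst
    · exact (continuous_apply i).comp continuous_snd
  have h3 := h1.comp h2
  simp only [Function.comp_def, Sum.elim_inl, Sum.elim_inr] at h3
  exact h3

noncomputable def ZZ (B : κ → Matrix D D ℝ) (M U : Matrix D D ℝ) (α β : ℝ) (y : Fin 2 ⊕ κ → ℝ) :
    Matrix D D ℝ :=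
  M + (α * y (.inl 1)) • U + (β * y (.inl 0)) • G B (fun j => y (.inr j))

noncomputable def WW (B : κ → Matrix D D ℝ) (U : Matrix D D ℝ) (α β : ℝ) (y : Fin 2 ⊕ κ → ℝ) :
    Matrix D D ℝ :=
  (α * y (.inl 0)) • U + (-(β * y (.inl 1))) • G B (fun j => y (.inr j))

lemma ZZ_poly (B : κ → Matrix D D ℝ) (M U : Matrix D D ℝ) (α β : ℝ) : MPoly (ZZ B M U α β) :=
  ((MPoly.const M).add (MPoly.smul ((IsPoly.const α).mul (IsPoly.coord _)) (MPoly.const U))).add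
    (MPoly.smul ((IsPoly.const β).mul (IsPoly.coord _)) (G_comp_poly B _))
lemma WW_poly (B : κ → Matrix D D ℝ) (U : Matrix D D ℝ) (α β : ℝ) : MPoly (WW B U α β) :=
  (MPoly.smul ((IsPoly.const α).mul (IsPoly.coord _)) (MPoly.const U)).add
    (MPoly.smul ((IsPoly.const β).mul (IsPoly.coord _)).neg (G_comp_poly B _))

lemma ZZ_tr (B : κ → Matrix D D ℝ) (M U : Matrix D D ℝ) (α β θ : ℝ) (x : κ → ℝ) :
    ZZ B M U α β (tr θ x) = M + (α * Real.sin θ) • U + (β * Real.cos θ) • G B x := rfl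
lemma WW_tr (B : κ → Matrix D D ℝ) (U : Matrix D D ℝ) (α β θ : ℝ) (x : κ → ℝ) :
    WW B U α β (tr θ x) = (α * Real.cos θ) • U + (-(β * Real.sin θ)) • G B x := rfl

lemma ZZ_deriv (B : κ → Matrix D D ℝ) (M U : Matrix D D ℝ) (α β θ : ℝ) (x : κ → ℝ) :
    MD (fun θ => ZZ B M U α β (tr θ x)) (WW B U α β (tr θ x)) θ := by
  simp only [ZZ_tr, WW_tr]
  refine (((MD.const M θ).add (MD.smul ((Real.hasDerivAt_sin θ).const_mul α) U)).add
    (MD.smul ((Real.hasDerivAt_cos θ).const_mul β) (G B x))).congr ?_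
  rw [zero_add, mul_neg]

lemma WW_deriv (B : κ → Matrix D D ℝ) (U : Matrix D D ℝ) (α β θ : ℝ) (x : κ → ℝ) :
    MD (fun θ => WW B U α β (tr θ x))
      ((-(α * Real.sin θ)) • U + (-(β * Real.cos θ)) • G B x) θ := by
  simp only [WW_tr]
  refine ((MD.smul ((Real.hasDerivAt_cos θ).const_mul α) U).add
    (MD.smul ((Real.hasDerivAt_sin θ).const_mul β).fun_neg (G B x))).congr ?_
  rw [mul_neg]

lemma pow_deriv_trace (X W : Matrix D D ℝ) (n : ℕ) :
    (∑ i ∈ Finset.range n, X ^ i * W * X ^ (n - 1 - i)).trace = n * (X ^ (n - 1) * W).trace := by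
  rw [Matrix.trace_sum]
  have : ∀ i ∈ Finset.range n, (X ^ i * W * X ^ (n - 1 - i)).trace = (X ^ (n - 1) * W).trace := by
    intro i hi
    rw [Matrix.trace_mul_comm, ← Matrix.mul_assoc, ← pow_add]
    congr 3
    have := Finset.mem_range.1 hi
    omega
  rw [Finset.sum_congr rfl this]
  simp

noncomputable def psi (B : κ → Matrix D D ℝ) (M U : Matrix D D ℝ) (α β : ℝ) (n : ℕ) (θ : ℝ) : ℝ :=
  ∫ x, (ZZ B M U α β (tr θ x) ^ n).trace ∂(gam κ)

noncomputable def psi1 (B : κ → Matrix D D ℝ) (M U : Matrix D D ℝ) (α β : ℝ) (n : ℕ) (θ : ℝ) : ℝ :=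
  ∫ x, (ZZ B M U α β (tr θ x) ^ (n - 1) * WW B U α β (tr θ x)).trace ∂(gam κ)

lemma psi_hd (B : κ → Matrix D D ℝ) (M U : Matrix D D ℝ) (α β : ℝ) (n : ℕ) (θ : ℝ) :
    HasDerivAt (psi B M U α β n) (n * psi1 B M U α β n θ) θ := by
  have := diff_int (F := fun y => (ZZ B M U α β y ^ n).trace) ((ZZ_poly B M U α β).pow n).trace
    (f' := fun θ x => n * (ZZ B M U α β (tr θ x) ^ (n - 1) * WW B U α β (tr θ x)).trace)
    (fun θ x => (((ZZ_deriv B M U α β θ x).pow n).trace).congr_deriv (pow_deriv_trace _ _ _)) θ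
  refine this.congr_deriv ?_
  rw [integral_const_mul]
  rfl

/-- second order form -/
noncomputable def D2 (n : ℕ) (Z U : Matrix D D ℝ) : ℝ :=
  ∑ a ∈ Finset.range (n - 1), (U * Z ^ a * U * Z ^ (n - 1 - 1 - a)).trace

lemma D2_poly {X : (κ → ℝ) → Matrix D D ℝ} (hX : MPoly X) (n : ℕ) (U : Matrix D D ℝ) :
    IsPoly (fun x => D2 n (X x) U) := by
  refine IsPoly.sum _ fun a => MPoly.trace ?_
  exact (((MPoly.const U).mul (hX.pow a)).mul (MPoly.const U)).mul (hX.pow _)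

lemma psi1_hd (B : κ → Matrix D D ℝ) (M U : Matrix D D ℝ) (α β : ℝ) (n : ℕ) :
    HasDerivAt (psi1 B M U α β n)
      (α ^ 2 * (∫ x, D2 n (M + β • G B x) U ∂(gam κ)) -
        β ^ 2 * ∑ j, ∫ x, D2 n (M + β • G B x) (B j) ∂(gam κ)) 0 := by
  have hZ : MPoly (fun x : κ → ℝ => M + β • G B x) :=
    (MPoly.const M).add (MPoly.smul (IsPoly.const β) (G_poly B))
  have := diff_int (F := fun y => (ZZ B M U α β y ^ (n - 1) * WW B U α β y).trace)
    (((ZZ_poly B M U α β).pow (n - 1)).mul (WW_poly B U α β)).trace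
    (fun θ x => (((ZZ_deriv B M U α β θ x).pow (n - 1)).mul (WW_deriv B U α β θ x)).trace) 0
  refine this.congr_deriv ?_
  simp only [ZZ_tr, WW_tr, Real.sin_zero, Real.cos_zero, mul_zero, mul_one, zero_smul, add_zero,
    neg_zero, zero_add]
  have e1 : ∀ x : κ → ℝ, ((∑ i ∈ Finset.range (n - 1), (M + β • G B x) ^ i * (α • U) *
      (M + β • G B x) ^ (n - 1 - 1 - i)) * (α • U) +
      (M + β • G B x) ^ (n - 1) * (-β • G B x)).trace =
      α ^ 2 * D2 n (M + β • G B x) U - β * (1 * G B x * (M + β • G B x) ^ (n - 1)).trace := by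
    intro x
    rw [Matrix.trace_add, Finset.sum_mul, Matrix.trace_sum, D2, Finset.mul_sum, Matrix.one_mul,
      sub_eq_add_neg]
    congr 1
    · refine Finset.sum_congr rfl fun i _ => ?_
      rw [Matrix.trace_mul_comm]
      simp only [Matrix.smul_mul, Matrix.mul_smul, Matrix.trace_smul, smul_eq_mul, Matrix.mul_assoc]
      ring
    · rw [Matrix.trace_mul_comm]
      simp only [Matrix.smul_mul, Matrix.trace_smul, smul_eq_mul]
      ring
  simp only [e1]
  have p1 : IsPoly (fun x : κ → ℝ => (1 * G B x * (M + β • G B x) ^ (n - 1)).trace) :=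
    MPoly.trace (((MPoly.const 1).mul (G_poly B)).mul (hZ.pow _))
  rw [integral_sub ((IsPoly.const _).mul (D2_poly hZ n U)).integrable
    ((IsPoly.const _).mul p1).integrable, integral_const_mul, integral_const_mul, ibp]
  congr 1
  rw [← mul_assoc, ← sq]
  congr 1
  have p2 : ∀ j a, IsPoly (fun x : κ → ℝ => (1 * B j * (M + β • G B x) ^ a * B j *
        (M + β • G B x) ^ (n - 1 - 1 - a)).trace) := fun j a =>
    MPoly.trace ((((MPoly.const _).mul (hZ.pow a)).mul (MPoly.const _)).mul (hZ.pow _))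
  simp only [D2]
  simp only [Matrix.one_mul] at p2 ⊢
  rw [← IsPoly.int_sum _ fun a => IsPoly.sum _ fun j => p2 j a,
    ← IsPoly.int_sum _ fun j => IsPoly.sum _ fun a => p2 j a]
  congr 1
  funext x
  exact Finset.sum_comm

lemma psi1_zero (B : κ → Matrix D D ℝ) (M U : Matrix D D ℝ) (α β : ℝ) (n : ℕ) :
    psi1 B M U α β n 0 = α * (U * mE (fun x => (M + β • G B x) ^ (n - 1))).trace := by
  have hZ : MPoly (fun x : κ → ℝ => M + β • G B x) :=
    (MPoly.const M).add (MPoly.smul (IsPoly.const β) (G_poly B))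
  unfold psi1
  rw [← mE_trace (hZ.pow (n - 1)), ← integral_const_mul]
  congr 1
  funext x
  simp only [ZZ_tr, WW_tr, Real.sin_zero, Real.cos_zero, mul_zero, mul_one, zero_smul, add_zero,
    neg_zero]
  rw [Matrix.trace_mul_comm, Matrix.smul_mul, Matrix.trace_smul, smul_eq_mul]

/-- local max along the curve -/
lemma psi_local (B : κ → Matrix D D ℝ) (M U : Matrix D D ℝ) (α β δ : ℝ) (n : ℕ)
    (h0 : (U * mE (fun x => (M + β • G B x) ^ (n - 1))).trace = 0) (hδ : 0 < δ)
    (hβ : 0 < β)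
    (h1 : α ^ 2 * (∫ x, D2 n (M + β • G B x) U ∂(gam κ)) ≤
        β ^ 2 * ∑ j, ∫ x, D2 n (M + β • G B x) (B j) ∂(gam κ)) :
    ∀ᶠ θ in nhds (0:ℝ), psi B M U α β n θ ≤ psi B M U α β n 0 + δ * β ^ 2 * Real.sin θ ^ 2 := by
  set g : ℝ → ℝ := fun θ => psi B M U α β n θ - δ * β ^ 2 * Real.sin θ ^ 2 with hg
  have hd : ∀ θ, HasDerivAt g (n * psi1 B M U α β n θ -
      δ * β ^ 2 * (2 * Real.sin θ * Real.cos θ)) θ := by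
    intro θ
    refine (psi_hd B M U α β n θ).fun_sub ((((Real.hasDerivAt_sin θ).fun_pow 2).const_mul
      (δ * β ^ 2)).congr_deriv ?_)
    simp
  have hd' : deriv g = fun θ => n * psi1 B M U α β n θ -
      δ * β ^ 2 * (2 * Real.sin θ * Real.cos θ) := funext fun θ => (hd θ).deriv
  have hmax : IsLocalMax g 0 := by
    apply isLocalMax_of_deriv_deriv_neg
    · rw [hd']
      have h2 := ((psi1_hd B M U α β n).const_mul (n:ℝ)).fun_sub
        ((((Real.hasDerivAt_sin 0).const_mul 2).fun_mul (Real.hasDerivAt_cos 0)).const_mul (δ * β ^ 2))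
      rw [h2.deriv]
      simp only [Real.sin_zero, Real.cos_zero]
      have h3 : (0:ℝ) ≤ n := Nat.cast_nonneg n
      have h4 : 0 < δ * β ^ 2 := by positivity
      have h5 := mul_nonneg h3 (sub_nonneg.2 h1)
      nlinarith
    · rw [hd']
      simp [psi1_zero, h0]
    · exact (hd 0).continuousAt
  filter_upwards [hmax] with θ hθ
  simp only [hg, Real.sin_zero] at hθ
  linarith

lemma geom_nonneg (a b : ℝ) (m : ℕ) : 0 ≤ ∑ c ∈ Finset.range (2 * m + 1), a ^ c * b ^ (2 * m - c) := by
  by_cases h : a = b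
  · subst h
    refine Finset.sum_nonneg fun c hc => ?_
    rw [← pow_add, show c + (2 * m - c) = 2 * m by have := Finset.mem_range.1 hc; omega, pow_mul]
    positivity
  · have e := geom_sum₂_mul a b (2 * m + 1)
    simp only [show ∀ c, 2 * m + 1 - 1 - c = 2 * m - c by intro c; omega] at e
    have hmono : StrictMono (fun x : ℝ => x ^ (2 * m + 1)) := Odd.strictMono_pow (odd_two_mul_add_one m)
    rcases lt_or_gt_of_ne h with h1 | h1
    · have := hmono h1
      simp only at this
      by_contra hc
      push Not at hc
      nlinarith
    · have := hmono h1
      simp only at this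
      by_contra hc
      push Not at hc
      nlinarith

lemma D2_spec {Z : Matrix D D ℝ} {V lam} (h : Spec Z V lam) {U : Matrix D D ℝ} (hU : U.IsSymm)
    (n : ℕ) : D2 n Z U = ∑ a, ∑ b, (∑ c ∈ Finset.range (n - 1), lam a ^ c * lam b ^ (n - 1 - 1 - c)) *
      (bf (V a) U (V b)) ^ 2 := by
  unfold D2
  simp only [h.trace_two hU]
  rw [Finset.sum_comm]
  refine Finset.sum_congr rfl fun a _ => ?_
  rw [Finset.sum_comm]
  refine Finset.sum_congr rfl fun b _ => ?_
  rw [Finset.sum_mul]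

lemma bf_G (B : κ → Matrix D D ℝ) (u : κ → ℝ) (x y : D → ℝ) :
    bf x (G B u) y = ∑ j, u j * bf x (B j) y := by
  unfold bf G
  rw [Matrix.sum_mulVec, dotProduct_sum]
  refine Finset.sum_congr rfl fun j _ => ?_
  rw [Matrix.smul_mulVec, dotProduct_smul, smul_eq_mul]

lemma D2_bessel {B : κ → Matrix D D ℝ} (hB : ∀ j, (B j).IsSymm) {Z : Matrix D D ℝ} (hZ : Z.IsSymm)
    (p : ℕ) (hp : 1 ≤ p) {k : ℕ} {e : Fin k → EuclideanSpace ℝ κ} (he : Orthonormal ℝ e) :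
    ∑ l, D2 (2 * p) Z (G B (e l)) ≤ ∑ j, D2 (2 * p) Z (B j) := by
  obtain ⟨V, lam, h⟩ := exists_spec Z hZ
  simp only [D2_spec h (G_symm hB _), D2_spec h (hB _)]
  rw [Finset.sum_comm, Finset.sum_comm (γ := κ)]
  refine Finset.sum_le_sum fun a _ => ?_
  rw [Finset.sum_comm, Finset.sum_comm (γ := κ)]
  refine Finset.sum_le_sum fun b _ => ?_
  rw [← Finset.mul_sum, ← Finset.mul_sum]
  refine mul_le_mul_of_nonneg_left ?_ ?_
  · set c : EuclideanSpace ℝ κ := WithLp.toLp 2 (fun j => bf (V a) (B j) (V b)) with hc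
    have := he.sum_inner_products_le c (s := Finset.univ)
    rw [EuclideanSpace.norm_sq_eq] at this
    simp only [Real.norm_eq_abs, sq_abs] at this
    refine le_trans (le_of_eq ?_) this
    refine Finset.sum_congr rfl fun l _ => ?_
    rw [bf_G, PiLp.inner_apply]
    congr 1
    refine Finset.sum_congr rfl fun j _ => ?_
    simp [hc, mul_comm]
  · obtain ⟨m, rfl⟩ : ∃ m, p = m + 1 := ⟨p - 1, by omega⟩
    exact geom_nonneg _ _ m
end PC

namespace PC
set_option linter.unusedSectionVars false
variable {ι κ D : Type} [Fintype ι] [Fintype κ] [Fintype D] [DecidableEq D]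

noncomputable def Lh (h : κ → ι → ℝ) (z : κ → ℝ) (i : ι) : ℝ := ∑ j, z j * h j i

lemma Lh_add (h : κ → ι → ℝ) (z w : κ → ℝ) (i : ι) : Lh h (z + w) i = Lh h z i + Lh h w i := by
  simp [Lh, add_mul, Finset.sum_add_distrib]
lemma Lh_smul (h : κ → ι → ℝ) (c : ℝ) (w : κ → ℝ) (i : ι) : Lh h (c • w) i = c * Lh h w i := by
  simp [Lh, Finset.mul_sum, mul_assoc]
lemma G_add (B : κ → Matrix D D ℝ) (z w : κ → ℝ) : G B (z + w) = G B z + G B w := by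
  simp [G, add_smul, Finset.sum_add_distrib]
lemma G_smul' (B : κ → Matrix D D ℝ) (c : ℝ) (w : κ → ℝ) : G B (c • w) = c • G B w := by
  simp [G, Finset.smul_sum, smul_smul]
lemma Lh_cont (h : κ → ι → ℝ) (i : ι) : Continuous (fun z : κ → ℝ => Lh h z i) := by
  unfold Lh; fun_prop

noncomputable def PhiMap (h : κ → ι → ℝ) (T : Finset ι) (z : κ → ℝ) (B : κ → Matrix D D ℝ)
    (S : Matrix D D ℝ) : EuclideanSpace ℝ κ →ₗ[ℝ] (T → ℝ) × ℝ × ℝ where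
  toFun u := (fun i => Lh h u i, ∑ j, u j * z j, (G B u * S).trace)
  map_add' u w := by
    refine Prod.ext (funext fun i => ?_) (Prod.ext ?_ ?_)
    · show Lh h (u + w) i = Lh h u i + Lh h w i
      rw [Lh_add]
    · simp [add_mul, Finset.sum_add_distrib]
    · show (G B (u + w) * S).trace = (G B u * S).trace + (G B w * S).trace
      rw [G_add, Matrix.add_mul, Matrix.trace_add]
  map_smul' c u := by
    refine Prod.ext (funext fun i => ?_) (Prod.ext ?_ ?_)
    · show Lh h (c • u) i = c * Lh h u i
      rw [Lh_smul]
    · simp [Finset.mul_sum, mul_assoc]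
    · show (G B (c • u) * S).trace = c * (G B u * S).trace
      rw [G_smul', Matrix.smul_mul, Matrix.trace_smul, smul_eq_mul]

lemma exists_dir (h : κ → ι → ℝ) (T : Finset ι) (z : κ → ℝ) {B : κ → Matrix D D ℝ}
    (hB : ∀ j, (B j).IsSymm) (S M : Matrix D D ℝ) (hM : M.IsSymm) (β : ℝ) (p : ℕ) (hp : 1 ≤ p)
    (hT : T.card + 2 < Fintype.card κ) :
    ∃ u : κ → ℝ, (∀ i ∈ T, Lh h u i = 0) ∧ ∑ j, u j * z j = 0 ∧ (G B u * S).trace = 0 ∧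
      ∑ j, u j ^ 2 = 1 ∧
      ((Fintype.card κ : ℝ) - T.card - 2) * (∫ x, D2 (2 * p) (M + β • G B x) (G B u) ∂(gam κ)) ≤
        ∑ j, ∫ x, D2 (2 * p) (M + β • G B x) (B j) ∂(gam κ) := by
  have hZ : MPoly (fun x : κ → ℝ => M + β • G B x) :=
    (MPoly.const M).add (MPoly.smul (IsPoly.const β) (G_poly B))
  have hZs : ∀ x : κ → ℝ, (M + β • G B x).IsSymm := fun x => by
    unfold Matrix.IsSymm
    rw [Matrix.transpose_add, Matrix.transpose_smul, hM.eq, (G_symm hB x).eq]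
  set Φ := PhiMap h T z B S with hΦ
  set H := LinearMap.ker Φ with hH
  have hk : Fintype.card κ ≤ Module.finrank ℝ H + (T.card + 2) := by
    have h1 := LinearMap.finrank_range_add_finrank_ker Φ
    have h2 := Submodule.finrank_le (LinearMap.range Φ)
    have h3 : Module.finrank ℝ ((T → ℝ) × ℝ × ℝ) = T.card + 2 := by
      simp
    rw [finrank_euclideanSpace] at h1
    change _ + Module.finrank ℝ H = _ at h1
    rw [h3] at h2
    omega
  set k := Module.finrank ℝ H with hkdef
  set e : Fin k → EuclideanSpace ℝ κ := fun l => (stdOrthonormalBasis ℝ H l : EuclideanSpace ℝ κ)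
    with he
  have heo : Orthonormal ℝ e :=
    (stdOrthonormalBasis ℝ H).orthonormal.comp_linearIsometry H.subtypeₗᵢ
  set Q : Matrix D D ℝ → ℝ := fun U => ∫ x, D2 (2 * p) (M + β • G B x) U ∂(gam κ) with hQ
  have hk0 : 0 < k := by omega
  have hsum : ∑ l, Q (G B (e l)) ≤ ∑ j, Q (B j) := by
    rw [hQ]
    simp only
    rw [← IsPoly.int_sum _ fun l => D2_poly hZ _ _, ← IsPoly.int_sum _ fun j => D2_poly hZ _ _]
    refine int_mono (IsPoly.sum _ fun l => D2_poly hZ _ _) (IsPoly.sum _ fun l => D2_poly hZ _ _)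
      fun x => ?_
    exact D2_bessel hB (hZs x) p hp heo
  have hQ0 : ∀ l, 0 ≤ Q (G B (e l)) := by
    intro l
    refine integral_nonneg fun x => ?_
    obtain ⟨V, lam, hV⟩ := exists_spec _ (hZs x)
    rw [D2_spec hV (G_symm hB _)]
    refine Finset.sum_nonneg fun a _ => Finset.sum_nonneg fun b _ => mul_nonneg ?_ (sq_nonneg _)
    obtain ⟨m, rfl⟩ : ∃ m, p = m + 1 := ⟨p - 1, by omega⟩
    exact geom_nonneg _ _ m
  obtain ⟨l, -, hl⟩ := Finset.exists_le_of_sum_le (s := (Finset.univ : Finset (Fin k)))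
    (f := fun l => Q (G B (e l))) (g := fun _ => (∑ j, Q (B j)) / k)
    ⟨⟨0, hk0⟩, Finset.mem_univ _⟩ (by
      rw [Finset.sum_const, Finset.card_univ, Fintype.card_fin, nsmul_eq_mul]
      have : (k:ℝ) ≠ 0 := by positivity
      field_simp
      exact hsum)
  have hmem : Φ (e l) = 0 := (stdOrthonormalBasis ℝ H l).2
  have m1 : (fun i : T => Lh h (e l) i) = 0 := congrArg Prod.fst hmem
  have m2 : ∑ j, e l j * z j = 0 := congrArg (fun q => q.2.1) hmem
  have m3 : (G B (e l) * S).trace = 0 := congrArg (fun q => q.2.2) hmem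
  refine ⟨e l, fun i hi => congrFun m1 ⟨i, hi⟩, m2, m3, ?_, ?_⟩
  · have := heo.1 l
    have h2 := EuclideanSpace.norm_sq_eq (e l)
    rw [this] at h2
    simp only [Real.norm_eq_abs, sq_abs] at h2
    rw [← h2]; norm_num
  · have hkr : ((Fintype.card κ : ℝ) - T.card - 2) ≤ k := by
      have : (Fintype.card κ : ℝ) ≤ k + (T.card + 2) := by exact_mod_cast hk
      linarith
    have hkpos : (0:ℝ) < k := by exact_mod_cast hk0
    have h3 := mul_le_mul_of_nonneg_right hkr (hQ0 l)
    rw [le_div_iff₀ hkpos] at hl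
    simp only [hQ] at hl h3 ⊢
    linarith

theorem walk (h : κ → ι → ℝ) (hiso : ∀ z : κ → ℝ, ∑ i, Lh h z i ^ 2 = ∑ j, z j ^ 2)
    {B : κ → Matrix D D ℝ} (hB : ∀ j, (B j).IsSymm) (p : ℕ) (hp : 1 ≤ p)
    (hn : 10 ≤ Fintype.card ι) (hκ : (9:ℝ) / 10 * Fintype.card ι ≤ Fintype.card κ)
    (x0 : ι → ℝ) (hx0 : ∀ i, |x0 i| ≤ 1) (δ : ℝ) (hδ : 0 < δ) :
    ∃ (β : ℝ) (z : κ → ℝ), (∀ i, |x0 i + Lh h z i| ≤ 1) ∧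
      Psi B (2 * p) β z ≤ Psi B (2 * p) 3 0 + 9 * δ ∧
      (Fintype.card ι : ℝ) / 10 ≤ ((Finset.univ.filter fun i => |x0 i + Lh h z i| = 1).card : ℝ) := by
  set n : ℝ := (Fintype.card ι : ℝ) with hndef
  have hn' : (10:ℝ) ≤ n := by rw [hndef]; exact_mod_cast hn
  set K : Set (ℝ × (κ → ℝ)) := {q | (0 ≤ q.1 ∧ q.1 ≤ 3) ∧ (∀ i, |x0 i + Lh h q.2 i| ≤ 1) ∧
    n / 2 * (9 - q.1 ^ 2) ≤ ∑ j, q.2 j ^ 2 ∧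
    Psi B (2 * p) q.1 q.2 ≤ Psi B (2 * p) 3 0 + δ * (9 - q.1 ^ 2)} with hK
  have hbd : ∀ z : κ → ℝ, (∀ i, |x0 i + Lh h z i| ≤ 1) → ∑ j, z j ^ 2 ≤ 4 * n := by
    intro z hz
    rw [← hiso]
    calc ∑ i, Lh h z i ^ 2 ≤ ∑ i : ι, (4:ℝ) := by
          refine Finset.sum_le_sum fun i _ => ?_
          have a1 := abs_le.1 (hz i)
          have a2 := abs_le.1 (hx0 i)
          nlinarith
      _ = 4 * n := by simp [hndef, mul_comm]
  have hclosed : IsClosed K := by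
    have c1 : Continuous fun q : ℝ × (κ → ℝ) => q.1 := continuous_fst
    have cj : ∀ j, Continuous fun q : ℝ × (κ → ℝ) => q.2 j := fun j =>
      (continuous_apply j).comp continuous_snd
    have c2 : Continuous fun q : ℝ × (κ → ℝ) => ∑ j, q.2 j ^ 2 :=
      continuous_finsetSum _ fun j _ => (cj j).pow 2
    have c3 : ∀ i, Continuous fun q : ℝ × (κ → ℝ) => |x0 i + Lh h q.2 i| := fun i =>
      (continuous_const.add ((Lh_cont h i).comp continuous_snd)).abs
    have c4 := Psi_cont B (2 * p)
    have c5 : Continuous fun q : ℝ × (κ → ℝ) => 9 - q.1 ^ 2 := continuous_const.sub (c1.pow 2)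
    refine IsClosed.inter ?_ (IsClosed.inter ?_ (IsClosed.inter ?_ ?_))
    · exact (isClosed_le continuous_const c1).inter (isClosed_le c1 continuous_const)
    · have : {q : ℝ × (κ → ℝ) | ∀ i, |x0 i + Lh h q.2 i| ≤ 1} =
          ⋂ i, {q : ℝ × (κ → ℝ) | |x0 i + Lh h q.2 i| ≤ 1} := by ext q; simp
      show IsClosed {q : ℝ × (κ → ℝ) | ∀ i, |x0 i + Lh h q.2 i| ≤ 1}
      rw [this]
      exact isClosed_iInter fun i => isClosed_le (c3 i) continuous_const
    · exact isClosed_le (continuous_const.mul c5) c2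
    · exact isClosed_le c4 (continuous_const.add (continuous_const.mul c5))
  have hcomp : IsCompact K := by
    have hc : IsCompact ((Set.Icc (0:ℝ) 3) ×ˢ (Set.Icc (fun _ : κ => -(4 * n)) (fun _ => 4 * n))) :=
      isCompact_Icc.prod isCompact_Icc
    refine hc.of_isClosed_subset hclosed ?_
    rintro ⟨β, z⟩ ⟨⟨h1, h2⟩, h3, -, -⟩
    have h4 := hbd z h3
    have h5 : ∀ j, |z j| ≤ 4 * n := by
      intro j
      have : z j ^ 2 ≤ ∑ j, z j ^ 2 :=
        Finset.single_le_sum (f := fun j => z j ^ 2) (fun _ _ => sq_nonneg _) (Finset.mem_univ j)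
      refine abs_le_of_sq_le_sq ?_ (by linarith)
      nlinarith
    exact ⟨⟨h1, h2⟩, fun j => (abs_le.1 (h5 j)).1, fun j => (abs_le.1 (h5 j)).2⟩
  have hne : K.Nonempty := by
    refine ⟨(3, 0), ⟨by norm_num, by norm_num⟩, fun i => ?_, ?_, ?_⟩
    · simpa [Lh] using hx0 i
    · norm_num
    · norm_num
  obtain ⟨⟨β, z⟩, ⟨⟨hb0, hb3⟩, hcube, hz, hPsi⟩, hmin⟩ :=
    hcomp.exists_isMinOn hne continuous_fst.continuousOn
  simp only at hb0 hb3 hcube hz hPsi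
  have hmin' : ∀ q ∈ K, β ≤ q.1 := fun q hq => hmin hq
  have hβ : 0 < β := by
    rcases hb0.eq_or_lt with h0 | h0
    · exfalso
      have := hbd z hcube
      rw [← h0] at hz
      nlinarith
    · exact h0
  refine ⟨β, z, hcube, ?_, ?_⟩
  · nlinarith [mul_nonneg hδ.le (sq_nonneg β)]
  by_contra hcon
  push Not at hcon
  set T := Finset.univ.filter fun i => |x0 i + Lh h z i| = 1 with hTdef
  have hTc : (T.card : ℝ) + 2 < Fintype.card κ := by linarith
  obtain ⟨u, u1, u2, u3, u4, u5⟩ := exists_dir h T z hB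
    (mE (fun x => (G B z + β • G B x) ^ (2 * p - 1))) (G B z) (G_symm hB z) β p hp
    (by exact_mod_cast hTc)
  set α := √(n / 2) * β with hα
  have hα2 : α ^ 2 = n / 2 * β ^ 2 := by
    rw [hα, mul_pow, Real.sq_sqrt (by linarith)]
  have hQ0 : 0 ≤ ∫ x, D2 (2 * p) (G B z + β • G B x) (G B u) ∂(gam κ) := by
    refine integral_nonneg fun x => ?_
    have hs : (G B z + β • G B x).IsSymm := by
      unfold Matrix.IsSymm
      rw [Matrix.transpose_add, Matrix.transpose_smul, (G_symm hB z).eq, (G_symm hB x).eq]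
    obtain ⟨V, lam, hV⟩ := exists_spec _ hs
    rw [D2_spec hV (G_symm hB _)]
    refine Finset.sum_nonneg fun a _ => Finset.sum_nonneg fun b _ => mul_nonneg ?_ (sq_nonneg _)
    obtain ⟨m, rfl⟩ : ∃ m, p = m + 1 := ⟨p - 1, by omega⟩
    exact geom_nonneg _ _ m
  have hloc := psi_local B (G B z) (G B u) α β δ (2 * p) u3 hδ hβ (by
    rw [hα2, mul_comm (n / 2), mul_assoc]
    refine mul_le_mul_of_nonneg_left (le_trans ?_ u5) (sq_nonneg β)
    refine mul_le_mul_of_nonneg_right ?_ hQ0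
    linarith)
  have hpsi : ∀ θ, psi B (G B z) (G B u) α β (2 * p) θ =
      Psi B (2 * p) (β * Real.cos θ) (z + (α * Real.sin θ) • u) := by
    intro θ
    unfold psi Psi
    simp only [ZZ_tr, G_add, G_smul']
  have hopen : ∀ᶠ θ in nhds (0:ℝ), ∀ i, |x0 i + Lh h (z + (α * Real.sin θ) • u) i| ≤ 1 := by
    rw [Filter.eventually_all]
    intro i
    by_cases hi : i ∈ T
    · refine Filter.Eventually.of_forall fun θ => ?_
      rw [Lh_add, Lh_smul, u1 i hi, mul_zero, add_zero]
      exact hcube i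
    · have hlt : |x0 i + Lh h z i| < 1 := by
        refine lt_of_le_of_ne (hcube i) fun hh => hi ?_
        rw [hTdef, Finset.mem_filter]
        exact ⟨Finset.mem_univ _, hh⟩
      have hcont : Continuous fun θ : ℝ => |x0 i + Lh h (z + (α * Real.sin θ) • u) i| := by
        simp only [Lh_add, Lh_smul]
        fun_prop
      have h0 : |x0 i + Lh h (z + (α * Real.sin 0) • u) i| < 1 := by
        simpa using hlt
      exact (hcont.continuousAt.eventually_lt continuousAt_const h0).mono fun θ hθ => le_of_lt hθ
  have hev := (hloc.and hopen).and (Ioo_mem_nhds (show (-1:ℝ) < 0 by norm_num) (show (0:ℝ) < 1 by norm_num))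
  obtain ⟨ε, hε, hball⟩ := Metric.eventually_nhds_iff.1 hev
  set θ := min (ε / 2) (1 / 2) with hθ
  have hθ0 : 0 < θ := by rw [hθ]; positivity
  have hθ1 : θ ≤ 1 / 2 := min_le_right _ _
  have hθε : θ < ε := lt_of_le_of_lt (min_le_left _ _) (by linarith)
  obtain ⟨⟨k1, k2⟩, -⟩ := hball (y := θ) (by rw [Real.dist_eq, sub_zero, abs_of_pos hθ0]; exact hθε)
  have hcos1 : Real.cos θ < 1 := by
    have hs := Real.sin_pos_of_pos_of_lt_pi hθ0 (by linarith [Real.pi_gt_three])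
    nlinarith [Real.sin_sq_add_cos_sq θ, Real.cos_le_one θ]
  have hcos0 : 0 ≤ Real.cos θ := Real.cos_nonneg_of_neg_pi_div_two_le_of_le
    (by linarith [Real.pi_gt_three]) (by linarith [Real.pi_gt_three])
  have hsc := Real.sin_sq_add_cos_sq θ
  have hmemK : ((β * Real.cos θ, z + (α * Real.sin θ) • u) : ℝ × (κ → ℝ)) ∈ K := by
    refine ⟨⟨mul_nonneg hβ.le hcos0, ?_⟩, k2, ?_, ?_⟩
    · simp only; nlinarith
    · simp only
      have e : ∑ j, (z + (α * Real.sin θ) • u) j ^ 2 =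
          ∑ j, z j ^ 2 + α ^ 2 * Real.sin θ ^ 2 := by
        have e1 : ∀ j, (z + (α * Real.sin θ) • u) j ^ 2 = z j ^ 2 +
            (2 * (α * Real.sin θ)) * (u j * z j) + (α ^ 2 * Real.sin θ ^ 2) * u j ^ 2 := by
          intro j
          simp only [Pi.add_apply, Pi.smul_apply, smul_eq_mul]
          ring
        simp only [e1, Finset.sum_add_distrib, ← Finset.mul_sum, u2, u4]
        ring
      rw [e, hα2]
      have e2 : Real.sin θ ^ 2 = 1 - Real.cos θ ^ 2 := by linarith
      rw [e2]
      calc _ = n / 2 * (9 - β ^ 2) + n / 2 * β ^ 2 * (1 - Real.cos θ ^ 2) := by ring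
        _ ≤ _ := by linarith
    · simp only
      rw [hpsi, hpsi] at k1
      simp only [Real.sin_zero, Real.cos_zero, mul_zero, zero_smul, add_zero, mul_one] at k1
      have e2 : Real.sin θ ^ 2 = 1 - Real.cos θ ^ 2 := by linarith
      rw [e2] at k1
      calc _ ≤ _ := k1
        _ ≤ _ := add_le_add_left hPsi _
        _ = _ := by ring
  have := hmin' _ hmemK
  simp only at this
  nlinarith
end PC

namespace PC
set_option linter.unusedSectionVars false
variable {ι κ D : Type} [Fintype ι] [Fintype κ] [Fintype D] [DecidableEq D]

lemma norm_toLp (y : D → ℝ) : ‖(WithLp.toLp 2 y : EuclideanSpace ℝ D)‖ = nrm y := by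
  rw [EuclideanSpace.norm_eq, nrm]
  simp [dotProduct, sq]

open Matrix in
lemma opNorm_le {M : Matrix D D ℝ} {t : ℝ} (ht : 0 ≤ t) (h : ∀ y, nrm (M *ᵥ y) ≤ t * nrm y) :
    opNorm M ≤ t := by
  refine ContinuousLinearMap.opNorm_le_bound _ ht fun y => ?_
  have := h (WithLp.ofLp y)
  rw [← norm_toLp, ← norm_toLp] at this
  exact this

open Matrix in
lemma nrm_le_opNorm (M : Matrix D D ℝ) (y : D → ℝ) : nrm (M *ᵥ y) ≤ opNorm M * nrm y := by
  have := (LinearMap.toContinuousLinearMap (Matrix.toEuclideanLin M)).le_opNorm (WithLp.toLp 2 y)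
  rw [← norm_toLp, ← norm_toLp]
  exact this

open Matrix in
lemma sum_sq_le {A : ι → Matrix D D ℝ} (hA : ∀ i, (A i).IsSymm) {σ : ℝ}
    (h : opNorm (∑ i, A i * A i) ≤ σ ^ 2) (y : D → ℝ) :
    ∑ i, (A i *ᵥ y) ⬝ᵥ (A i *ᵥ y) ≤ σ ^ 2 * (y ⬝ᵥ y) := by
  have e : ∑ i, (A i *ᵥ y) ⬝ᵥ (A i *ᵥ y) = y ⬝ᵥ ((∑ i, A i * A i) *ᵥ y) := by
    rw [sum_mulVec, dotProduct_sum]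
    refine Finset.sum_congr rfl fun i _ => ?_
    rw [← mulVec_mulVec, dotProduct_mulVec y, ← mulVec_transpose, (hA i).eq]
  rw [e]
  have h1 := dot_le_nrm y ((∑ i, A i * A i) *ᵥ y)
  have h2 := nrm_le_opNorm (∑ i, A i * A i) y
  have h3 := nrm_nonneg y
  calc _ ≤ nrm y * nrm ((∑ i, A i * A i) *ᵥ y) := (le_abs_self _).trans h1
    _ ≤ nrm y * (σ ^ 2 * nrm y) := by
        refine mul_le_mul_of_nonneg_left (h2.trans ?_) h3
        exact mul_le_mul_of_nonneg_right h h3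
    _ = σ ^ 2 * (y ⬝ᵥ y) := by rw [← nrm_sq]; ring

/-- Gram matrix -/
noncomputable def gram (A : ι → Matrix D D ℝ) : Matrix ι ι ℝ :=
  fun i j => ∑ a, ∑ b, A i a b * A j a b

lemma gram_symm (A : ι → Matrix D D ℝ) : (gram A).IsSymm := by
  ext i j
  show gram A j i = gram A i j
  unfold gram
  refine Finset.sum_congr rfl fun a _ => Finset.sum_congr rfl fun b _ => mul_comm _ _

lemma gram_bf (A : ι → Matrix D D ℝ) (w : ι → ℝ) :
    ∑ a, ∑ b, (G A w a b) ^ 2 = bf w (gram A) w := by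
  have e : ∀ a b, G A w a b = ∑ i, w i * A i a b := fun a b => by
    simp [G, Matrix.sum_apply]
  have e3 : bf w (gram A) w = ∑ i, ∑ j, ∑ a, ∑ b, w i * A i a b * (w j * A j a b) := by
    show ∑ i, w i * ∑ j, (∑ a, ∑ b, A i a b * A j a b) * w j = _
    refine Finset.sum_congr rfl fun i _ => ?_
    rw [Finset.mul_sum]
    refine Finset.sum_congr rfl fun j _ => ?_
    rw [Finset.sum_mul, Finset.mul_sum]
    refine Finset.sum_congr rfl fun a _ => ?_
    rw [Finset.sum_mul, Finset.mul_sum]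
    refine Finset.sum_congr rfl fun b _ => ?_
    ring
  have e4 : ∀ a b, (G A w a b) ^ 2 = ∑ i, ∑ j, w i * A i a b * (w j * A j a b) := fun a b => by
    rw [e, sq, Finset.sum_mul_sum]
  have e2 : ∀ a : D, ∑ b, (G A w a b) ^ 2 =
      ∑ i, ∑ j, ∑ b, w i * A i a b * (w j * A j a b) := fun a => by
    rw [Finset.sum_congr rfl fun b _ => e4 a b, Finset.sum_comm]
    exact Finset.sum_congr rfl fun i _ => Finset.sum_comm
  rw [Finset.sum_congr rfl fun a _ => e2 a, e3, Finset.sum_comm]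
  exact Finset.sum_congr rfl fun i _ => Finset.sum_comm

lemma G_Lh (A : ι → Matrix D D ℝ) (h : κ → ι → ℝ) (z : κ → ℝ) :
    G (fun j => G A (h j)) z = G A (Lh h z) := by
  unfold G Lh
  simp only [Finset.smul_sum, Finset.sum_smul, smul_smul]
  exact Finset.sum_comm

section
variable [DecidableEq ι]

open Matrix in
lemma select {A : ι → Matrix D D ℝ} (hA : ∀ i, (A i).IsSymm) {σ f : ℝ} (hf : 0 < f)
    (hσ : ∀ y : D → ℝ, ∑ i, (A i *ᵥ y) ⬝ᵥ (A i *ᵥ y) ≤ σ ^ 2 * (y ⬝ᵥ y))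
    (hF : ∑ i, ∑ a, ∑ b, (A i a b) ^ 2 ≤ (Fintype.card ι : ℝ) * f ^ 2) :
    ∃ (κ : Type) (_ : Fintype κ) (h : κ → ι → ℝ),
      (∀ z : κ → ℝ, ∑ i, Lh h z i ^ 2 = ∑ j, z j ^ 2) ∧
      (9:ℝ) / 10 * Fintype.card ι ≤ Fintype.card κ ∧
      Hyp (fun j => G A (h j)) (σ ^ 2) (10 * f ^ 2) := by
  classical
  obtain ⟨V, lam, hV⟩ := exists_spec (gram A) (gram_symm A)
  set κ := {k : ι // lam k ≤ 10 * f ^ 2} with hκ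
  set h : κ → ι → ℝ := fun k => V k with hh
  have hdot : ∀ j k : κ, V j ⬝ᵥ V k = if j = k then 1 else 0 := fun j k => by
    rw [hV.on]
    by_cases hjk : j = k
    · rw [if_pos hjk, if_pos (congrArg Subtype.val hjk)]
    · rw [if_neg hjk, if_neg fun h' => hjk (Subtype.ext h')]
  have hL : ∀ z : κ → ℝ, Lh h z = ∑ j, z j • V j := fun z => by
    funext i; rw [Finset.sum_apply]; rfl
  have hLdot : ∀ (z w : κ → ℝ), Lh h z ⬝ᵥ Lh h w = ∑ j, z j * w j := by
    intro z w
    rw [hL, hL, sum_dotProduct]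
    refine Finset.sum_congr rfl fun j _ => ?_
    rw [smul_dotProduct, dotProduct_sum, smul_eq_mul]
    congr 1
    rw [Finset.sum_eq_single j]
    · rw [dotProduct_smul, hdot, if_pos rfl, smul_eq_mul, mul_one]
    · intro k _ hk
      rw [dotProduct_smul, hdot, if_neg (Ne.symm hk), smul_zero]
    · intro hk
      exact absurd (Finset.mem_univ j) hk
  refine ⟨κ, inferInstance, h, fun z => ?_, ?_, ?_⟩
  · have := hLdot z z
    simp only [dotProduct] at this
    simpa [sq] using this
  · have hl0 : ∀ k, 0 ≤ lam k := by
      intro k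
      have h1 := gram_bf A (V k)
      rw [bf, hV.eig, dotProduct_smul, hV.on] at h1
      simp only [if_true, smul_eq_mul, mul_one] at h1
      rw [← h1]
      positivity
    have htr : ∑ k, lam k ≤ (Fintype.card ι : ℝ) * f ^ 2 := by
      have h1 := hV.trace_pow 1
      simp only [pow_one] at h1
      rw [← h1]
      refine le_trans (le_of_eq ?_) hF
      simp [Matrix.trace, gram, sq]
    have hc : Fintype.card κ + (Finset.univ.filter fun k => ¬ lam k ≤ 10 * f ^ 2).card =
        Fintype.card ι := by
      have h0 : Fintype.card κ = (Finset.univ.filter fun k => lam k ≤ 10 * f ^ 2).card :=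
        Fintype.card_subtype _
      rw [h0]
      exact Finset.card_filter_add_card_filter_not _
    have h2 : ((Finset.univ.filter fun k => ¬ lam k ≤ 10 * f ^ 2).card : ℝ) * (10 * f ^ 2) ≤
        ∑ k, lam k := by
      calc _ = ∑ k ∈ Finset.univ.filter fun k => ¬ lam k ≤ 10 * f ^ 2, (10 * f ^ 2) := by simp
        _ ≤ ∑ k ∈ Finset.univ.filter fun k => ¬ lam k ≤ 10 * f ^ 2, lam k :=
            Finset.sum_le_sum fun k hk => (not_le.1 (Finset.mem_filter.1 hk).2).le
        _ ≤ _ := Finset.sum_le_sum_of_subset_of_nonneg (Finset.filter_subset _ _)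
            fun k _ _ => hl0 k
    have hc' : (Fintype.card κ : ℝ) + ((Finset.univ.filter fun k => ¬ lam k ≤ 10 * f ^ 2).card : ℝ) =
        Fintype.card ι := by exact_mod_cast hc
    set N := ((Finset.univ.filter fun k => ¬ lam k ≤ 10 * f ^ 2).card : ℝ)
    have hf2 : 0 < f ^ 2 := by positivity
    have h3 : (N * 10) * f ^ 2 ≤ (Fintype.card ι : ℝ) * f ^ 2 := by linarith
    have h4 := le_of_mul_le_mul_right h3 hf2
    linarith
  · refine ⟨fun j => G_symm hA _, fun y => ?_, fun a => ?_, sq_nonneg _, by positivity⟩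
    · refine le_trans ?_ (hσ y)
      have e1 : ∀ j : κ, (G A (h j) *ᵥ y) ⬝ᵥ (G A (h j) *ᵥ y) =
          ∑ a, (V j ⬝ᵥ fun i => (A i *ᵥ y) a) ^ 2 := by
        intro j
        have e : ∀ a, (G A (h j) *ᵥ y) a = V j ⬝ᵥ fun i => (A i *ᵥ y) a := by
          intro a
          unfold G
          rw [sum_mulVec, Finset.sum_apply]
          refine Finset.sum_congr rfl fun i _ => ?_
          rw [smul_mulVec, Pi.smul_apply, smul_eq_mul]
        simp only [dotProduct] at e ⊢
        exact Finset.sum_congr rfl fun a _ => by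
          rw [e]; exact (pow_two _).symm
      have e2 : ∑ i, (A i *ᵥ y) ⬝ᵥ (A i *ᵥ y) =
          ∑ a, ((fun i => (A i *ᵥ y) a) ⬝ᵥ fun i => (A i *ᵥ y) a) := by
        simp only [dotProduct]
        exact Finset.sum_comm
      rw [e2]
      simp only [e1]
      rw [Finset.sum_comm]
      refine Finset.sum_le_sum fun a _ => ?_
      rw [← hV.sq]
      have := Finset.sum_subtype_eq_sum_filter (s := (Finset.univ : Finset ι))
        (p := fun k => lam k ≤ 10 * f ^ 2) (fun k => (V k ⬝ᵥ fun i => (A i *ᵥ y) a) ^ 2)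
      calc _ = ∑ k ∈ Finset.univ.filter (fun k => lam k ≤ 10 * f ^ 2),
            (V k ⬝ᵥ fun i => (A i *ᵥ y) a) ^ 2 := by
            rw [← this]
            simp [κ]
        _ ≤ _ := Finset.sum_le_sum_of_subset_of_nonneg (Finset.filter_subset _ _)
            fun k _ _ => sq_nonneg _
    · rw [G_Lh, gram_bf, bf]
      have e : gram A *ᵥ Lh h a = Lh h (fun j => lam j * a j) := by
        rw [hL, hL, mulVec_sum]
        refine Finset.sum_congr rfl fun j _ => ?_
        rw [mulVec_smul, hV.eig, smul_smul, mul_comm]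
      rw [e, hLdot, Finset.mul_sum]
      refine Finset.sum_le_sum fun j _ => ?_
      nlinarith [mul_le_mul_of_nonneg_right j.2 (sq_nonneg (a j))]
end

lemma bf_add (x y : D → ℝ) (M N : Matrix D D ℝ) : bf x (M + N) y = bf x M y + bf x N y := by
  unfold bf; rw [Matrix.add_mulVec, dotProduct_add]
lemma bf_smul (x y : D → ℝ) (c : ℝ) (N : Matrix D D ℝ) : bf x (c • N) y = c * bf x N y := by
  unfold bf; rw [Matrix.smul_mulVec, dotProduct_smul, smul_eq_mul]

lemma bf_pow_le {Z : Matrix D D ℝ} (hZ : Z.IsSymm) (y : D → ℝ) (hy : y ⬝ᵥ y = 1) (p : ℕ) :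
    bf y Z y ^ (2 * p) ≤ (Z ^ (2 * p)).trace := by
  obtain ⟨V, lam, h⟩ := exists_spec Z hZ
  have h1 : bf y Z y = ∑ k, (V k ⬝ᵥ y) ^ 2 * lam k := by
    have := h.word 1 1 1 y y
    simp only [pow_one, Matrix.one_mul, Matrix.mul_one] at this
    rw [this]
    refine Finset.sum_congr rfl fun k _ => ?_
    simp only [bf, Matrix.one_mulVec]
    rw [dotProduct_comm y]; ring
  have h2 : ∑ k, (V k ⬝ᵥ y) ^ 2 = 1 := by rw [h.sq, hy]
  rw [h1, h.trace_pow]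
  refine (Real.pow_arith_mean_le_arith_mean_pow_of_even _ _ _ (fun k _ => sq_nonneg _) h2
    (even_two_mul p)).trans ?_
  refine Finset.sum_le_sum fun k hk => ?_
  have h3 : (V k ⬝ᵥ y) ^ 2 ≤ 1 := by
    rw [← h2]
    exact Finset.single_le_sum (f := fun k => (V k ⬝ᵥ y) ^ 2) (fun _ _ => sq_nonneg _) hk
  have h4 : 0 ≤ lam k ^ (2 * p) := by rw [pow_mul]; positivity
  nlinarith

lemma eig_le_Psi {B : κ → Matrix D D ℝ} (hB : ∀ j, (B j).IsSymm) (p : ℕ) (β : ℝ) (z : κ → ℝ)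
    (y : D → ℝ) (hy : y ⬝ᵥ y = 1) : bf y (G B z) y ^ (2 * p) ≤ Psi B (2 * p) β z := by
  have hZ : MPoly (fun x : κ → ℝ => G B z + β • G B x) :=
    (MPoly.const _).add (MPoly.smul (IsPoly.const β) (G_poly B))
  have hZs : ∀ x : κ → ℝ, (G B z + β • G B x).IsSymm := fun x => by
    unfold Matrix.IsSymm
    rw [Matrix.transpose_add, Matrix.transpose_smul, (G_symm hB z).eq, (G_symm hB x).eq]
  have hG : IsPoly (fun x : κ → ℝ => bf y (G B x) y) := by
    have := (((MPoly.const (ι := κ) (Matrix.vecMulVec y y)).mul (G_poly B))).trace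
    simpa only [trace_vec] using this
  have hbp : IsPoly (fun x : κ → ℝ => bf y (G B z + β • G B x) y) := by
    simp only [bf_add, bf_smul]
    exact (IsPoly.const _).add ((IsPoly.const _).mul hG)
  have h0 : ∫ x, bf y (G B x) y ∂(gam κ) = 0 := by
    have h1 := mE_trace ((G_poly B).pow 1) (Matrix.vecMulVec y y)
    rw [mE_odd B 1 odd_one] at h1
    simpa only [pow_one, trace_vec, Matrix.mul_zero, Matrix.trace_zero] using h1
  have hI : ∫ x, bf y (G B z + β • G B x) y ∂(gam κ) = bf y (G B z) y := by
    simp only [bf_add, bf_smul]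
    rw [integral_add (IsPoly.const _).integrable ((IsPoly.const _).mul hG).integrable,
      integral_const_mul, h0]
    simp
  have hJ := ConvexOn.map_integral_le (μ := gam κ) (f := fun x => bf y (G B z + β • G B x) y)
    (Even.convexOn_pow (𝕜 := ℝ) (even_two_mul p)) (continuous_pow (2 * p)).continuousOn isClosed_univ
    (Filter.Eventually.of_forall fun x => Set.mem_univ _) hbp.integrable (hbp.pow (2 * p)).integrable
  rw [hI] at hJ
  exact hJ.trans (int_mono (hbp.pow _) (hZ.pow _).trace fun x => bf_pow_le (hZs x) y hy p)

lemma opNorm_of_Psi {B : κ → Matrix D D ℝ} (hB : ∀ j, (B j).IsSymm) (p : ℕ) (hp : 1 ≤ p) (β : ℝ)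
    (z : κ → ℝ) {t : ℝ} (ht : 0 ≤ t) (h : Psi B (2 * p) β z ≤ t ^ (2 * p)) :
    opNorm (G B z) ≤ t := by
  obtain ⟨V, lam, hV⟩ := exists_spec _ (G_symm hB z)
  have hl : ∀ k, |lam k| ≤ t := by
    intro k
    have h1 := eig_le_Psi hB p β z (V k) (by rw [hV.on]; simp)
    have h2 : bf (V k) (G B z) (V k) = lam k := by
      rw [bf, hV.eig, dotProduct_smul, hV.on]; simp
    rw [h2] at h1
    have h3 := h1.trans h
    rw [← Even.pow_abs (even_two_mul p)] at h3
    exact le_of_pow_le_pow_left₀ (by omega) ht h3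
  refine opNorm_le ht fun y => ?_
  simpa using hV.nrm_pow ht hl 1 y

lemma Psi_three (B : κ → Matrix D D ℝ) (n : ℕ) : Psi B n 3 0 = 3 ^ n * mom B n := by
  unfold Psi mom
  rw [← integral_const_mul]
  congr 1
  funext x
  have : G B 0 = 0 := by simp [G]
  rw [this, zero_add, smul_pow, Matrix.trace_smul, smul_eq_mul]

lemma clog_bound (d : ℕ) (hd : 2 ≤ d) : ((Nat.clog 2 d + 1 : ℕ) : ℝ) ≤ 5 * Real.log d := by
  have h1 := Nat.pow_pred_clog_lt_self (b := 2) (by norm_num) (x := d) (by omega)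
  have hc : 1 ≤ Nat.clog 2 d := Nat.clog_pos (by norm_num) hd
  obtain ⟨q, hq⟩ : ∃ q, Nat.clog 2 d = q + 1 := ⟨Nat.clog 2 d - 1, by omega⟩
  rw [hq] at h1 ⊢
  simp only [Nat.pred_eq_sub_one, Nat.add_sub_cancel] at h1
  have h2 : (2:ℝ) ^ q ≤ d := by exact_mod_cast h1.le
  have h3 : q * Real.log 2 ≤ Real.log d := by
    rw [← Real.log_pow]
    exact Real.log_le_log (by positivity) h2
  have h4 : Real.log 2 ≤ Real.log d := Real.log_le_log (by norm_num) (by exact_mod_cast hd)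
  have h5 := Real.log_two_gt_d9
  push_cast
  nlinarith

theorem main_aux {n d : ℕ} (hn : 10 ≤ n) (hd : 2 ≤ d) {σ f : ℝ} (hσ : 0 < σ) (hf : 0 < f)
    (A : Fin n → Matrix (Fin d) (Fin d) ℝ) (hA : ∀ i, (A i).IsSymm)
    (h1 : opNorm (∑ i, A i * A i) ≤ σ ^ 2) (h2 : ∑ i, frobNormSq (A i) ≤ (n:ℝ) * f ^ 2)
    (x0 : Fin n → ℝ) (hx0 : ∀ i, x0 i ∈ Set.Ioo (-1:ℝ) 1) :
    ∃ x : Fin n → ℝ, (∀ i, x i ∈ Set.Icc (-1:ℝ) 1) ∧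
      opNorm (∑ i, (x i - x0 i) • A i) ≤
        600 * (σ + (Real.log d) ^ ((3:ℝ) / 4) * Real.sqrt (σ * f)) ∧
      1 / 10 * (n:ℝ) ≤ ({i : Fin n | x i = 1 ∨ x i = -1}.ncard : ℝ) := by
  obtain ⟨κ, _, h, hiso, hκ, hH⟩ := select hA hf (sum_sq_le hA h1) (by
    rw [Fintype.card_fin]; exact h2)
  set B : κ → Matrix (Fin d) (Fin d) ℝ := fun j => G A (h j) with hB
  set p := Nat.clog 2 d + 1 with hp
  have hp2 : 2 ≤ p := by have := Nat.clog_pos (b := 2) (by norm_num) hd; omega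
  set E := σ + (Real.log d) ^ ((3:ℝ) / 4) * Real.sqrt (σ * f) with hE
  have hL0 : 0 < Real.log d := Real.log_pos (by exact_mod_cast hd)
  set w := (Real.log d) ^ ((3:ℝ) / 4) with hw
  have hw0 : 0 < w := Real.rpow_pos_of_pos hL0 _
  have hw4 : w ^ 4 = Real.log d ^ 3 := by
    rw [hw, ← Real.rpow_natCast, ← Real.rpow_mul hL0.le, ← Real.rpow_natCast]
    norm_num
  have hE0 : 0 < E := by positivity
  have hσE : σ ≤ E := by rw [hE]; have : 0 ≤ w * √(σ * f) := by positivity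
                         linarith
  have hwE : w * √(σ * f) ≤ E := by rw [hE]; linarith
  have hE4 : Real.log d ^ 3 * (σ ^ 2 * f ^ 2) ≤ E ^ 4 := by
    calc _ = (w * √(σ * f)) ^ 4 := by
          rw [mul_pow, hw4, show √(σ * f) ^ 4 = (√(σ * f) ^ 2) ^ 2 by ring,
            Real.sq_sqrt (by positivity), mul_pow]
      _ ≤ E ^ 4 := by gcongr
  have hmom : mom B (2 * p) ≤ (100 * E) ^ (2 * p) := by
    refine moment hH p hp2 ?_ (by positivity) ?_ ?_
    · rw [Fintype.card_fin]
      calc d ≤ 2 ^ Nat.clog 2 d := Nat.le_pow_clog (by norm_num) d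
        _ ≤ 2 ^ p := Nat.pow_le_pow_right (by norm_num) (by omega)
    · nlinarith
    · have hp5 := clog_bound d hd
      rw [← hp] at hp5
      have hp3 : (p:ℝ) ^ 3 ≤ 125 * Real.log d ^ 3 := by
        calc (p:ℝ) ^ 3 ≤ (5 * Real.log d) ^ 3 := by gcongr
          _ = _ := by ring
      have h5 : 0 ≤ σ ^ 2 * f ^ 2 := by positivity
      have h6 := mul_le_mul_of_nonneg_right hp3 h5
      have h7 : (100 * E) ^ 4 = 100000000 * E ^ 4 := by ring
      have h8 : 0 ≤ E ^ 4 := by positivity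
      rw [h7]
      calc _ = 200000 * ((p:ℝ) ^ 3 * (σ ^ 2 * f ^ 2)) := by ring
        _ ≤ _ := by nlinarith
  obtain ⟨β, z, z1, z2, z3⟩ := walk h hiso hH.sym p (by omega) (by rw [Fintype.card_fin]; exact hn)
    hκ x0 (fun i => abs_le.2 ⟨(hx0 i).1.le, (hx0 i).2.le⟩) ((300 * E) ^ (2 * p) / 9) (by positivity)
  refine ⟨fun i => x0 i + Lh h z i, fun i => abs_le.1 (z1 i), ?_, ?_⟩
  · have e : ∑ i, (x0 i + Lh h z i - x0 i) • A i = G B z := by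
      rw [hB, G_Lh, G]
      refine Finset.sum_congr rfl fun i _ => ?_
      rw [add_sub_cancel_left]
    rw [e]
    refine opNorm_of_Psi hH.sym p (by omega) β z (by positivity) (z2.trans ?_)
    rw [Psi_three]
    have a1 : (3:ℝ) ^ (2 * p) * mom B (2 * p) ≤ (300 * E) ^ (2 * p) := by
      calc _ ≤ (3:ℝ) ^ (2 * p) * (100 * E) ^ (2 * p) := by gcongr
        _ = _ := by rw [← mul_pow]; congr 1; ring
    have a2 : (600 * E) ^ (2 * p) = 2 ^ (2 * p) * (300 * E) ^ (2 * p) := by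
      rw [← mul_pow]; congr 1; ring
    have a3 : (2:ℝ) ≤ 2 ^ (2 * p) := by
      calc (2:ℝ) = 2 ^ 1 := by norm_num
        _ ≤ 2 ^ (2 * p) := pow_le_pow_right₀ (by norm_num) (by omega)
    have a4 : 0 ≤ (300 * E) ^ (2 * p) := by positivity
    rw [a2]
    nlinarith
  · rw [Fintype.card_fin] at z3
    have e : {i : Fin n | x0 i + Lh h z i = 1 ∨ x0 i + Lh h z i = -1} =
        ((Finset.univ.filter fun i => |x0 i + Lh h z i| = 1 : Finset (Fin n)) : Set (Fin n)) := by
      ext i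
      simp [abs_eq]
    rw [e, Set.ncard_coe_finset]
    linarith

open Matrix in
theorem main_small {n d : ℕ} (hn0 : 0 < n) (hn : n < 10) {σ : ℝ} (hσ : 0 < σ)
    (A : Fin n → Matrix (Fin d) (Fin d) ℝ) (hA : ∀ i, (A i).IsSymm)
    (h1 : opNorm (∑ i, A i * A i) ≤ σ ^ 2)
    (x0 : Fin n → ℝ) (hx0 : ∀ i, x0 i ∈ Set.Ioo (-1:ℝ) 1) :
    ∃ x : Fin n → ℝ, (∀ i, x i ∈ Set.Icc (-1:ℝ) 1) ∧
      opNorm (∑ i, (x i - x0 i) • A i) ≤ 2 * σ ∧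
      1 / 10 * (n:ℝ) ≤ ({i : Fin n | x i = 1 ∨ x i = -1}.ncard : ℝ) := by
  set k : Fin n := ⟨0, hn0⟩
  refine ⟨Function.update x0 k 1, fun i => ?_, ?_, ?_⟩
  · by_cases hi : i = k
    · subst hi; simp
    · rw [Function.update_of_ne hi]; exact ⟨(hx0 i).1.le, (hx0 i).2.le⟩
  · have e : ∑ i, (Function.update x0 k 1 i - x0 i) • A i = (1 - x0 k) • A k := by
      rw [Finset.sum_eq_single k]
      · simp
      · intro i _ hi
        rw [Function.update_of_ne hi]; simp
      · simp
    rw [e]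
    refine opNorm_le (by positivity) fun y => ?_
    have h2 := sum_sq_le hA h1 y
    have h3 : (A k *ᵥ y) ⬝ᵥ (A k *ᵥ y) ≤ ∑ i, (A i *ᵥ y) ⬝ᵥ (A i *ᵥ y) :=
      Finset.single_le_sum (f := fun i => (A i *ᵥ y) ⬝ᵥ (A i *ᵥ y))
        (fun i _ => dot_self_nonneg _) (Finset.mem_univ k)
    have h4 : nrm (A k *ᵥ y) ≤ σ * nrm y := by
      refine abs_le_of_sq_le_sq' ?_ (mul_nonneg hσ.le (nrm_nonneg y)) |>.2
      rw [mul_pow, nrm_sq, nrm_sq]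
      exact h3.trans h2
    have h5 : nrm (((1 - x0 k) • A k) *ᵥ y) = (1 - x0 k) * nrm (A k *ᵥ y) := by
      have : 0 ≤ 1 - x0 k := by linarith [(hx0 k).2]
      rw [smul_mulVec, nrm, nrm, smul_dotProduct, dotProduct_smul, smul_eq_mul, smul_eq_mul,
        ← mul_assoc, Real.sqrt_mul (by positivity), Real.sqrt_mul_self this]
    rw [h5]
    have h6 : 1 - x0 k ≤ 2 := by linarith [(hx0 k).1]
    have h7 := nrm_nonneg (A k *ᵥ y)
    nlinarith
  · have : 1 ≤ {i : Fin n | Function.update x0 k 1 i = 1 ∨ Function.update x0 k 1 i = -1}.ncard := by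
      exact (Set.ncard_pos (Set.toFinite _)).2 ⟨k, by simp⟩
    have h2 : (1:ℝ) ≤ ({i : Fin n | Function.update x0 k 1 i = 1 ∨
      Function.update x0 k 1 i = -1}.ncard : ℝ) := by exact_mod_cast this
    have h3 : (n:ℝ) < 10 := by exact_mod_cast hn
    linarith
end PC

/-- **Main Partial Coloring Lemma (Lemma 3.1), existential form.** There are universal
constants `c, c' > 0` such that for all positive integers `n`, `d ≥ 2`, reals `σ, f > 0`,
symmetric matrices `A 1, …, A n ∈ ℝ^{d×d}` with `‖∑ A i ²‖_op ≤ σ²` and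
`∑ ‖A i‖_F² ≤ n f²`, and any `x₀ ∈ (-1,1)ⁿ`, there is `x ∈ [-1,1]ⁿ` with
`‖∑ (x i - x₀ i) • A i‖_op ≤ c (σ + (log d)^{3/4} √(σ f))` and at least `c' n`
coordinates of `x` in `{±1}`. -/
theorem main_partial_coloring :
    ∃ c c' : ℝ, 0 < c ∧ 0 < c' ∧ ∀ (n d : ℕ), 0 < n → 2 ≤ d →
      ∀ (σ f : ℝ), 0 < σ → 0 < f →
      ∀ A : Fin n → Matrix (Fin d) (Fin d) ℝ,
        (∀ i, (A i).IsSymm) →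
        opNorm (∑ i, A i * A i) ≤ σ ^ 2 →
        (∑ i, frobNormSq (A i)) ≤ (n : ℝ) * f ^ 2 →
        ∀ x₀ : Fin n → ℝ, (∀ i, x₀ i ∈ Set.Ioo (-1 : ℝ) 1) →
          ∃ x : Fin n → ℝ, (∀ i, x i ∈ Set.Icc (-1 : ℝ) 1) ∧
            opNorm (∑ i, (x i - x₀ i) • A i) ≤
              c * (σ + (Real.log d) ^ ((3 : ℝ) / 4) * Real.sqrt (σ * f)) ∧
            c' * n ≤ ({i : Fin n | x i = 1 ∨ x i = -1}.ncard : ℝ) := by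
  refine ⟨600, 1 / 10, by norm_num, by norm_num, ?_⟩
  intro n d hn hd σ f hσ hf A hA h1 h2 x₀ hx₀
  rcases lt_or_ge n 10 with h | h
  · obtain ⟨x, hx, hb, hc⟩ := PC.main_small hn h hσ A hA h1 x₀ hx₀
    refine ⟨x, hx, hb.trans ?_, hc⟩
    have h3 : 0 ≤ (Real.log d) ^ ((3 : ℝ) / 4) * Real.sqrt (σ * f) :=
      mul_nonneg (Real.rpow_nonneg (Real.log_natCast_nonneg d) _) (Real.sqrt_nonneg _)
    linarith
  · exact PC.main_aux h hd hσ hf A hA h1 h2 x₀ hx₀
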